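/- arXiv:1807.06345 — 11 statements merged into one kernel-verified Lean document; each statement's English description precedes it below -/
import Mathlib

section
/- For any four jointly distributed finite random variables X1, X2, X3, X4, the Zhang–Yeung non-Shannon inequality holds: -H(X1) - H(X2) - (1/2)H(X3) + (3/2)H(X1X2) + (3/2)H(X1X3) + (1/2)H(X1X4) + (3/2)H(X2X3) + (1/2)H(X2X4) - (1/2)H(X3X4) - 2H(X1X2X3) - (1/2)H(X1X2X4) ≥ 0, where H denotes the Shannon entropy and juxtaposition denotes the entropy of the joint random variable. -/
open MeasureTheory ProbabilityTheory

/-- Shannon entropy of a finite-valued random variable `X` under the measure `μ`. -/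
noncomputable def entH {Ω E : Type*} [MeasurableSpace Ω] [Fintype E]
    (μ : Measure Ω) (X : Ω → E) : ℝ :=
  ∑ e : E, Real.negMulLog (μ (X ⁻¹' {e})).toReal

/-- Mutual information `I(X : Y)`. -/
noncomputable def mutInf {Ω E F : Type*} [MeasurableSpace Ω] [Fintype E] [Fintype F]
    (μ : Measure Ω) (X : Ω → E) (Y : Ω → F) : ℝ :=
  entH μ X + entH μ Y - entH μ (fun ω => (X ω, Y ω))

/-- Conditional Shannon entropy `H(X | Y)`. -/
noncomputable def condEnt {Ω E F : Type*} [MeasurableSpace Ω] [Fintype E] [Fintype F]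
    (μ : Measure Ω) (X : Ω → E) (Y : Ω → F) : ℝ :=
  entH μ (fun ω => (X ω, Y ω)) - entH μ Y

/-- Conditional mutual information `I(X : Y | Z)`. -/
noncomputable def condMutInf {Ω E F G : Type*} [MeasurableSpace Ω]
    [Fintype E] [Fintype F] [Fintype G]
    (μ : Measure Ω) (X : Ω → E) (Y : Ω → F) (Z : Ω → G) : ℝ :=
  entH μ (fun ω => (X ω, Z ω)) + entH μ (fun ω => (Y ω, Z ω))
    - entH μ (fun ω => (X ω, Y ω, Z ω)) - entH μ Z

namespace ZY

open Classical in
/-- mass of the fibre of `f` through `t` -/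
noncomputable def w {T S : Type*} [Fintype T] (q : T → ℝ) (f : T → S) (t : T) : ℝ :=
  ∑ t', if f t' = f t then q t' else 0

/-- entropy of the function `f` under the weights `q` -/
noncomputable def hq {T S : Type*} [Fintype T] (q : T → ℝ) (f : T → S) : ℝ :=
  -∑ t, q t * Real.log (w q f t)

section
variable {T : Type*} [Fintype T] {q : T → ℝ}

lemma w_ge {S : Type*} (hq0 : ∀ t, 0 ≤ q t) (f : T → S) (t : T) : q t ≤ w q f t := by
  classical
  unfold w
  have := Finset.single_le_sum (f := fun t' => if f t' = f t then q t' else 0)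
    (fun i _ => by split_ifs <;> simp [hq0]) (Finset.mem_univ t)
  simpa using this

lemma w_nonneg {S : Type*} (hq0 : ∀ t, 0 ≤ q t) (f : T → S) (t : T) : 0 ≤ w q f t :=
  (hq0 t).trans (w_ge hq0 f t)

lemma w_congr_pt {S : Type*} (f : T → S) {t t' : T} (h : f t = f t') : w q f t = w q f t' := by
  classical
  unfold w
  refine Finset.sum_congr rfl fun x _ => ?_
  rw [h]

lemma hq_congr {S S' : Type*} (f : T → S) (g : T → S')
    (h : ∀ t t', q t ≠ 0 → q t' ≠ 0 → (f t = f t' ↔ g t = g t')) : hq q f = hq q g := by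
  classical
  unfold hq
  congr 1
  refine Finset.sum_congr rfl fun t _ => ?_
  by_cases ht : q t = 0
  · simp [ht]
  · congr 2
    unfold w
    refine Finset.sum_congr rfl fun t' _ => ?_
    by_cases ht' : q t' = 0
    · simp [ht']
    · simp only [h t' t ht' ht]

/-- normalised fibre weights sum to at most one -/
lemma inner_le {S : Type*} (hq0 : ∀ t, 0 ≤ q t) (k : T → S) (s : S) (P : T → Prop)
    [DecidablePred P] (hP : ∀ t, P t → k t = s) :
    ∑ t, (if P t then q t / w q k t else 0) ≤ 1 := by
  classical
  by_cases hex : ∃ t, k t = s ∧ w q k t ≠ 0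
  · obtain ⟨t0, h0, hw⟩ := hex
    calc ∑ t, (if P t then q t / w q k t else 0)
        ≤ ∑ t, (if k t = k t0 then q t else 0) / w q k t0 := by
          refine Finset.sum_le_sum fun t _ => ?_
          by_cases h : P t
          · have : k t = k t0 := (hP t h).trans h0.symm
            simp [h, this, w_congr_pt (q := q) k this]
          · simp only [h, if_false]
            refine div_nonneg ?_ (w_nonneg hq0 _ _)
            split_ifs <;> simp [hq0]
      _ = 1 := by
          rw [← Finset.sum_div]
          exact div_self hw
  · push Not at hex
    refine (Finset.sum_nonpos fun t _ => ?_).trans zero_le_one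
    split_ifs with h
    · simp [hex t (hP t h)]
    · exact le_rfl

lemma sum_bound {α β γ : Type*} (hq0 : ∀ t, 0 ≤ q t) (f : T → α) (g : T → β) (h : T → γ) :
    ∑ t, q t * (w q (fun t => (f t, h t)) t * w q (fun t => (g t, h t)) t /
      (w q (fun t => (f t, g t, h t)) t * w q h t)) ≤ ∑ t, q t := by
  classical
  set k := fun t => (f t, g t, h t) with hk
  calc _ = ∑ t, ∑ t1, ∑ t2, (if f t1 = f t ∧ h t1 = h t then q t1 else 0) *
        (if g t2 = g t ∧ h t2 = h t then q t2 else 0) / w q h t * (q t / w q k t) := by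
        refine Finset.sum_congr rfl fun t _ => ?_
        simp only [← Finset.sum_mul, ← Finset.sum_div, ← Finset.mul_sum]
        simp only [w, Prod.mk.injEq]
        ring
    _ = ∑ t1, ∑ t2, (if h t2 = h t1 then q t1 * q t2 / w q h t1 else 0) *
          ∑ t, (if f t1 = f t ∧ g t2 = g t ∧ h t1 = h t then q t / w q k t else 0) := by
        rw [Finset.sum_comm]
        refine Finset.sum_congr rfl fun t1 _ => ?_
        rw [Finset.sum_comm]
        refine Finset.sum_congr rfl fun t2 _ => ?_
        rw [Finset.mul_sum]
        refine Finset.sum_congr rfl fun t _ => ?_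
        by_cases h1 : h t1 = h t
        · have := w_congr_pt (q := q) h h1
          by_cases h2 : h t2 = h t <;> by_cases h3 : f t1 = f t <;> by_cases h4 : g t2 = g t <;>
            simp [h1, h2, h3, h4, this]
        · simp [h1]
    _ ≤ ∑ t1, ∑ t2, (if h t2 = h t1 then q t1 * q t2 / w q h t1 else 0) := by
        refine Finset.sum_le_sum fun t1 _ => Finset.sum_le_sum fun t2 _ => ?_
        refine mul_le_of_le_one_right ?_ ?_
        · split_ifs
          · exact div_nonneg (mul_nonneg (hq0 _) (hq0 _)) (w_nonneg hq0 _ _)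
          · exact le_rfl
        · refine inner_le hq0 k (f t1, g t2, h t1) _ ?_
          rintro t ⟨h1, h2, h3⟩
          simp [hk, h1, h2, h3]
    _ ≤ ∑ t1, q t1 := by
        refine Finset.sum_le_sum fun t1 _ => ?_
        have : ∑ t2, (if h t2 = h t1 then q t1 * q t2 / w q h t1 else 0)
            = q t1 * (w q h t1 / w q h t1) := by
          conv_rhs => rw [w, Finset.sum_div, Finset.mul_sum]
          refine Finset.sum_congr rfl fun t2 _ => ?_
          split_ifs
          · simp only [w]; ring
          · simp
        rw [this]
        exact mul_le_of_le_one_right (hq0 _) (div_self_le_one _)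

lemma submod {α β γ : Type*} (hq0 : ∀ t, 0 ≤ q t) (f : T → α) (g : T → β) (h : T → γ) :
    hq q (fun t => (f t, g t, h t)) + hq q h ≤
      hq q (fun t => (f t, h t)) + hq q (fun t => (g t, h t)) := by
  have hb := sum_bound hq0 f g h
  have key : ∀ t, q t * Real.log (w q (fun t => (f t, h t)) t)
      + q t * Real.log (w q (fun t => (g t, h t)) t)
      - q t * Real.log (w q (fun t => (f t, g t, h t)) t) - q t * Real.log (w q h t)
      ≤ q t * (w q (fun t => (f t, h t)) t * w q (fun t => (g t, h t)) t /
      (w q (fun t => (f t, g t, h t)) t * w q h t)) - q t := by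
    intro t
    rcases (hq0 t).eq_or_lt with h0 | h0
    · simp [← h0]
    · have p1 := h0.trans_le (w_ge hq0 (fun t => (f t, h t)) t)
      have p2 := h0.trans_le (w_ge hq0 (fun t => (g t, h t)) t)
      have p3 := h0.trans_le (w_ge hq0 (fun t => (f t, g t, h t)) t)
      have p4 := h0.trans_le (w_ge hq0 h t)
      have := Real.log_le_sub_one_of_pos (div_pos (mul_pos p1 p2) (mul_pos p3 p4))
      rw [Real.log_div (mul_pos p1 p2).ne' (mul_pos p3 p4).ne', Real.log_mul p1.ne' p2.ne',
        Real.log_mul p3.ne' p4.ne'] at this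
      have := mul_le_mul_of_nonneg_left this h0.le
      linarith
  have hs := Finset.sum_le_sum fun t (_ : t ∈ Finset.univ) => key t
  simp only [Finset.sum_sub_distrib, Finset.sum_add_distrib] at hs
  unfold hq
  linarith

/-- submodularity with relabelled joint variables -/
lemma submod' {α β γ κ₁ κ₂ κ₃ κ₄ : Type*} (hq0 : ∀ t, 0 ≤ q t) (f : T → α) (g : T → β) (h : T → γ)
    (k₁ : T → κ₁) (k₂ : T → κ₂) (k₃ : T → κ₃) (k₄ : T → κ₄)
    (h₁ : ∀ t t', q t ≠ 0 → q t' ≠ 0 → ((f t = f t' ∧ h t = h t') ↔ k₁ t = k₁ t'))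
    (h₂ : ∀ t t', q t ≠ 0 → q t' ≠ 0 → ((g t = g t' ∧ h t = h t') ↔ k₂ t = k₂ t'))
    (h₃ : ∀ t t', q t ≠ 0 → q t' ≠ 0 → ((f t = f t' ∧ g t = g t' ∧ h t = h t') ↔ k₃ t = k₃ t'))
    (h₄ : ∀ t t', q t ≠ 0 → q t' ≠ 0 → (h t = h t' ↔ k₄ t = k₄ t')) :
    hq q k₃ + hq q k₄ ≤ hq q k₁ + hq q k₂ := by
  have := submod hq0 f g h
  rwa [hq_congr (fun t => (f t, h t)) k₁ (by simpa using h₁),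
    hq_congr (fun t => (g t, h t)) k₂ (by simpa using h₂),
    hq_congr (fun t => (f t, g t, h t)) k₃ (by simpa using h₃),
    hq_congr h k₄ h₄] at this

open Classical in
/-- two conditionally independent copies over `Z` -/
noncomputable def cp {ζ : Type*} (q : T → ℝ) (Z : T → ζ) (u : T × T) : ℝ :=
  if Z u.2 = Z u.1 then q u.1 * q u.2 / w q Z u.1 else 0

lemma cp_nonneg {ζ : Type*} (hq0 : ∀ t, 0 ≤ q t) (Z : T → ζ) (u : T × T) : 0 ≤ cp q Z u := by
  unfold cp
  split_ifs
  · exact div_nonneg (mul_nonneg (hq0 _) (hq0 _)) (w_nonneg hq0 _ _)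
  · exact le_rfl

lemma cp_supp {ζ : Type*} {Z : T → ζ} {u : T × T} (h : cp q Z u ≠ 0) : Z u.2 = Z u.1 := by
  by_contra h'
  simp [cp, h'] at h

lemma cp_swap {ζ : Type*} (Z : T → ζ) (u : T × T) : cp q Z u.swap = cp q Z u := by
  unfold cp
  by_cases h : Z u.2 = Z u.1
  · simp [h, w_congr_pt (q := q) Z h, mul_comm]
  · have : ¬ Z u.1 = Z u.2 := fun h' => h h'.symm
    simp [h, this]

lemma cp_marg {ζ : Type*} (hq0 : ∀ t, 0 ≤ q t) (Z : T → ζ) (t : T) :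
    ∑ t', cp q Z (t, t') = q t := by
  classical
  have : ∑ t', cp q Z (t, t') = q t * (w q Z t / w q Z t) := by
    conv_rhs => rw [w, Finset.sum_div, Finset.mul_sum]
    refine Finset.sum_congr rfl fun t2 _ => ?_
    simp only [cp]
    split_ifs
    · simp only [w]; ring
    · simp
  rw [this]
  rcases (hq0 t).eq_or_lt with h0 | h0
  · simp [← h0]
  · rw [div_self (h0.trans_le (w_ge hq0 Z t)).ne', mul_one]

lemma w_fst {ζ S : Type*} (hq0 : ∀ t, 0 ≤ q t) (Z : T → ζ) (f : T → S) (u : T × T) :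
    w (cp q Z) (fun u => f u.1) u = w q f u.1 := by
  classical
  unfold w
  rw [Fintype.sum_prod_type]
  refine Finset.sum_congr rfl fun t _ => ?_
  split_ifs
  · exact cp_marg hq0 Z t
  · simp

lemma w_snd {ζ S : Type*} (hq0 : ∀ t, 0 ≤ q t) (Z : T → ζ) (f : T → S) (u : T × T) :
    w (cp q Z) (fun u => f u.2) u = w q f u.2 := by
  classical
  rw [← Prod.fst_swap, ← w_fst hq0 Z f u.swap]
  unfold w
  refine Fintype.sum_equiv (Equiv.prodComm T T) _ _ fun v => ?_
  have := cp_swap (q := q) Z v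
  simp [this]

lemma hq_fst {ζ S : Type*} (hq0 : ∀ t, 0 ≤ q t) (Z : T → ζ) (f : T → S) :
    hq (cp q Z) (fun u => f u.1) = hq q f := by
  unfold hq
  simp only [w_fst hq0, Fintype.sum_prod_type, ← Finset.sum_mul, cp_marg hq0]

lemma hq_snd {ζ S : Type*} (hq0 : ∀ t, 0 ≤ q t) (Z : T → ζ) (f : T → S) :
    hq (cp q Z) (fun u => f u.2) = hq q f := by
  rw [← hq_fst hq0 Z f]
  unfold hq
  congr 1
  refine Fintype.sum_equiv (Equiv.prodComm T T) _ _ fun v => ?_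
  have := cp_swap (q := q) Z v
  simp [this, w_fst hq0, w_snd hq0]

lemma hq_id {ζ : Type*} (hq0 : ∀ t, 0 ≤ q t) (Z : T → ζ) :
    hq (cp q Z) (fun u => u) + hq (cp q Z) (fun u => Z u.1) =
      hq (cp q Z) (fun u => u.1) + hq (cp q Z) (fun u => u.2) := by
  classical
  unfold hq
  rw [← neg_add, ← neg_add, ← Finset.sum_add_distrib, ← Finset.sum_add_distrib]
  congr 1
  refine Finset.sum_congr rfl fun u _ => ?_
  by_cases h : cp q Z u = 0
  · simp [h]
  have hZ := cp_supp h
  have e0 : w (cp q Z) (fun u => u) u = q u.1 * q u.2 / w q Z u.1 := by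
    have : w (cp q Z) (fun u => u) u = cp q Z u := by
      unfold w
      rw [Finset.sum_eq_single u]
      · simp
      · intro v _ hv; simp [hv]
      · simp
    rw [this]; simp [cp, hZ]
  have e1 : w (cp q Z) (fun u => u.1) u = q u.1 := by
    rw [w_fst hq0 Z (fun t => t)]; simp [w]
  have e2 : w (cp q Z) (fun u => u.2) u = q u.2 := by
    rw [w_snd hq0 Z (fun t => t)]; simp [w]
  have hne : q u.1 * q u.2 / w q Z u.1 ≠ 0 := by
    simpa [cp, hZ] using h
  have n1 : q u.1 ≠ 0 := by rintro h; simp [h] at hne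
  have n2 : q u.2 ≠ 0 := by rintro h; simp [h] at hne
  have n3 : w q Z u.1 ≠ 0 := by rintro h; simp [h] at hne
  rw [e0, e1, e2, w_fst hq0 Z Z, Real.log_div (mul_ne_zero n1 n2) n3, Real.log_mul n1 n2]
  ring

lemma cond_indep {ζ α β : Type*} (hq0 : ∀ t, 0 ≤ q t) (Z : T → ζ) (f : T → α) (g : T → β) :
    hq (cp q Z) (fun u => (f u.1, Z u.1)) + hq (cp q Z) (fun u => (g u.2, Z u.1)) ≤
      hq (cp q Z) (fun u => (g u.2, f u.1, Z u.1)) + hq (cp q Z) (fun u => Z u.1) := by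
  have h0 := hq_id hq0 Z
  have hn := cp_nonneg hq0 Z
  have h1 := submod' hn (fun u => u.1) (fun u => g u.2) (fun u => (f u.1, Z u.1))
    (fun u => u.1) (fun u => (g u.2, f u.1, Z u.1)) (fun u => (u.1, g u.2))
    (fun u => (f u.1, Z u.1))
    (by intro u v _ _; simp; rintro h; simp [h]) (by intro u v _ _; simp)
    (by intro u v _ _; simp; rintro h; simp [h]) (by intro u v _ _; simp)
  have h2 := submod' hn (fun u => u.2) (fun u => u.1) (fun u => (g u.2, Z u.1))
    (fun u => u.2) (fun u => (u.1, g u.2)) (fun u => u) (fun u => (g u.2, Z u.1))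
    (by
      intro u v hu hv
      have hu := cp_supp hu
      have hv := cp_supp hv
      simp only [Prod.mk.injEq, ← hu, ← hv]
      constructor
      · exact fun h => h.1
      · intro h; simp [h])
    (by intro u v _ _; simp; rintro h; simp [h])
    (by
      rintro ⟨u1, u2⟩ ⟨v1, v2⟩ _ _
      simp only [Prod.mk.injEq]
      constructor
      · exact fun h => ⟨h.2.1, h.1⟩
      · rintro ⟨rfl, rfl⟩; simp)
    (by intro u v _ _; simp)
  linarith

lemma ing {η α γ δ : Type*} (hn : ∀ t, 0 ≤ q t) (P : T → α) (C : T → γ) (D : T → δ) (Y : T → η)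
    (hi : hq q (fun u => (Y u, C u, D u)) + hq q (fun u => (P u, C u, D u)) ≤
        hq q (fun u => (P u, Y u, C u, D u)) + hq q (fun u => (C u, D u))) :
      hq q C + hq q D - hq q (fun u => (C u, D u)) ≤
        (hq q (fun u => (P u, C u)) + hq q (fun u => (P u, D u))
          - hq q (fun u => (P u, C u, D u)) - hq q P)
        + (hq q (fun u => (Y u, C u)) + hq q (fun u => (Y u, D u))
          - hq q (fun u => (Y u, C u, D u)) - hq q Y)
        + (hq q P + hq q Y - hq q (fun u => (P u, Y u))) := by
  have s1 := submod' hn C D (fun u => (P u, Y u)) (fun u => (P u, Y u, C u))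
    (fun u => (P u, Y u, D u)) (fun u => (P u, Y u, C u, D u)) (fun u => (P u, Y u))
    (by intro u v _ _; simp; tauto) (by intro u v _ _; simp; tauto)
    (by intro u v _ _; simp; tauto) (by intro u v _ _; simp)
  have s2 := submod' hn P Y C (fun u => (P u, C u)) (fun u => (Y u, C u))
    (fun u => (P u, Y u, C u)) C
    (by intro u v _ _; simp) (by intro u v _ _; simp)
    (by intro u v _ _; simp) (by intro u v _ _; simp)
  have s3 := submod' hn P Y D (fun u => (P u, D u)) (fun u => (Y u, D u))
    (fun u => (P u, Y u, D u)) D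
    (by intro u v _ _; simp) (by intro u v _ _; simp)
    (by intro u v _ _; simp) (by intro u v _ _; simp)
  linarith

lemma zy_core {α α' β γ δ : Type*} (hn : ∀ t, 0 ≤ q t) (A : T → α) (P : T → α') (B : T → β)
    (C : T → γ) (D : T → δ)
    (iA : hq q (fun u => (A u, C u, D u)) + hq q (fun u => (P u, C u, D u)) ≤
        hq q (fun u => (P u, A u, C u, D u)) + hq q (fun u => (C u, D u)))
    (iB : hq q (fun u => (B u, C u, D u)) + hq q (fun u => (P u, C u, D u)) ≤
        hq q (fun u => (P u, B u, C u, D u)) + hq q (fun u => (C u, D u)))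
    (iAB : hq q (fun u => ((A u, B u), C u, D u)) + hq q (fun u => (P u, C u, D u)) ≤
        hq q (fun u => (P u, (A u, B u), C u, D u)) + hq q (fun u => (C u, D u))) :
    2 * (hq q C + hq q D - hq q (fun u => (C u, D u))) ≤
      2 * (hq q (fun u => (P u, C u)) + hq q (fun u => (P u, D u))
          - hq q (fun u => (P u, C u, D u)) - hq q P)
        + (hq q (fun u => (A u, C u)) + hq q (fun u => (A u, D u))
          - hq q (fun u => (A u, C u, D u)) - hq q A)
        + (hq q (fun u => (B u, C u)) + hq q (fun u => (B u, D u))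
          - hq q (fun u => (B u, C u, D u)) - hq q B)
        + (hq q A + hq q B - hq q (fun u => (A u, B u)))
        + (hq q P + hq q (fun u => (C u, D u)) - hq q (fun u => (P u, C u, D u))) := by
  have gA := ing hn P C D A iA
  have gB := ing hn P C D B iB
  have s4 := submod' hn A B P (fun u => (P u, A u)) (fun u => (P u, B u))
    (fun u => (P u, A u, B u)) P
    (by intro u v _ _; simp; tauto) (by intro u v _ _; simp; tauto)
    (by intro u v _ _; simp; tauto) (by intro u v _ _; simp)
  have s5 := submod' hn P (fun u => (C u, D u)) (fun u => (A u, B u))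
    (fun u => (P u, A u, B u)) (fun u => ((A u, B u), C u, D u))
    (fun u => (P u, (A u, B u), C u, D u)) (fun u => (A u, B u))
    (by intro u v _ _; simp) (by intro u v _ _; simp; tauto)
    (by intro u v _ _; simp; tauto) (by intro u v _ _; simp)
  linarith

theorem zy {α β γ δ : Type*} (hq0 : ∀ t, 0 ≤ q t) (hA : T → α) (hB : T → β)
    (hC : T → γ) (hD : T → δ) :
    0 ≤ -2 * hq q hC - 2 * hq q hD - hq q hA
      + 3 * hq q (fun t => (hC t, hD t)) + 3 * hq q (fun t => (hC t, hA t))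
      + hq q (fun t => (hC t, hB t)) + 3 * hq q (fun t => (hD t, hA t))
      + hq q (fun t => (hD t, hB t)) - hq q (fun t => (hA t, hB t))
      - 4 * hq q (fun t => (hC t, hD t, hA t)) - hq q (fun t => (hC t, hD t, hB t)) := by
  have core := zy_core (cp_nonneg hq0 (fun t => (hC t, hD t))) (fun u => hA u.1)
    (fun u => hA u.2) (fun u => hB u.1) (fun u => hC u.1) (fun u => hD u.1)
    (cond_indep hq0 (fun t => (hC t, hD t)) hA hA)
    (cond_indep hq0 (fun t => (hC t, hD t)) hB hA)
    (cond_indep hq0 (fun t => (hC t, hD t)) (fun t => (hA t, hB t)) hA)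
  have supp : ∀ u, cp q (fun t => (hC t, hD t)) u ≠ 0 → hC u.2 = hC u.1 ∧ hD u.2 = hD u.1 := by
    intro u hu
    simpa using cp_supp hu
  have m0 : hq (cp q (fun t => (hC t, hD t))) (fun u => (hA u.2, hC u.1, hD u.1))
      = hq q (fun t => (hC t, hD t, hA t)) := by
    rw [← hq_snd hq0 (fun t => (hC t, hD t))]
    refine hq_congr _ _ fun u v hu hv => ?_
    simp [supp u hu, supp v hv]; tauto
  have m1 : hq (cp q (fun t => (hC t, hD t))) (fun u => (hA u.2, hC u.1))
      = hq q (fun t => (hC t, hA t)) := by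
    rw [← hq_snd hq0 (fun t => (hC t, hD t))]
    refine hq_congr _ _ fun u v hu hv => ?_
    simp [supp u hu, supp v hv]; tauto
  have m2 : hq (cp q (fun t => (hC t, hD t))) (fun u => (hA u.2, hD u.1))
      = hq q (fun t => (hD t, hA t)) := by
    rw [← hq_snd hq0 (fun t => (hC t, hD t))]
    refine hq_congr _ _ fun u v hu hv => ?_
    simp [supp u hu, supp v hv]; tauto
  have m3 : hq (cp q (fun t => (hC t, hD t))) (fun u => (hC u.1, hD u.1))
      = hq q (fun t => (hC t, hD t)) := by
    rw [← hq_fst hq0 (fun t => (hC t, hD t))]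
  have m4 : hq (cp q (fun t => (hC t, hD t))) (fun u => (hA u.1, hB u.1))
      = hq q (fun t => (hA t, hB t)) := by
    rw [← hq_fst hq0 (fun t => (hC t, hD t))]
  have m5 : hq (cp q (fun t => (hC t, hD t))) (fun u => (hA u.1, hC u.1, hD u.1))
      = hq q (fun t => (hC t, hD t, hA t)) := by
    rw [← hq_fst hq0 (fun t => (hC t, hD t))]
    refine hq_congr _ _ fun u v hu hv => ?_
    simp; tauto
  have m6 : hq (cp q (fun t => (hC t, hD t))) (fun u => (hA u.1, hC u.1))
      = hq q (fun t => (hC t, hA t)) := by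
    rw [← hq_fst hq0 (fun t => (hC t, hD t))]
    refine hq_congr _ _ fun u v hu hv => ?_
    simp; tauto
  have m7 : hq (cp q (fun t => (hC t, hD t))) (fun u => (hA u.1, hD u.1))
      = hq q (fun t => (hD t, hA t)) := by
    rw [← hq_fst hq0 (fun t => (hC t, hD t))]
    refine hq_congr _ _ fun u v hu hv => ?_
    simp; tauto
  have m8 : hq (cp q (fun t => (hC t, hD t))) (fun u => (hB u.1, hC u.1, hD u.1))
      = hq q (fun t => (hC t, hD t, hB t)) := by
    rw [← hq_fst hq0 (fun t => (hC t, hD t))]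
    refine hq_congr _ _ fun u v hu hv => ?_
    simp; tauto
  have m9 : hq (cp q (fun t => (hC t, hD t))) (fun u => (hB u.1, hC u.1))
      = hq q (fun t => (hC t, hB t)) := by
    rw [← hq_fst hq0 (fun t => (hC t, hD t))]
    refine hq_congr _ _ fun u v hu hv => ?_
    simp; tauto
  have m10 : hq (cp q (fun t => (hC t, hD t))) (fun u => (hB u.1, hD u.1))
      = hq q (fun t => (hD t, hB t)) := by
    rw [← hq_fst hq0 (fun t => (hC t, hD t))]
    refine hq_congr _ _ fun u v hu hv => ?_
    simp; tauto
  have nA : hq (cp q (fun t => (hC t, hD t))) (fun u => hA u.1) = hq q hA := hq_fst hq0 _ hA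
  have nB : hq (cp q (fun t => (hC t, hD t))) (fun u => hB u.1) = hq q hB := hq_fst hq0 _ hB
  have nC : hq (cp q (fun t => (hC t, hD t))) (fun u => hC u.1) = hq q hC := hq_fst hq0 _ hC
  have nD : hq (cp q (fun t => (hC t, hD t))) (fun u => hD u.1) = hq q hD := hq_fst hq0 _ hD
  have nP : hq (cp q (fun t => (hC t, hD t))) (fun u => hA u.2) = hq q hA := hq_snd hq0 _ hA
  rw [m0, m1, m2, m3, m4, m5, m6, m7, m8, m9, m10, nA, nB, nC, nD, nP] at core
  linarith

end

lemma entH_eq {Ω T S : Type*} [MeasurableSpace Ω] [Fintype T] [Fintype S]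
    [MeasurableSpace T] [MeasurableSingletonClass T]
    (μ : Measure Ω) [IsProbabilityMeasure μ] (X : Ω → T) (hX : Measurable X) (g : T → S) :
    entH μ (fun ω => g (X ω)) = hq (fun t => (μ (X ⁻¹' {t})).toReal) g := by
  classical
  have key : ∀ e : S, (μ ((fun ω => g (X ω)) ⁻¹' {e})).toReal
      = ∑ t, if g t = e then (μ (X ⁻¹' {t})).toReal else 0 := by
    intro e
    have hs : (fun ω => g (X ω)) ⁻¹' {e} =
        ⋃ t ∈ Finset.univ.filter (fun t => g t = e), X ⁻¹' {t} := by
      ext ω; simp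
    rw [hs, measure_biUnion_finset, ENNReal.toReal_sum, Finset.sum_filter]
    · intro t _; exact measure_ne_top _ _
    · intro a _ b _ hab
      exact Disjoint.preimage _ (by simpa using hab)
    · intro t _; exact hX (measurableSet_singleton t)
  unfold entH hq
  rw [← Finset.sum_neg_distrib]
  simp only [key, Real.negMulLog]
  have : ∀ e : S, -(∑ t, if g t = e then (μ (X ⁻¹' {t})).toReal else 0) *
      Real.log (∑ t, if g t = e then (μ (X ⁻¹' {t})).toReal else 0) =
      ∑ t, if g t = e then -((μ (X ⁻¹' {t})).toReal *
        Real.log (w (fun t => (μ (X ⁻¹' {t})).toReal) g t)) else 0 := by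
    intro e
    rw [neg_mul, Finset.sum_mul, ← Finset.sum_neg_distrib]
    refine Finset.sum_congr rfl fun t _ => ?_
    by_cases h : g t = e
    · subst h; simp [w]
    · simp [h]
  simp only [this]
  rw [Finset.sum_comm]
  simp

end ZY

/-- **Zhang–Yeung non-Shannon inequality** for four jointly distributed finite
random variables. -/
theorem zhang_yeung_inequality {Ω E1 E2 E3 E4 : Type*} [MeasurableSpace Ω]
    [Fintype E1] [Fintype E2] [Fintype E3] [Fintype E4]
    [MeasurableSpace E1] [MeasurableSingletonClass E1]
    [MeasurableSpace E2] [MeasurableSingletonClass E2]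
    [MeasurableSpace E3] [MeasurableSingletonClass E3]
    [MeasurableSpace E4] [MeasurableSingletonClass E4]
    (μ : Measure Ω) [IsProbabilityMeasure μ]
    (X1 : Ω → E1) (X2 : Ω → E2) (X3 : Ω → E3) (X4 : Ω → E4)
    (hX1 : Measurable X1) (hX2 : Measurable X2) (hX3 : Measurable X3) (hX4 : Measurable X4) :
    0 ≤ -entH μ X1 - entH μ X2 - (1 / 2) * entH μ X3
      + (3 / 2) * entH μ (fun ω => (X1 ω, X2 ω))
      + (3 / 2) * entH μ (fun ω => (X1 ω, X3 ω))
      + (1 / 2) * entH μ (fun ω => (X1 ω, X4 ω))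
      + (3 / 2) * entH μ (fun ω => (X2 ω, X3 ω))
      + (1 / 2) * entH μ (fun ω => (X2 ω, X4 ω))
      - (1 / 2) * entH μ (fun ω => (X3 ω, X4 ω))
      - 2 * entH μ (fun ω => (X1 ω, X2 ω, X3 ω))
      - (1 / 2) * entH μ (fun ω => (X1 ω, X2 ω, X4 ω)) := by
  let X : Ω → E1 × E2 × E3 × E4 := fun ω => (X1 ω, X2 ω, X3 ω, X4 ω)
  have hX : Measurable X := hX1.prodMk (hX2.prodMk (hX3.prodMk hX4))
  have h := ZY.zy (q := fun t => (μ (X ⁻¹' {t})).toReal) (fun _ => ENNReal.toReal_nonneg)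
    (fun t => t.2.2.1) (fun t => t.2.2.2) (fun t => t.1) (fun t => t.2.1)
  simp only [← ZY.entH_eq μ X hX] at h
  simp only [X] at h
  linarith
end

section
/- For any four jointly distributed finite random variables X1, X2, X3, X4 and any natural number s ≥ 1, the first Matúš inequality holds: s[I(X1:X2|X3) + I(X1:X2|X4) + I(X3:X4) - I(X1:X2)] + I(X1:X3|X2) + (s(s+1)/2)[I(X2:X3|X1) + I(X1:X2|X3)] ≥ 0, where I(·:·) denotes mutual information and I(·:·|·) denotes conditional mutual information. -/
open MeasureTheory ProbabilityTheory

namespace Matus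

open Classical in
/-- Mass of the class of `ω` under the equivalence relation `X`. -/
noncomputable def mass {Ω : Type*} [Fintype Ω] (w : Ω → ℝ) (X : Setoid Ω) (ω : Ω) : ℝ :=
  ∑ a, if X.r a ω then w a else 0

/-- Entropy of an equivalence relation under a weight. -/
noncomputable def h {Ω : Type*} [Fintype Ω] (w : Ω → ℝ) (X : Setoid Ω) : ℝ :=
  - ∑ ω, w ω * Real.log (mass w X ω)

section basic
variable {Ω : Type*} [Fintype Ω] {w : Ω → ℝ}

lemma mass_congr (X : Setoid Ω) {a b : Ω} (hab : X.r a b) : mass w X a = mass w X b := by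
  unfold mass
  refine Finset.sum_congr rfl fun c _ => ?_
  have : X.r c a ↔ X.r c b := ⟨fun k => X.trans' k hab, fun k => X.trans' k (X.symm' hab)⟩
  classical exact if_congr this rfl rfl

lemma mass_nonneg (hw : ∀ ω, 0 ≤ w ω) (X : Setoid Ω) (a : Ω) : 0 ≤ mass w X a := by
  unfold mass
  refine Finset.sum_nonneg fun c _ => ?_
  split_ifs <;> simp [hw]

open Classical in
lemma le_mass (hw : ∀ ω, 0 ≤ w ω) (X : Setoid Ω) (a : Ω) : w a ≤ mass w X a := by
  unfold mass
  have := Finset.single_le_sum (f := fun c => if X.r c a then w c else 0) (s := Finset.univ)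
    (fun c _ => by split_ifs <;> simp [hw]) (Finset.mem_univ a)
  simpa [X.refl' a] using this

lemma mass_pos (hw : ∀ ω, 0 ≤ w ω) (X : Setoid Ω) {a : Ω} (ha : 0 < w a) : 0 < mass w X a :=
  ha.trans_le (le_mass hw X a)

open Classical in
lemma inner_le (hw : ∀ ω, 0 ≤ w ω) (X Y Z : Setoid Ω) (a b : Ω) :
    ∑ ω, (if (X ⊓ Z).r a ω then (1:ℝ) else 0) * (if (Y ⊓ Z).r b ω then (1:ℝ) else 0) *
      (w ω / (mass w (X ⊓ (Y ⊓ Z)) ω * mass w Z ω)) ≤ (if Z.r b a then 1 else 0) / mass w Z a := by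
  by_cases hex : ∃ ω, (X ⊓ Z).r a ω ∧ (Y ⊓ Z).r b ω
  · obtain ⟨o, ⟨h1, h2⟩, ⟨h3, h4⟩⟩ := hex
    have hba : Z.r b a := Z.trans' h4 (Z.symm' h2)
    have key : ∀ ω, (if (X ⊓ Z).r a ω then (1:ℝ) else 0) * (if (Y ⊓ Z).r b ω then (1:ℝ) else 0) *
      (w ω / (mass w (X ⊓ (Y ⊓ Z)) ω * mass w Z ω)) =
      (if (X ⊓ (Y ⊓ Z)).r ω o then w ω else 0) * (1 / (mass w (X ⊓ (Y ⊓ Z)) o * mass w Z a)) := by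
      intro ω
      by_cases hc : (X ⊓ (Y ⊓ Z)).r ω o
      · have hc' := hc
        obtain ⟨c1, c2, c3⟩ := hc'
        have d1 : (X ⊓ Z).r a ω := ⟨X.trans' h1 (X.symm' c1), Z.trans' h2 (Z.symm' c3)⟩
        have d2 : (Y ⊓ Z).r b ω := ⟨Y.trans' h3 (Y.symm' c2), Z.trans' h4 (Z.symm' c3)⟩
        rw [if_pos hc, if_pos d1, if_pos d2, mass_congr _ hc, mass_congr Z (Z.symm' d1.2)]
        ring
      · rw [if_neg hc]
        by_cases d1 : (X ⊓ Z).r a ω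
        · by_cases d2 : (Y ⊓ Z).r b ω
          · exact absurd ⟨X.trans' (X.symm' d1.1) h1, Y.trans' (Y.symm' d2.1) h3,
              Z.trans' (Z.symm' d1.2) h2⟩ hc
          · rw [if_neg d2]; ring
        · rw [if_neg d1]; ring
    rw [Finset.sum_congr rfl fun ω _ => key ω, ← Finset.sum_mul, if_pos hba]
    change mass w (X ⊓ (Y ⊓ Z)) o * _ ≤ _
    have n1 := mass_nonneg hw (X ⊓ (Y ⊓ Z)) o
    have n2 := mass_nonneg hw Z a
    rcases n1.eq_or_lt with e | e
    · rw [← e]; simp; exact n2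
    · apply le_of_eq
      field_simp
  · push Not at hex
    have n2 := mass_nonneg hw Z a
    rw [Finset.sum_eq_zero]
    · positivity
    · intro ω _
      by_cases d1 : (X ⊓ Z).r a ω
      · rw [if_neg (hex ω d1)]; ring
      · rw [if_neg d1]; ring

open Classical in
lemma ratio_sum_le (hw : ∀ ω, 0 ≤ w ω) (X Y Z : Setoid Ω) :
    ∑ ω, w ω * (mass w (X ⊓ Z) ω * mass w (Y ⊓ Z) ω /
      (mass w (X ⊓ (Y ⊓ Z)) ω * mass w Z ω)) ≤ ∑ ω, w ω := by
  have e1 : ∀ ω, w ω * (mass w (X ⊓ Z) ω * mass w (Y ⊓ Z) ω /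
      (mass w (X ⊓ (Y ⊓ Z)) ω * mass w Z ω)) = ∑ a, ∑ b, w a * w b *
      ((if (X ⊓ Z).r a ω then (1:ℝ) else 0) * (if (Y ⊓ Z).r b ω then (1:ℝ) else 0) *
      (w ω / (mass w (X ⊓ (Y ⊓ Z)) ω * mass w Z ω))) := by
    intro ω
    have : w ω * (mass w (X ⊓ Z) ω * mass w (Y ⊓ Z) ω /
      (mass w (X ⊓ (Y ⊓ Z)) ω * mass w Z ω)) = (mass w (X ⊓ Z) ω * mass w (Y ⊓ Z) ω) * (w ω /
      (mass w (X ⊓ (Y ⊓ Z)) ω * mass w Z ω)) := by ring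
    rw [this]
    generalize w ω / (mass w (X ⊓ (Y ⊓ Z)) ω * mass w Z ω) = q
    unfold mass
    rw [Finset.sum_mul_sum, Finset.sum_mul]
    refine Finset.sum_congr rfl fun a _ => ?_
    rw [Finset.sum_mul]
    refine Finset.sum_congr rfl fun b _ => ?_
    split_ifs <;> ring
  rw [Finset.sum_congr rfl fun ω _ => e1 ω, Finset.sum_comm]
  refine Finset.sum_le_sum fun a _ => ?_
  rw [Finset.sum_comm]
  calc _ ≤ ∑ b, w a * w b * ((if Z.r b a then 1 else 0) / mass w Z a) := by
        refine Finset.sum_le_sum fun b _ => ?_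
        rw [← Finset.mul_sum]
        exact mul_le_mul_of_nonneg_left (inner_le hw X Y Z a b) (mul_nonneg (hw a) (hw b))
    _ = w a * (mass w Z a / mass w Z a) := by
        nth_rw 2 [mass]
        rw [Finset.sum_div, Finset.mul_sum]
        refine Finset.sum_congr rfl fun b _ => ?_
        split_ifs <;> ring
    _ ≤ w a := by
        have := div_self_le_one (mass w Z a)
        nlinarith [hw a]

/-- Submodularity of entropy: `I(X : Y | Z) ≥ 0`. -/
lemma submod (hw : ∀ ω, 0 ≤ w ω) (X Y Z : Setoid Ω) :
    0 ≤ h w (X ⊓ Z) + h w (Y ⊓ Z) - h w (X ⊓ (Y ⊓ Z)) - h w Z := by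
  have key : ∀ ω, w ω - w ω * (mass w (X ⊓ Z) ω * mass w (Y ⊓ Z) ω /
      (mass w (X ⊓ (Y ⊓ Z)) ω * mass w Z ω)) ≤
      w ω * Real.log (mass w (X ⊓ (Y ⊓ Z)) ω) + w ω * Real.log (mass w Z ω)
      - w ω * Real.log (mass w (X ⊓ Z) ω) - w ω * Real.log (mass w (Y ⊓ Z) ω) := by
    intro ω
    rcases (hw ω).eq_or_lt with e | e
    · simp [← e]
    · have p1 := mass_pos hw (X ⊓ Z) e
      have p2 := mass_pos hw (Y ⊓ Z) e
      have p3 := mass_pos hw (X ⊓ (Y ⊓ Z)) e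
      have p4 := mass_pos hw Z e
      have := Real.log_le_sub_one_of_pos (div_pos (mul_pos p1 p2) (mul_pos p3 p4))
      rw [Real.log_div (mul_pos p1 p2).ne' (mul_pos p3 p4).ne', Real.log_mul p1.ne' p2.ne',
        Real.log_mul p3.ne' p4.ne'] at this
      nlinarith
  have s := Finset.sum_le_sum fun ω (_ : ω ∈ Finset.univ) => key ω
  simp only [Finset.sum_sub_distrib, Finset.sum_add_distrib] at s
  have r := ratio_sum_le hw X Y Z
  unfold h
  linarith

end basic

section copy
variable {Ω : Type*} [Fintype Ω]

open Classical in
/-- Two conditionally independent samples given `V`. -/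
noncomputable def cp (w : Ω → ℝ) (V : Setoid Ω) (x : Ω × Ω) : ℝ :=
  if V.r x.2 x.1 then w x.1 * w x.2 / mass w V x.1 else 0

variable {w : Ω → ℝ}

lemma cp_nonneg (hw : ∀ ω, 0 ≤ w ω) (V : Setoid Ω) (x : Ω × Ω) : 0 ≤ cp w V x := by
  unfold cp
  have := mass_nonneg hw V x.1
  split_ifs
  · exact div_nonneg (mul_nonneg (hw _) (hw _)) this
  · exact le_rfl

lemma cp_swap (V : Setoid Ω) (a b : Ω) : cp w V (a, b) = cp w V (b, a) := by
  unfold cp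
  by_cases k : V.r b a
  · simp only [if_pos k, if_pos (V.symm' k), mass_congr V k]; ring
  · have : ¬ V.r a b := fun q => k (V.symm' q)
    simp [k, this]

open Classical in
lemma cp_sum (hw : ∀ ω, 0 ≤ w ω) (V : Setoid Ω) (a : Ω) : ∑ b, cp w V (a, b) = w a := by
  have : ∀ b, cp w V (a, b) = w a / mass w V a * (if V.r b a then w b else 0) := by
    intro b; unfold cp; dsimp only; split_ifs <;> ring
  rw [Finset.sum_congr rfl fun b _ => this b, ← Finset.mul_sum]
  change w a / mass w V a * mass w V a = w a
  rcases (hw a).eq_or_lt with e | e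
  · simp [← e]
  · have := mass_pos hw V e
    field_simp

/-- pullback to the first sample -/
def l (X : Setoid Ω) : Setoid (Ω × Ω) := X.comap Prod.fst
/-- pullback to the second sample -/
def r (X : Setoid Ω) : Setoid (Ω × Ω) := X.comap Prod.snd

lemma l_inf (X Y : Setoid Ω) : l (X ⊓ Y) = l X ⊓ l Y := rfl
lemma r_inf (X Y : Setoid Ω) : r (X ⊓ Y) = r X ⊓ r Y := rfl

open Classical in
lemma mass_l (hw : ∀ ω, 0 ≤ w ω) (V X : Setoid Ω) (x : Ω × Ω) :
    mass (cp w V) (l X) x = mass w X x.1 := by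
  unfold mass
  rw [Fintype.sum_prod_type]
  refine Finset.sum_congr rfl fun a _ => ?_
  change (∑ b, if X.r a x.1 then cp w V (a, b) else 0) = _
  split_ifs
  · exact cp_sum hw V a
  · simp

open Classical in
lemma mass_r (hw : ∀ ω, 0 ≤ w ω) (V X : Setoid Ω) (x : Ω × Ω) :
    mass (cp w V) (r X) x = mass w X x.2 := by
  unfold mass
  rw [Fintype.sum_prod_type_right]
  refine Finset.sum_congr rfl fun a _ => ?_
  change (∑ b, if X.r a x.2 then cp w V (b, a) else 0) = _
  split_ifs
  · simp only [cp_swap V _ a]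
    exact cp_sum hw V a
  · simp

lemma h_l (hw : ∀ ω, 0 ≤ w ω) (V X : Setoid Ω) : h (cp w V) (l X) = h w X := by
  unfold h
  simp only [mass_l hw]
  rw [Fintype.sum_prod_type]
  congr 1
  refine Finset.sum_congr rfl fun a _ => ?_
  dsimp only
  rw [← Finset.sum_mul, cp_sum hw]

lemma h_r (hw : ∀ ω, 0 ≤ w ω) (V X : Setoid Ω) : h (cp w V) (r X) = h w X := by
  unfold h
  simp only [mass_r hw]
  rw [Fintype.sum_prod_type_right]
  congr 1
  refine Finset.sum_congr rfl fun a _ => ?_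
  dsimp only
  rw [← Finset.sum_mul]
  simp only [cp_swap V _ a]
  rw [cp_sum hw]

lemma cp_supp (V : Setoid Ω) {x : Ω × Ω} (hx : cp w V x ≠ 0) : V.r x.2 x.1 := by
  by_contra k
  exact hx (by simp [cp, k])

/-- The copy has the same joint law with anything coarser than `V`. -/
lemma h_rl (hw : ∀ ω, 0 ≤ w ω) {V U : Setoid Ω} (hU : V ≤ U) (T : Setoid Ω) :
    h (cp w V) (r T ⊓ l U) = h w (T ⊓ U) := by
  rw [← h_r hw V (T ⊓ U), r_inf]
  unfold h
  congr 1
  refine Finset.sum_congr rfl fun x _ => ?_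
  by_cases hx : cp w V x = 0
  · simp [hx]
  congr 2
  unfold mass
  refine Finset.sum_congr rfl fun y _ => ?_
  by_cases hy : cp w V y = 0
  · simp [hy]
  have kx : U.r x.2 x.1 := hU (cp_supp V hx)
  have ky : U.r y.2 y.1 := hU (cp_supp V hy)
  have : (r T ⊓ l U).r y x ↔ (r T ⊓ r U).r y x := by
    change (T.r y.2 x.2 ∧ U.r y.1 x.1) ↔ (T.r y.2 x.2 ∧ U.r y.2 x.2)
    refine and_congr_right fun _ => ⟨fun k => ?_, fun k => ?_⟩
    · exact U.trans' ky (U.trans' k (U.symm' kx))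
    · exact U.trans' (U.symm' ky) (U.trans' k kx)
  classical exact if_congr this rfl rfl

lemma mass_joint (V X T : Setoid Ω) (x : Ω × Ω) (hx : V.r x.2 x.1) :
    mass (cp w V) (r T ⊓ (l X ⊓ l V)) x =
      mass w (X ⊓ V) x.1 * mass w (T ⊓ V) x.2 / mass w V x.1 := by
  unfold mass
  rw [Fintype.sum_prod_type, Finset.sum_mul_sum, Finset.sum_div]
  refine Finset.sum_congr rfl fun a _ => ?_
  rw [Finset.sum_div]
  refine Finset.sum_congr rfl fun b _ => ?_
  change _ = _ / mass w V x.1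
  by_cases k : (X ⊓ V).r a x.1
  · rw [if_pos k]
    by_cases k2 : (T ⊓ V).r b x.2
    · have j : (r T ⊓ (l X ⊓ l V)).r (a, b) x := ⟨k2.1, k.1, k.2⟩
      have j2 : V.r b a := V.trans' k2.2 (V.trans' hx (V.symm' k.2))
      rw [if_pos k2, if_pos j, cp, if_pos j2]
      dsimp only
      rw [mass_congr V k.2]
    · rw [if_neg k2, mul_zero, zero_div]
      split_ifs with j
      · have : ¬ V.r b a := fun q => k2 ⟨j.1, V.trans' q (V.trans' k.2 (V.symm' hx))⟩
        simp [cp, this]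
      · rfl
  · have j : ¬ (r T ⊓ (l X ⊓ l V)).r (a, b) x := fun q => k ⟨q.2.1, q.2.2⟩
    rw [if_neg k, if_neg j, zero_mul, zero_div]

/-- The copy is conditionally independent of everything given `V`. -/
lemma ci (hw : ∀ ω, 0 ≤ w ω) (V X T : Setoid Ω) :
    h (cp w V) (r T ⊓ (l X ⊓ l V)) + h (cp w V) (l V) =
      h (cp w V) (r T ⊓ l V) + h (cp w V) (l X ⊓ l V) := by
  rw [h_rl hw le_rfl, ← h_r hw V (T ⊓ V), ← l_inf]
  unfold h
  rw [← neg_add, ← neg_add, ← Finset.sum_add_distrib, ← Finset.sum_add_distrib]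
  congr 1
  refine Finset.sum_congr rfl fun x _ => ?_
  by_cases hx : cp w V x = 0
  · simp [hx]
  have kx := cp_supp V hx
  have hx1 : 0 < w x.1 := by
    refine (hw _).lt_of_ne fun e => hx ?_
    simp [cp, ← e]
  have hx2 : 0 < w x.2 := by
    refine (hw _).lt_of_ne fun e => hx ?_
    simp [cp, ← e]
  have p1 := mass_pos hw (X ⊓ V) hx1
  have p2 := mass_pos hw (T ⊓ V) hx2
  have p3 := mass_pos hw V hx1
  rw [l_inf, mass_joint V X T x kx, ← l_inf, mass_l hw, mass_l hw, mass_r hw,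
    Real.log_div (mul_pos p1 p2).ne' p3.ne', Real.log_mul p1.ne' p2.ne']
  ring

end copy

section ineq
variable {Ω : Type*} [Fintype Ω]

/-- conditional mutual information -/
noncomputable def ic (w : Ω → ℝ) (X Y Z : Setoid Ω) : ℝ :=
  h w (X ⊓ Z) + h w (Y ⊓ Z) - h w (X ⊓ (Y ⊓ Z)) - h w Z

/-- mutual information -/
noncomputable def im (w : Ω → ℝ) (X Y : Setoid Ω) : ℝ :=
  h w X + h w Y - h w (X ⊓ Y)

/-- Ingleton expression -/
noncomputable def ing (w : Ω → ℝ) (A B C D : Setoid Ω) : ℝ :=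
  ic w A B C + ic w A B D + im w C D - im w A B

variable {w : Ω → ℝ}

lemma ic_nonneg (hw : ∀ ω, 0 ≤ w ω) (X Y Z : Setoid Ω) : 0 ≤ ic w X Y Z := submod hw X Y Z

/-- Base inequality, independence over `A, B`. -/
lemma base1 (hw : ∀ ω, 0 ≤ w ω) (A B C D R : Setoid Ω)
    (h0 : ic w R (C ⊓ D) (A ⊓ B) = 0) :
    ic w C R B ≤ ing w A B C D + ic w A B R + ic w B R A + ic w A R B := by
  have a1 := ic_nonneg hw A B (C ⊓ R)
  have a2 := ic_nonneg hw A B (D ⊓ R)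
  have a3 := ic_nonneg hw A R (B ⊓ (C ⊓ D))
  have a4 := ic_nonneg hw B R (C ⊓ D)
  have a5 := ic_nonneg hw C D R
  have a6 := ic_nonneg hw C R A
  have a8 := ic_nonneg hw D R A
  have a9 := ic_nonneg hw D R B
  have b1 := ic_nonneg hw R C (A ⊓ B)
  have b2 := ic_nonneg hw R D (A ⊓ B)
  have b3 := ic_nonneg hw R D (A ⊓ (B ⊓ C))
  have b4 := ic_nonneg hw R C (A ⊓ (B ⊓ D))
  unfold ing
  unfold ic im at *
  simp only [inf_comm, inf_left_comm, inf_assoc] at *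
  linarith

/-- Base inequality, independence over `B, C`. -/
lemma base2 (hw : ∀ ω, 0 ≤ w ω) (A B C D R : Setoid Ω)
    (h0 : ic w R (A ⊓ D) (B ⊓ C) = 0) :
    ic w A R B ≤ ing w A B C D + ic w C B R + ic w B R C + ic w C R B := by
  have a1 := ic_nonneg hw A B (D ⊓ R)
  have a2 := ic_nonneg hw A R C
  have a3 := ic_nonneg hw A R (B ⊓ (C ⊓ D))
  have a4 := ic_nonneg hw B C (A ⊓ R)
  have a5 := ic_nonneg hw B R (C ⊓ D)
  have a6 := ic_nonneg hw C D R
  have a7 := ic_nonneg hw C R (A ⊓ (B ⊓ D))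
  have a8 := ic_nonneg hw D R A
  have a9 := ic_nonneg hw D R B
  have a10 := ic_nonneg hw D R (A ⊓ (B ⊓ C))
  have b1 := ic_nonneg hw R A (B ⊓ C)
  have b2 := ic_nonneg hw R D (B ⊓ C)
  unfold ing
  unfold ic im at *
  simp only [inf_comm, inf_left_comm, inf_assoc] at *
  linarith

lemma trade (hw : ∀ ω, 0 ≤ w ω) (A B C R : Setoid Ω) (h0 : ic w R C (A ⊓ B) = 0) :
    ic w C B R + ic w B R C ≤ ic w A B R + ic w B R A + (ic w B C A + ic w A B C) := by
  have a1 := ic_nonneg hw A B (C ⊓ R)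
  have a2 := ic_nonneg hw C R A
  unfold ic at *
  simp only [inf_comm, inf_left_comm, inf_assoc] at *
  linarith

end ineq

lemma ic_ci {Ω : Type*} [Fintype Ω] {w : Ω → ℝ} (hw : ∀ ω, 0 ≤ w ω) (X Y V T : Setoid Ω) :
    ic (cp w (X ⊓ Y)) (r T) (l V) (l X ⊓ l Y) = 0 := by
  have := ci hw (X ⊓ Y) V T
  rw [l_inf] at this
  unfold ic
  linarith

lemma ic_l {Ω : Type*} [Fintype Ω] {w : Ω → ℝ} (hw : ∀ ω, 0 ≤ w ω) (V X Y Z : Setoid Ω) :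
    ic (cp w V) (l X) (l Y) (l Z) = ic w X Y Z := by
  unfold ic
  simp only [← l_inf, h_l hw]

lemma ing_l {Ω : Type*} [Fintype Ω] {w : Ω → ℝ} (hw : ∀ ω, 0 ≤ w ω) (V A B C D : Setoid Ω) :
    ing (cp w V) (l A) (l B) (l C) (l D) = ing w A B C D := by
  unfold ing im
  simp only [← l_inf, h_l hw, ic_l hw]

/-- Information terms of the copy. -/
lemma ic_copy {Ω : Type*} [Fintype Ω] {w : Ω → ℝ} (hw : ∀ ω, 0 ≤ w ω) (X Y T : Setoid Ω) :
    ic (cp w (X ⊓ Y)) (l X) (l Y) (r T) = ic w X Y T ∧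
    ic (cp w (X ⊓ Y)) (l Y) (r T) (l X) = ic w Y T X ∧
    ic (cp w (X ⊓ Y)) (l X) (r T) (l Y) = ic w X T Y := by
  have e0 := h_r hw (X ⊓ Y) T
  have e1 := h_rl hw (inf_le_left : X ⊓ Y ≤ X) T
  have e2 := h_rl hw (inf_le_right : X ⊓ Y ≤ Y) T
  have e3 := h_rl hw (le_refl (X ⊓ Y)) T
  have f1 := h_l hw (X ⊓ Y) X
  have f2 := h_l hw (X ⊓ Y) Y
  have f3 := h_l hw (X ⊓ Y) (X ⊓ Y)
  rw [l_inf] at e3 f3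
  generalize cp w (X ⊓ Y) = w' at *
  generalize l X = X' at *
  generalize l Y = Y' at *
  generalize r T = T' at *
  unfold ic
  simp only [inf_comm, inf_left_comm, inf_assoc] at *
  refine ⟨?_, ?_, ?_⟩ <;> linarith

universe u

/-- The two interleaved families of five-variable inequalities. -/
theorem family (s : ℕ) : ∀ (Ω : Type u) [Fintype Ω] (w : Ω → ℝ) (_ : ∀ ω, 0 ≤ w ω)
    (A B C D E : Setoid Ω),
    0 ≤ s * (ing w A B C D + (ic w A B E + ic w B E A)) + ic w A E B
      + (s : ℝ) * (s - 1) / 2 * (ic w B C A + ic w A B C) ∧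
    0 ≤ s * (ing w A B C D + (ic w C B E + ic w B E C)) + ic w C E B
      + (s : ℝ) * (s - 1) / 2 * (ic w B C A + ic w A B C) := by
  induction s with
  | zero =>
    intro Ω _ w hw A B C D E
    have := ic_nonneg hw A E B
    have := ic_nonneg hw C E B
    constructor <;> simpa
  | succ s ih =>
    intro Ω _ w hw A B C D E
    have hs : (0:ℝ) ≤ s := Nat.cast_nonneg s
    constructor
    · obtain ⟨c1, c2, c3⟩ := ic_copy hw A B E
      have i := (ih _ (cp w (A ⊓ B)) (cp_nonneg hw _) (l A) (l B) (l C) (l D) (r E)).2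
      have b := base1 (cp_nonneg hw _) (l A) (l B) (l C) (l D) (r E) (ic_ci hw A B (C ⊓ D) E)
      have t := trade (cp_nonneg hw _) (l A) (l B) (l C) (r E) (ic_ci hw A B C E)
      have t' := mul_le_mul_of_nonneg_left t hs
      rw [c1, c2, c3, ing_l hw] at b
      rw [ing_l hw, ic_l hw, ic_l hw] at i
      rw [c1, c2, ic_l hw, ic_l hw] at t'
      push_cast
      linarith
    · obtain ⟨c1, c2, c3⟩ := ic_copy hw C B E
      have i := (ih _ (cp w (C ⊓ B)) (cp_nonneg hw _) (l A) (l B) (l C) (l D) (r E)).1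
      have z := ic_ci hw C B (A ⊓ D) E
      rw [inf_comm (l C) (l B)] at z
      have b := base2 (cp_nonneg hw _) (l A) (l B) (l C) (l D) (r E) z
      have t := trade (cp_nonneg hw _) (l C) (l B) (l A) (r E) (ic_ci hw C B A E)
      have t' := mul_le_mul_of_nonneg_left t hs
      rw [c1, c2, c3, ing_l hw] at b
      rw [ing_l hw, ic_l hw, ic_l hw] at i
      rw [c1, c2, ic_l hw, ic_l hw] at t'
      have s1 : ic w B A C = ic w A B C := by
        unfold ic; simp only [inf_comm, inf_left_comm]; ring
      have s2 : ic w C B A = ic w B C A := by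
        unfold ic; simp only [inf_comm, inf_left_comm]; ring
      rw [s1, s2] at t'
      push_cast
      linarith

theorem matus_setoid (s : ℕ) (Ω : Type u) [Fintype Ω] (w : Ω → ℝ) (hw : ∀ ω, 0 ≤ w ω)
    (A B C D : Setoid Ω) :
    0 ≤ s * ing w A B C D + ic w A C B
      + (s : ℝ) * (s + 1) / 2 * (ic w B C A + ic w A B C) := by
  have := (family s Ω w hw A B C D C).1
  linarith

/-- Entropy of a function of a finite-valued random variable. -/
lemma entH_eq {Ω Γ F : Type*} [MeasurableSpace Ω] [Fintype Γ] [Fintype F]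
    (μ : Measure Ω) [IsProbabilityMeasure μ] (X : Ω → Γ)
    (hX : ∀ g, MeasurableSet (X ⁻¹' {g})) (f : Γ → F) :
    entH μ (fun ω => f (X ω)) = h (fun g => (μ (X ⁻¹' {g})).toReal) (Setoid.ker f) := by
  classical
  set w : Γ → ℝ := fun g => (μ (X ⁻¹' {g})).toReal with hw
  have hm : ∀ e, (μ ((fun ω => f (X ω)) ⁻¹' {e})).toReal = ∑ g, if f g = e then w g else 0 := by
    intro e
    have : (fun ω => f (X ω)) ⁻¹' {e} =
        ⋃ g ∈ (Finset.univ.filter fun g => f g = e), X ⁻¹' {g} := by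
      ext ω; simp
    rw [this, measure_biUnion_finset, ENNReal.toReal_sum, Finset.sum_filter]
    · intro g _; exact measure_ne_top _ _
    · intro a _ b _ hab
      refine Set.disjoint_left.2 fun ω h1 h2 => hab ?_
      simp only [Set.mem_preimage, Set.mem_singleton_iff] at h1 h2
      rw [← h1, ← h2]
    · intro g _; exact hX g
  have hmass : ∀ g, mass w (Setoid.ker f) g = (μ ((fun ω => f (X ω)) ⁻¹' {f g})).toReal := by
    intro g
    rw [hm]
    unfold mass
    refine Finset.sum_congr rfl fun a _ => ?_
    change (if f a = f g then _ else _) = _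
    congr
  unfold entH h
  simp only [hmass]
  rw [← Finset.sum_fiberwise Finset.univ f, ← Finset.sum_neg_distrib]
  refine Finset.sum_congr rfl fun e _ => ?_
  rw [Finset.sum_congr rfl (g := fun g => w g *
    Real.log (μ ((fun ω => f (X ω)) ⁻¹' {e})).toReal), ← Finset.sum_mul, Real.negMulLog]
  · nth_rw 1 [hm]
    rw [← Finset.sum_filter]
    ring
  · intro g hg
    rw [(Finset.mem_filter.1 hg).2]

lemma ker_prod {Γ F G : Type*} (f : Γ → F) (g : Γ → G) :
    Setoid.ker (fun x => (f x, g x)) = Setoid.ker f ⊓ Setoid.ker g := by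
  ext a b
  exact Prod.ext_iff

lemma mutInf_eq {Ω Γ F G : Type*} [MeasurableSpace Ω] [Fintype Γ] [Fintype F] [Fintype G]
    (μ : Measure Ω) [IsProbabilityMeasure μ] (X : Ω → Γ)
    (hX : ∀ g, MeasurableSet (X ⁻¹' {g})) (f : Γ → F) (g : Γ → G) :
    mutInf μ (fun ω => f (X ω)) (fun ω => g (X ω)) =
      im (fun a => (μ (X ⁻¹' {a})).toReal) (Setoid.ker f) (Setoid.ker g) := by
  unfold mutInf im
  rw [← ker_prod, entH_eq μ X hX f, entH_eq μ X hX g, entH_eq μ X hX (fun x => (f x, g x))]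

lemma condMutInf_eq {Ω Γ F G K : Type*} [MeasurableSpace Ω] [Fintype Γ] [Fintype F] [Fintype G]
    [Fintype K] (μ : Measure Ω) [IsProbabilityMeasure μ] (X : Ω → Γ)
    (hX : ∀ g, MeasurableSet (X ⁻¹' {g})) (f : Γ → F) (g : Γ → G) (k : Γ → K) :
    condMutInf μ (fun ω => f (X ω)) (fun ω => g (X ω)) (fun ω => k (X ω)) =
      ic (fun a => (μ (X ⁻¹' {a})).toReal) (Setoid.ker f) (Setoid.ker g) (Setoid.ker k) := by
  unfold condMutInf ic
  rw [← ker_prod, ← ker_prod, ← ker_prod, entH_eq μ X hX k, entH_eq μ X hX (fun x => (f x, k x)),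
    entH_eq μ X hX (fun x => (g x, k x)), entH_eq μ X hX (fun x => (f x, g x, k x))]

end Matus

/-- **First Matúš inequality family** for four jointly distributed finite random
variables and any natural number `s ≥ 1`. -/
theorem matus_inequality_one {Ω E1 E2 E3 E4 : Type*} [MeasurableSpace Ω]
    [Fintype E1] [Fintype E2] [Fintype E3] [Fintype E4]
    [MeasurableSpace E1] [MeasurableSingletonClass E1]
    [MeasurableSpace E2] [MeasurableSingletonClass E2]
    [MeasurableSpace E3] [MeasurableSingletonClass E3]
    [MeasurableSpace E4] [MeasurableSingletonClass E4]
    (μ : Measure Ω) [IsProbabilityMeasure μ]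
    (X1 : Ω → E1) (X2 : Ω → E2) (X3 : Ω → E3) (X4 : Ω → E4)
    (hX1 : Measurable X1) (hX2 : Measurable X2) (hX3 : Measurable X3) (hX4 : Measurable X4)
    (s : ℕ) (hs : 1 ≤ s) :
    0 ≤ (s : ℝ) * (condMutInf μ X1 X2 X3 + condMutInf μ X1 X2 X4 + mutInf μ X3 X4
          - mutInf μ X1 X2)
      + condMutInf μ X1 X3 X2
      + ((s : ℝ) * ((s : ℝ) + 1) / 2) * (condMutInf μ X2 X3 X1 + condMutInf μ X1 X2 X3) := by
  classical
  let X : Ω → E1 × E2 × E3 × E4 := fun ω => (X1 ω, X2 ω, X3 ω, X4 ω)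
  have hX : ∀ g, MeasurableSet (X ⁻¹' {g}) := by
    rintro ⟨a, b, c, d⟩
    have : X ⁻¹' {(a, b, c, d)} = X1 ⁻¹' {a} ∩ (X2 ⁻¹' {b} ∩ (X3 ⁻¹' {c} ∩ X4 ⁻¹' {d})) := by
      ext ω; simp [X]
    rw [this]
    exact (hX1 (measurableSet_singleton a)).inter ((hX2 (measurableSet_singleton b)).inter
      ((hX3 (measurableSet_singleton c)).inter (hX4 (measurableSet_singleton d))))
  let f1 : E1 × E2 × E3 × E4 → E1 := fun g => g.1
  let f2 : E1 × E2 × E3 × E4 → E2 := fun g => g.2.1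
  let f3 : E1 × E2 × E3 × E4 → E3 := fun g => g.2.2.1
  let f4 : E1 × E2 × E3 × E4 → E4 := fun g => g.2.2.2
  set w : E1 × E2 × E3 × E4 → ℝ := fun g => (μ (X ⁻¹' {g})).toReal with hw
  have m := Matus.matus_setoid s _ w (fun _ => ENNReal.toReal_nonneg)
    (Setoid.ker f1) (Setoid.ker f2) (Setoid.ker f3) (Setoid.ker f4)
  have c123 : condMutInf μ X1 X2 X3 =
      Matus.ic w (Setoid.ker f1) (Setoid.ker f2) (Setoid.ker f3) := Matus.condMutInf_eq μ X hX f1 f2 f3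
  have c124 : condMutInf μ X1 X2 X4 =
      Matus.ic w (Setoid.ker f1) (Setoid.ker f2) (Setoid.ker f4) := Matus.condMutInf_eq μ X hX f1 f2 f4
  have c132 : condMutInf μ X1 X3 X2 =
      Matus.ic w (Setoid.ker f1) (Setoid.ker f3) (Setoid.ker f2) := Matus.condMutInf_eq μ X hX f1 f3 f2
  have c231 : condMutInf μ X2 X3 X1 =
      Matus.ic w (Setoid.ker f2) (Setoid.ker f3) (Setoid.ker f1) := Matus.condMutInf_eq μ X hX f2 f3 f1
  have m34 : mutInf μ X3 X4 = Matus.im w (Setoid.ker f3) (Setoid.ker f4) :=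
    Matus.mutInf_eq μ X hX f3 f4
  have m12 : mutInf μ X1 X2 = Matus.im w (Setoid.ker f1) (Setoid.ker f2) :=
    Matus.mutInf_eq μ X hX f1 f2
  rw [c123, c124, c132, c231, m34, m12]
  exact m
end

section
/- For any four jointly distributed finite random variables X1, X2, X3, X4 and any natural number s ≥ 1, the second Matúš inequality holds: s[I(X2:X3|X1) + 2 I(X1:X2|X3) + I(X1:X2|X4) + I(X3:X4) - I(X1:X2)] + I(X1:X3|X2) + (s(s-1)/2)[I(X2:X4|X1) + I(X1:X2|X4)] ≥ 0, where I(·:·) denotes mutual information and I(·:·|·) denotes conditional mutual information. -/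
open MeasureTheory ProbabilityTheory

namespace Matus

/-- Probability weights on a finite type. -/
def IsProb {α : Type*} [Fintype α] (p : α → ℝ) : Prop := (∀ a, 0 ≤ p a) ∧ ∑ a, p a = 1

/-- Probability of agreeing with `a` on all the coordinates in `S`. -/
def pr {α : Type*} [Fintype α] (p : α → ℝ) (X : ℕ → α → ℕ) (S : Finset ℕ) (a : α) : ℝ :=
  ∑ b, if (∀ i ∈ S, X i b = X i a) then p b else 0

/-- Joint entropy of the variables in `S`. -/
noncomputable def ent {α : Type*} [Fintype α] (p : α → ℝ) (X : ℕ → α → ℕ) (S : Finset ℕ) : ℝ :=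
  -∑ a, p a * Real.log (pr p X S a)

set_option linter.unusedSectionVars false

section basic
variable {α : Type*} [Fintype α] {p : α → ℝ} (X : ℕ → α → ℕ)

theorem pr_nonneg (hp : IsProb p) (S : Finset ℕ) (a : α) : 0 ≤ pr p X S a :=
  Finset.sum_nonneg fun b _ => by split_ifs <;> simp [hp.1 b]

theorem le_pr (hp : IsProb p) (S : Finset ℕ) (a : α) : p a ≤ pr p X S a := by
  have := Finset.single_le_sum (f := fun b => if (∀ i ∈ S, X i b = X i a) then p b else 0)
    (fun b _ => by split_ifs <;> simp [hp.1 b]) (Finset.mem_univ a)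
  simpa [pr] using this

theorem pr_pos (hp : IsProb p) (S : Finset ℕ) {a : α} (h : p a ≠ 0) : 0 < pr p X S a :=
  lt_of_lt_of_le (lt_of_le_of_ne (hp.1 a) (Ne.symm h)) (le_pr X hp S a)

theorem pr_congr (p : α → ℝ) (S : Finset ℕ) {a b : α} (h : ∀ i ∈ S, X i a = X i b) :
    pr p X S a = pr p X S b := by
  unfold pr
  refine Finset.sum_congr rfl fun c _ => ?_
  have : (∀ i ∈ S, X i c = X i a) ↔ (∀ i ∈ S, X i c = X i b) :=
    forall₂_congr fun i hi => by rw [h i hi]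
  simp only [this]

theorem ent_empty (hp : IsProb p) : ent p X ∅ = 0 := by
  simp [ent, pr, hp.2]

theorem ent_reindex (p : α → ℝ) (σ : ℕ → ℕ) (S : Finset ℕ) :
    ent p (fun i => X (σ i)) S = ent p X (S.image σ) := by
  simp [ent, pr]

theorem inner_le_s2 (S T : Finset ℕ) (b c : α) :
    (∑ a, if ((∀ i ∈ S, X i b = X i a) ∧ (∀ i ∈ T, X i c = X i a)) then
      p a / pr p X (S ∪ T) a else 0) ≤ if (∀ i ∈ S ∩ T, X i c = X i b) then 1 else 0 := by
  by_cases h : ∃ a, (∀ i ∈ S, X i b = X i a) ∧ (∀ i ∈ T, X i c = X i a)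
  · obtain ⟨a₀, h1, h2⟩ := h
    have hI : ∀ i ∈ S ∩ T, X i c = X i b := fun i hi => by
      rw [Finset.mem_inter] at hi
      rw [h1 i hi.1, h2 i hi.2]
    rw [if_pos hI]
    have key : ∀ a, (if ((∀ i ∈ S, X i b = X i a) ∧ (∀ i ∈ T, X i c = X i a)) then
      p a / pr p X (S ∪ T) a else 0) =
      (if (∀ i ∈ S ∪ T, X i a = X i a₀) then p a else 0) / pr p X (S ∪ T) a₀ := by
      intro a
      have e : ((∀ i ∈ S, X i b = X i a) ∧ (∀ i ∈ T, X i c = X i a)) ↔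
          (∀ i ∈ S ∪ T, X i a = X i a₀) := by
        constructor
        · rintro ⟨u, v⟩ i hi
          rcases Finset.mem_union.1 hi with hi | hi
          · rw [← u i hi, h1 i hi]
          · rw [← v i hi, h2 i hi]
        · intro u
          exact ⟨fun i hi => by rw [h1 i hi, u i (Finset.mem_union_left _ hi)],
            fun i hi => by rw [h2 i hi, u i (Finset.mem_union_right _ hi)]⟩
      by_cases hh : ∀ i ∈ S ∪ T, X i a = X i a₀
      · rw [if_pos (e.2 hh), if_pos hh, pr_congr X p _ hh]
      · rw [if_neg (fun x => hh (e.1 x)), if_neg hh, zero_div]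
    rw [Finset.sum_congr rfl fun a _ => key a, ← Finset.sum_div]
    exact div_self_le_one _
  · push Not at h
    rw [Finset.sum_eq_zero]
    · split_ifs <;> norm_num
    · intro a _
      rw [if_neg]
      rintro ⟨u, v⟩
      obtain ⟨i, hi, hne⟩ := h a u
      exact hne (v i hi)

theorem ratio_sum_le_s2 (hp : IsProb p) (S T : Finset ℕ) :
    ∑ a, p a * (pr p X S a * pr p X T a / (pr p X (S ∪ T) a * pr p X (S ∩ T) a)) ≤ 1 := by
  have e1 : ∀ a, p a * (pr p X S a * pr p X T a / (pr p X (S ∪ T) a * pr p X (S ∩ T) a)) =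
      ∑ b, ∑ c, p b * p c / pr p X (S ∩ T) b *
        (if ((∀ i ∈ S, X i b = X i a) ∧ (∀ i ∈ T, X i c = X i a)) then
          p a / pr p X (S ∪ T) a else 0) := by
    intro a
    have : p a * (pr p X S a * pr p X T a / (pr p X (S ∪ T) a * pr p X (S ∩ T) a)) =
      (p a / pr p X (S ∪ T) a / pr p X (S ∩ T) a) * (pr p X S a * pr p X T a) := by
      rw [div_div]; ring
    rw [this]
    conv_lhs => rw [pr.eq_1 p X S, pr.eq_1 p X T, Finset.sum_mul_sum, Finset.mul_sum]
    refine Finset.sum_congr rfl fun b _ => ?_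
    rw [Finset.mul_sum]
    refine Finset.sum_congr rfl fun c _ => ?_
    by_cases h1 : ∀ i ∈ S, X i b = X i a
    · by_cases h2 : ∀ i ∈ T, X i c = X i a
      · rw [if_pos h1, if_pos h2, if_pos ⟨h1, h2⟩,
          pr_congr X p (S ∩ T) (a := b) (b := a) fun i hi => h1 i (Finset.mem_inter.1 hi).1]
        ring
      · rw [if_neg h2, if_neg (fun h : _ ∧ _ => h2 h.2)]; ring
    · rw [if_neg h1, if_neg (fun h : _ ∧ _ => h1 h.1)]; ring
  rw [Finset.sum_congr rfl fun a _ => e1 a, Finset.sum_comm]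
  calc _ = ∑ b, ∑ c, p b * p c / pr p X (S ∩ T) b * ∑ a,
        (if ((∀ i ∈ S, X i b = X i a) ∧ (∀ i ∈ T, X i c = X i a)) then
          p a / pr p X (S ∪ T) a else 0) := by
        refine Finset.sum_congr rfl fun b _ => ?_
        rw [Finset.sum_comm]
        exact Finset.sum_congr rfl fun c _ => by rw [Finset.mul_sum]
    _ ≤ ∑ b, ∑ c, p b * p c / pr p X (S ∩ T) b *
        (if (∀ i ∈ S ∩ T, X i c = X i b) then 1 else 0) := by
        refine Finset.sum_le_sum fun b _ => Finset.sum_le_sum fun c _ => ?_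
        exact mul_le_mul_of_nonneg_left (inner_le_s2 X S T b c)
          (div_nonneg (mul_nonneg (hp.1 b) (hp.1 c)) (pr_nonneg X hp _ _))
    _ = ∑ b, p b / pr p X (S ∩ T) b * pr p X (S ∩ T) b := by
        refine Finset.sum_congr rfl fun b _ => ?_
        conv_rhs => rw [pr.eq_1 p X (S ∩ T) b]
        rw [Finset.mul_sum]
        refine Finset.sum_congr rfl fun c _ => ?_
        rw [← pr.eq_1 p X (S ∩ T) b]
        split_ifs <;> ring
    _ ≤ ∑ b, p b := by
        refine Finset.sum_le_sum fun b _ => ?_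
        by_cases h : p b = 0
        · simp [h]
        · rw [div_mul_cancel₀ _ (pr_pos X hp _ h).ne']
    _ = 1 := hp.2

/-- Submodularity of entropy. -/
theorem submod_s2 (hp : IsProb p) (S T U V : Finset ℕ) (hU : S ∪ T = U) (hV : S ∩ T = V) :
    0 ≤ ent p X S + ent p X T - ent p X U - ent p X V := by
  subst hU hV
  have h := ratio_sum_le_s2 X hp S T
  have h2 : ∑ a, (p a * Real.log (pr p X S a) + p a * Real.log (pr p X T a)
      - p a * Real.log (pr p X (S ∪ T) a) - p a * Real.log (pr p X (S ∩ T) a)) ≤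
      ∑ a, (p a * (pr p X S a * pr p X T a / (pr p X (S ∪ T) a * pr p X (S ∩ T) a)) - p a) := by
    refine Finset.sum_le_sum fun a _ => ?_
    by_cases ha : p a = 0
    · simp [ha]
    · have a1 := pr_pos X hp S ha
      have a2 := pr_pos X hp T ha
      have a3 := pr_pos X hp (S ∪ T) ha
      have a4 := pr_pos X hp (S ∩ T) ha
      have := Real.log_le_sub_one_of_pos (div_pos (mul_pos a1 a2) (mul_pos a3 a4))
      rw [Real.log_div (mul_pos a1 a2).ne' (mul_pos a3 a4).ne', Real.log_mul a1.ne' a2.ne',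
        Real.log_mul a3.ne' a4.ne'] at this
      have := mul_le_mul_of_nonneg_left this (hp.1 a)
      linarith
  simp only [Finset.sum_sub_distrib, Finset.sum_add_distrib, hp.2] at h2
  unfold ent
  linarith

end basic

section copy
variable {α : Type*} [Fintype α] {p : α → ℝ} (X : ℕ → α → ℕ)

/-- Two copies of `p`, glued along the coordinates in `B`. -/
noncomputable def cop (p : α → ℝ) (X : ℕ → α → ℕ) (B : Finset ℕ) (z : α × α) : ℝ :=
  if (∀ i ∈ B, X i z.2 = X i z.1) then p z.1 * p z.2 / pr p X B z.1 else 0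

theorem cop_fst (hp : IsProb p) (B : Finset ℕ) (a : α) : ∑ b, cop p X B (a, b) = p a := by
  by_cases h : p a = 0
  · rw [h]; exact Finset.sum_eq_zero fun b _ => by simp [cop, h]
  · have : ∀ b, cop p X B (a, b) =
        p a / pr p X B a * (if (∀ i ∈ B, X i b = X i a) then p b else 0) := fun b => by
      simp only [cop]; split_ifs <;> ring
    rw [Finset.sum_congr rfl fun b _ => this b, ← Finset.mul_sum]
    exact div_mul_cancel₀ _ (pr_pos X hp B h).ne'

theorem cop_symm (p : α → ℝ) (B : Finset ℕ) (a b : α) : cop p X B (a, b) = cop p X B (b, a) := by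
  simp only [cop]
  by_cases h : ∀ i ∈ B, X i b = X i a
  · rw [if_pos h, if_pos (fun i hi => (h i hi).symm), pr_congr X p B h]; ring
  · rw [if_neg h, if_neg (fun h' => h fun i hi => (h' i hi).symm)]

theorem cop_snd (hp : IsProb p) (B : Finset ℕ) (b : α) : ∑ a, cop p X B (a, b) = p b := by
  rw [Finset.sum_congr rfl fun a _ => cop_symm X p B a b]; exact cop_fst X hp B b

theorem cop_sum_fst (hp : IsProb p) (B : Finset ℕ) (F : α → ℝ) :
    ∑ z : α × α, cop p X B z * F z.1 = ∑ a, p a * F a := by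
  rw [Fintype.sum_prod_type]
  refine Finset.sum_congr rfl fun a _ => ?_
  dsimp only
  rw [← Finset.sum_mul, cop_fst X hp]

theorem cop_sum_snd (hp : IsProb p) (B : Finset ℕ) (F : α → ℝ) :
    ∑ z : α × α, cop p X B z * F z.2 = ∑ a, p a * F a := by
  rw [Fintype.sum_prod_type, Finset.sum_comm]
  refine Finset.sum_congr rfl fun a _ => ?_
  dsimp only
  rw [← Finset.sum_mul, cop_snd X hp]

theorem cop_prob (hp : IsProb p) (B : Finset ℕ) : IsProb (cop p X B) := by
  constructor
  · intro z
    unfold cop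
    split_ifs
    · exact div_nonneg (mul_nonneg (hp.1 _) (hp.1 _)) (pr_nonneg X hp _ _)
    · exact le_rfl
  · have := cop_sum_fst X hp B (fun _ => 1)
    simpa [hp.2] using this

theorem cop_supp (p : α → ℝ) (B : Finset ℕ) {z : α × α} (h : cop p X B z ≠ 0) :
    (∀ i ∈ B, X i z.2 = X i z.1) ∧ p z.1 ≠ 0 ∧ p z.2 ≠ 0 := by
  unfold cop at h
  split_ifs at h with h1
  · refine ⟨h1, fun h0 => h (by simp [h0]), fun h0 => h (by simp [h0])⟩
  · exact absurd rfl h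

/-- The variables on the glued space: `k` is the copy of `src`. -/
def copX (X : ℕ → α → ℕ) (k src : ℕ) (i : ℕ) (z : α × α) : ℕ :=
  if i = k then X src z.2 else X i z.1

theorem copX_ne {k src i : ℕ} (h : i ≠ k) (z : α × α) : copX X k src i z = X i z.1 := if_neg h
theorem copX_eq {k src : ℕ} (z : α × α) : copX X k src k z = X src z.2 := if_pos rfl

theorem cop_ent_fst (hp : IsProb p) (B S : Finset ℕ) (k src : ℕ) (hk : k ∉ S) :
    ent (cop p X B) (copX X k src) S = ent p X S := by
  have hne : ∀ i ∈ S, i ≠ k := fun i hi h => hk (h ▸ hi)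
  have e : ∀ z : α × α, pr (cop p X B) (copX X k src) S z = pr p X S z.1 := by
    intro z
    have := cop_sum_fst X hp B (fun a => if (∀ i ∈ S, X i a = X i z.1) then 1 else 0)
    simp only [mul_ite, mul_one, mul_zero] at this
    unfold pr
    rw [← this]
    refine Finset.sum_congr rfl fun w _ => ?_
    have : (∀ i ∈ S, copX X k src i w = copX X k src i z) ↔ (∀ i ∈ S, X i w.1 = X i z.1) :=
      forall₂_congr fun i hi => by rw [copX_ne X (hne i hi), copX_ne X (hne i hi)]
    simp only [this]
  unfold ent
  rw [Finset.sum_congr rfl fun z _ => by rw [e z]]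
  rw [cop_sum_fst X hp B (fun a => Real.log (pr p X S a))]

theorem cop_ent_snd (hp : IsProb p) (B T : Finset ℕ) (k src : ℕ) (hk : k ∉ T) (hT : T ⊆ B) :
    ent (cop p X B) (copX X k src) (insert k T) = ent p X (insert src T) := by
  have hne : ∀ i ∈ T, i ≠ k := fun i hi h => hk (h ▸ hi)
  have e : ∀ z : α × α, cop p X B z ≠ 0 →
      pr (cop p X B) (copX X k src) (insert k T) z = pr p X (insert src T) z.2 := by
    intro z hz
    have hz' := (cop_supp X p B hz).1
    have := cop_sum_snd X hp B (fun a => if (∀ i ∈ insert src T, X i a = X i z.2) then 1 else 0)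
    simp only [mul_ite, mul_one, mul_zero] at this
    unfold pr
    rw [← this]
    refine Finset.sum_congr rfl fun w _ => ?_
    by_cases hw : cop p X B w = 0
    · simp [hw]
    · have hw' := (cop_supp X p B hw).1
      have : (∀ i ∈ insert k T, copX X k src i w = copX X k src i z) ↔
          (∀ i ∈ insert src T, X i w.2 = X i z.2) := by
        rw [Finset.forall_mem_insert, Finset.forall_mem_insert, copX_eq, copX_eq]
        refine and_congr Iff.rfl (forall₂_congr fun i hi => ?_)
        rw [copX_ne X (hne i hi), copX_ne X (hne i hi), hz' i (hT hi), hw' i (hT hi)]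
      simp only [this]
  have e2 : ∀ z : α × α, cop p X B z * Real.log (pr (cop p X B) (copX X k src) (insert k T) z)
      = cop p X B z * Real.log (pr p X (insert src T) z.2) := by
    intro z
    by_cases hz : cop p X B z = 0
    · simp [hz]
    · rw [e z hz]
  unfold ent
  rw [Finset.sum_congr rfl fun z _ => e2 z]
  rw [cop_sum_snd X hp B (fun a => Real.log (pr p X (insert src T) a))]

theorem cop_ent_indep (hp : IsProb p) (B S : Finset ℕ) (k src : ℕ) (hk : k ∉ S) (hS : B ⊆ S) :
    ent (cop p X B) (copX X k src) (insert k S) =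
      ent p X S + ent p X (insert src B) - ent p X B := by
  have hne : ∀ i ∈ S, i ≠ k := fun i hi h => hk (h ▸ hi)
  have e : ∀ z : α × α, cop p X B z ≠ 0 →
      pr (cop p X B) (copX X k src) (insert k S) z =
        pr p X S z.1 * pr p X (insert src B) z.2 / pr p X B z.1 := by
    intro z hz
    have hz' := (cop_supp X p B hz).1
    rw [pr.eq_1 (cop p X B), pr.eq_1 p X S, pr.eq_1 p X (insert src B), Finset.sum_mul_sum,
      Fintype.sum_prod_type, Finset.sum_div]
    refine Finset.sum_congr rfl fun a _ => ?_
    rw [Finset.sum_div]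
    refine Finset.sum_congr rfl fun b _ => ?_
    have : (∀ i ∈ insert k S, copX X k src i (a, b) = copX X k src i z) ↔
          (X src b = X src z.2 ∧ ∀ i ∈ S, X i a = X i z.1) := by
        rw [Finset.forall_mem_insert, copX_eq, copX_eq]
        refine and_congr Iff.rfl (forall₂_congr fun i hi => ?_)
        rw [copX_ne X (hne i hi), copX_ne X (hne i hi)]
    simp only [this]
    by_cases h1 : ∀ i ∈ S, X i a = X i z.1
    · have h1B : ∀ i ∈ B, X i a = X i z.1 := fun i hi => h1 i (hS hi)
      rw [if_pos h1]
      unfold cop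
      dsimp only
      rw [pr_congr X p B h1B]
      have : (∀ i ∈ insert src B, X i b = X i z.2) ↔
          (X src b = X src z.2 ∧ ∀ i ∈ B, X i b = X i a) := by
        rw [Finset.forall_mem_insert]
        refine and_congr Iff.rfl (forall₂_congr fun i hi => ?_)
        rw [hz' i hi, h1B i hi]
      simp only [this]
      by_cases h2 : X src b = X src z.2
      · by_cases h3 : ∀ i ∈ B, X i b = X i a
        · rw [if_pos ⟨h2, h1⟩, if_pos h3, if_pos ⟨h2, h3⟩]
        · rw [if_pos ⟨h2, h1⟩, if_neg h3, if_neg (fun h => h3 h.2)]; simp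
      · rw [if_neg (fun h => h2 h.1), if_neg (fun h => h2 h.1)]; simp
    · rw [if_neg h1, if_neg (fun h => h1 h.2)]; simp
  have e2 : ∀ z : α × α, cop p X B z * Real.log (pr (cop p X B) (copX X k src) (insert k S) z)
      = cop p X B z * Real.log (pr p X S z.1)
        + cop p X B z * Real.log (pr p X (insert src B) z.2)
        - cop p X B z * Real.log (pr p X B z.1) := by
    intro z
    by_cases hz : cop p X B z = 0
    · simp [hz]
    · obtain ⟨-, h1, h2⟩ := cop_supp X p B hz
      rw [e z hz, Real.log_div (mul_pos (pr_pos X hp _ h1) (pr_pos X hp _ h2)).ne'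
        (pr_pos X hp _ h1).ne', Real.log_mul (pr_pos X hp _ h1).ne' (pr_pos X hp _ h2).ne']
      ring
  unfold ent
  rw [Finset.sum_congr rfl fun z _ => e2 z, Finset.sum_sub_distrib, Finset.sum_add_distrib]
  rw [cop_sum_snd X hp B (fun a => Real.log (pr p X (insert src B) a)),
    cop_sum_fst X hp B (fun a => Real.log (pr p X S a)),
    cop_sum_fst X hp B (fun a => Real.log (pr p X B a))]
  ring

end copy

universe u

/-- Five-variable Matus functional of a set function `h`. -/
noncomputable def Q (h : Finset ℕ → ℝ) (n : ℝ) : ℝ :=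
  n * ((h {0, 2} + h {1, 2} - h {0, 1, 2} - h {2}) + (h {0, 3} + h {1, 3} - h {0, 1, 3} - h {3})
    + (h {2} + h {3} - h {2, 3}) - (h {0} + h {1} - h {0, 1})
    + (h {0, 1} + h {0, 4} - h {0, 1, 4} - h {0}) + (h {0, 4} + h {1, 4} - h {0, 1, 4} - h {4}))
  + (h {0, 1} + h {1, 4} - h {0, 1, 4} - h {1})
  + n * (n - 1) / 2 * ((h {0, 1} + h {0, 3} - h {0, 1, 3} - h {0}) + (h {0, 3} + h {1, 3} - h {0, 1, 3} - h {3}))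

theorem Q_zero {α : Type*} [Fintype α] {p : α → ℝ} (hp : IsProb p) (X : ℕ → α → ℕ) :
    0 ≤ Q (ent p X) 0 := by
  have h0 := submod_s2 X hp {0, 1} {1, 4} {0, 1, 4} {1} (by decide) (by decide)
  unfold Q
  linarith

/-- Making the fifth variable conditionally independent of the third and fourth. -/
theorem reduce {α : Type*} [Fintype α] {p : α → ℝ} (hp : IsProb p) (X : ℕ → α → ℕ) :
    ∃ (q : α × α → ℝ) (Y : ℕ → α × α → ℕ), IsProb q ∧ (∀ n, Q (ent q Y) n = Q (ent p X) n) ∧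
      ent q Y {0, 1, 2, 3, 4} = ent q Y {0, 1, 2, 3} + ent q Y {0, 1, 4} - ent q Y {0, 1} := by
  refine ⟨cop p X {0, 1}, copX X 4 4, cop_prob X hp _, ?_, ?_⟩
  all_goals
    have hq := cop_prob X hp {0, 1}
    have f := fun S hS => cop_ent_fst X hp {0, 1} S 4 4 hS
    have g := fun T hk hT => cop_ent_snd X hp {0, 1} T 4 4 hk hT
    have c := cop_ent_indep X hp {0, 1} {0, 1, 2, 3} 4 4 (by decide) (by decide)
    generalize cop p X {0, 1} = q at *
    generalize copX X 4 4 = Y at *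
    have f0 := f {0, 2} (by decide)
    have f1 := f {1, 2} (by decide)
    have f2 := f {0, 1, 2} (by decide)
    have f3 := f {2} (by decide)
    have f4 := f {0, 3} (by decide)
    have f5 := f {1, 3} (by decide)
    have f6 := f {0, 1, 3} (by decide)
    have f7 := f {3} (by decide)
    have f8 := f {2, 3} (by decide)
    have f9 := f {0} (by decide)
    have f10 := f {1} (by decide)
    have f11 := f {0, 1} (by decide)
    have f20 := f {0, 1, 2, 3} (by decide)
    have g0 : ent q Y {0, 4} = ent p X {0, 4} := by
      have := g {0} (by decide) (by decide)
      rwa [show (insert 4 {0} : Finset ℕ) = {0, 4} by decide] at this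
    have g1 : ent q Y {1, 4} = ent p X {1, 4} := by
      have := g {1} (by decide) (by decide)
      rwa [show (insert 4 {1} : Finset ℕ) = {1, 4} by decide] at this
    have g2 : ent q Y {0, 1, 4} = ent p X {0, 1, 4} := by
      have := g {0, 1} (by decide) (by decide)
      rwa [show (insert 4 {0, 1} : Finset ℕ) = {0, 1, 4} by decide] at this
    have g3 : ent q Y {4} = ent p X {4} := by
      have := g ∅ (by decide) (by decide)
      rwa [show (insert 4 ∅ : Finset ℕ) = {4} by decide] at this
    rw [show (insert 4 {0, 1, 2, 3} : Finset ℕ) = {0, 1, 2, 3, 4} by decide,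
      show (insert 4 {0, 1} : Finset ℕ) = {0, 1, 4} by decide] at c
  · intro n
    unfold Q
    rw [f0, f1, f2, f3, f4, f5, f6, f7, f8, f9, f10, f11, g0, g1, g2, g3]
  · rw [c, f20, f11, g2]

theorem Q_one_aux {α : Type*} [Fintype α] {q : α → ℝ} (hq : IsProb q) (Y : ℕ → α → ℕ)
    (c : ent q Y {0, 1, 2, 3, 4} = ent q Y {0, 1, 2, 3} + ent q Y {0, 1, 4} - ent q Y {0, 1}) :
    0 ≤ Q (ent q Y) 1 := by
  have e := ent_empty Y hq
  have h0 := submod_s2 Y hq {0, 2, 4} {1, 2, 4} {0, 1, 2, 4} {2, 4} (by decide) (by decide)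
  have h1 := submod_s2 Y hq {0, 3, 4} {1, 3, 4} {0, 1, 3, 4} {3, 4} (by decide) (by decide)
  have h2 := submod_s2 Y hq {0, 1, 2, 3} {1, 2, 3, 4} {0, 1, 2, 3, 4} {1, 2, 3} (by decide) (by decide)
  have h3 := submod_s2 Y hq {1, 2, 3} {2, 3, 4} {1, 2, 3, 4} {2, 3} (by decide) (by decide)
  have h4 := submod_s2 Y hq {2, 4} {3, 4} {2, 3, 4} {4} (by decide) (by decide)
  have h5 := submod_s2 Y hq {0, 2} {0, 4} {0, 2, 4} {0} (by decide) (by decide)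
  have h6 := submod_s2 Y hq {1, 2} {1, 4} {1, 2, 4} {1} (by decide) (by decide)
  have h7 := submod_s2 Y hq {0, 1, 2, 3} {0, 1, 3, 4} {0, 1, 2, 3, 4} {0, 1, 3} (by decide) (by decide)
  have h8 := submod_s2 Y hq {0, 3} {0, 4} {0, 3, 4} {0} (by decide) (by decide)
  have h9 := submod_s2 Y hq {1, 3} {1, 4} {1, 3, 4} {1} (by decide) (by decide)
  have h10 := submod_s2 Y hq {0, 1, 2, 3} {0, 1, 2, 4} {0, 1, 2, 3, 4} {0, 1, 2} (by decide) (by decide)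
  have h11 := submod_s2 Y hq {0, 1, 2} {0, 1, 4} {0, 1, 2, 4} {0, 1} (by decide) (by decide)
  have h12 := submod_s2 Y hq {0, 1, 3} {0, 1, 4} {0, 1, 3, 4} {0, 1} (by decide) (by decide)
  unfold Q
  linarith

theorem Q_one {α : Type*} [Fintype α] {p : α → ℝ} (hp : IsProb p) (X : ℕ → α → ℕ) :
    0 ≤ Q (ent p X) 1 := by
  obtain ⟨q, Y, hq, h1, h2⟩ := reduce hp X
  rw [← h1]
  exact Q_one_aux hq Y h2

/-- The six-variable Shannon-type inequalities behind the induction step. -/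
theorem step_aux {α : Type*} [Fintype α] {q : α → ℝ} (hq : IsProb q) (Z : ℕ → α → ℕ)
    (c : ent q Z {0, 1, 2, 3, 4} = ent q Z {0, 1, 2, 3} + ent q Z {0, 1, 4} - ent q Z {0, 1})
    (d : ent q Z {0, 1, 2, 3, 5} = ent q Z {0, 1, 2, 3} + ent q Z {1, 3, 5} - ent q Z {1, 3})
    (d0 : ent q Z {5} = ent q Z {4})
    (d1 : ent q Z {1, 5} = ent q Z {1, 4})
    (d2 : ent q Z {3, 5} = ent q Z {3, 4})
    (d3 : ent q Z {1, 3, 5} = ent q Z {1, 3, 4}) :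
    0 ≤ 2 * ((ent q Z {0, 2} + ent q Z {1, 2} - ent q Z {0, 1, 2} - ent q Z {2}) + (ent q Z {0, 3} + ent q Z {1, 3} - ent q Z {0, 1, 3} - ent q Z {3})
      + (ent q Z {2} + ent q Z {3} - ent q Z {2, 3}) - (ent q Z {0} + ent q Z {1} - ent q Z {0, 1}))
      + 2 * ((ent q Z {0, 1} + ent q Z {0, 4} - ent q Z {0, 1, 4} - ent q Z {0}) + (ent q Z {0, 4} + ent q Z {1, 4} - ent q Z {0, 1, 4} - ent q Z {4}))
      + (ent q Z {0, 1} + ent q Z {1, 4} - ent q Z {0, 1, 4} - ent q Z {1}) - (ent q Z {0, 1} + ent q Z {1, 5} - ent q Z {0, 1, 5} - ent q Z {1})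
      + ((ent q Z {0, 1} + ent q Z {0, 3} - ent q Z {0, 1, 3} - ent q Z {0}) + (ent q Z {0, 3} + ent q Z {1, 3} - ent q Z {0, 1, 3} - ent q Z {3})) ∧
    0 ≤ ((ent q Z {0, 1} + ent q Z {0, 4} - ent q Z {0, 1, 4} - ent q Z {0}) + (ent q Z {0, 4} + ent q Z {1, 4} - ent q Z {0, 1, 4} - ent q Z {4}))
      - ((ent q Z {0, 1} + ent q Z {0, 5} - ent q Z {0, 1, 5} - ent q Z {0}) + (ent q Z {0, 5} + ent q Z {1, 5} - ent q Z {0, 1, 5} - ent q Z {5}))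
      + 2 * ((ent q Z {0, 1} + ent q Z {0, 3} - ent q Z {0, 1, 3} - ent q Z {0}) + (ent q Z {0, 3} + ent q Z {1, 3} - ent q Z {0, 1, 3} - ent q Z {3})) := by
  have e := ent_empty Z hq
  have h0 := submod_s2 Z hq {0, 2, 4} {1, 2, 4} {0, 1, 2, 4} {2, 4} (by decide) (by decide)
  have h1 := submod_s2 Z hq {0, 3, 4} {1, 3, 4} {0, 1, 3, 4} {3, 4} (by decide) (by decide)
  have h2 := submod_s2 Z hq {0, 1, 2, 3} {1, 2, 3, 4} {0, 1, 2, 3, 4} {1, 2, 3} (by decide) (by decide)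
  have h3 := submod_s2 Z hq {1, 2, 3} {2, 3, 4} {1, 2, 3, 4} {2, 3} (by decide) (by decide)
  have h4 := submod_s2 Z hq {2, 4} {3, 4} {2, 3, 4} {4} (by decide) (by decide)
  have h5 := submod_s2 Z hq {0, 2} {0, 4} {0, 2, 4} {0} (by decide) (by decide)
  have h6 := submod_s2 Z hq {1, 2} {1, 4} {1, 2, 4} {1} (by decide) (by decide)
  have h7 := submod_s2 Z hq {0, 1, 2, 3} {0, 1, 3, 4} {0, 1, 2, 3, 4} {0, 1, 3} (by decide) (by decide)
  have h8 := submod_s2 Z hq {0, 3} {0, 4} {0, 3, 4} {0} (by decide) (by decide)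
  have h9 := submod_s2 Z hq {1, 3} {1, 4} {1, 3, 4} {1} (by decide) (by decide)
  have h10 := submod_s2 Z hq {0, 1, 2, 3} {0, 1, 2, 4} {0, 1, 2, 3, 4} {0, 1, 2} (by decide) (by decide)
  have h11 := submod_s2 Z hq {0, 1, 2} {0, 1, 4} {0, 1, 2, 4} {0, 1} (by decide) (by decide)
  have h12 := submod_s2 Z hq {0, 1, 3} {0, 1, 4} {0, 1, 3, 4} {0, 1} (by decide) (by decide)
  have h13 := submod_s2 Z hq {0, 2, 5} {1, 2, 5} {0, 1, 2, 5} {2, 5} (by decide) (by decide)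
  have h14 := submod_s2 Z hq {0, 3, 5} {1, 3, 5} {0, 1, 3, 5} {3, 5} (by decide) (by decide)
  have h15 := submod_s2 Z hq {0, 1, 2, 3} {1, 2, 3, 5} {0, 1, 2, 3, 5} {1, 2, 3} (by decide) (by decide)
  have h16 := submod_s2 Z hq {1, 2, 3} {2, 3, 5} {1, 2, 3, 5} {2, 3} (by decide) (by decide)
  have h17 := submod_s2 Z hq {2, 5} {3, 5} {2, 3, 5} {5} (by decide) (by decide)
  have h18 := submod_s2 Z hq {0, 2} {0, 5} {0, 2, 5} {0} (by decide) (by decide)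
  have h19 := submod_s2 Z hq {1, 2} {1, 5} {1, 2, 5} {1} (by decide) (by decide)
  have h20 := submod_s2 Z hq {0, 1, 2, 3} {0, 1, 3, 5} {0, 1, 2, 3, 5} {0, 1, 3} (by decide) (by decide)
  have h21 := submod_s2 Z hq {0, 3} {0, 5} {0, 3, 5} {0} (by decide) (by decide)
  have h22 := submod_s2 Z hq {1, 3} {1, 5} {1, 3, 5} {1} (by decide) (by decide)
  have h23 := submod_s2 Z hq {0, 1, 2, 3} {0, 1, 2, 5} {0, 1, 2, 3, 5} {0, 1, 2} (by decide) (by decide)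
  have h24 := submod_s2 Z hq {0, 1, 2} {0, 1, 5} {0, 1, 2, 5} {0, 1} (by decide) (by decide)
  have h25 := submod_s2 Z hq {0, 1, 3} {0, 1, 5} {0, 1, 3, 5} {0, 1} (by decide) (by decide)
  have h26 := submod_s2 Z hq {0, 3} {3, 5} {0, 3, 5} {3} (by decide) (by decide)
  have h27 := submod_s2 Z hq {0, 1, 5} {0, 3, 5} {0, 1, 3, 5} {0, 5} (by decide) (by decide)
  have h28 := submod_s2 Z hq {0, 1, 3} {1, 3, 5} {0, 1, 3, 5} {1, 3} (by decide) (by decide)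
  have h29 := submod_s2 Z hq {1, 2, 3} {1, 3, 5} {1, 2, 3, 5} {1, 3} (by decide) (by decide)
  have h30 := submod_s2 Z hq {0, 1, 2, 3} {1, 2, 3, 5} {0, 1, 2, 3, 5} {1, 2, 3} (by decide) (by decide)
  constructor <;> linarith

/-- Induction step. -/
theorem step {α : Type*} [Fintype α] {p : α → ℝ} (hp : IsProb p) (X : ℕ → α → ℕ) (n : ℕ)
    (ih : ∀ (q : (α × α) × (α × α) → ℝ) (Y : ℕ → (α × α) × (α × α) → ℕ), IsProb q →
      0 ≤ Q (ent q Y) n) :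
    0 ≤ Q (ent p X) ((n : ℝ) + 2) := by
  obtain ⟨r, Y, hr, h1, h2⟩ := reduce hp X
  rw [← h1]
  clear h1
  have hq := cop_prob Y hr {1, 3}
  have f := fun S hS => cop_ent_fst Y hr {1, 3} S 5 4 hS
  have g := fun T hk hT => cop_ent_snd Y hr {1, 3} T 5 4 hk hT
  have c := cop_ent_indep Y hr {1, 3} {0, 1, 2, 3} 5 4 (by decide) (by decide)
  have ih' := ih (cop r Y {1, 3}) (fun i => copX Y 5 4 (if i = 4 then 5 else i)) hq
  have rl := fun S => ent_reindex (copX Y 5 4) (cop r Y {1, 3}) (fun i => if i = 4 then 5 else i) S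
  generalize cop r Y {1, 3} = q at *
  generalize copX Y 5 4 = Z at *
  have f0 := f {0, 2} (by decide)
  have f1 := f {1, 2} (by decide)
  have f2 := f {0, 1, 2} (by decide)
  have f3 := f {2} (by decide)
  have f4 := f {0, 3} (by decide)
  have f5 := f {1, 3} (by decide)
  have f6 := f {0, 1, 3} (by decide)
  have f7 := f {3} (by decide)
  have f8 := f {2, 3} (by decide)
  have f9 := f {0} (by decide)
  have f10 := f {1} (by decide)
  have f11 := f {0, 1} (by decide)
  have f12 := f {0, 4} (by decide)
  have f13 := f {1, 4} (by decide)
  have f14 := f {0, 1, 4} (by decide)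
  have f15 := f {4} (by decide)
  have f16 := f {0, 1, 2, 3} (by decide)
  have f17 := f {0, 1, 2, 3, 4} (by decide)
  have f18 := f {3, 4} (by decide)
  have f19 := f {1, 3, 4} (by decide)
  have g0 : ent q Z {5} = ent r Y {4} := by
    have := g ∅ (by decide) (by decide)
    rwa [show (insert 5 ∅ : Finset ℕ) = {5} by decide,
      show (insert 4 ∅ : Finset ℕ) = {4} by decide] at this
  have g1 : ent q Z {1, 5} = ent r Y {1, 4} := by
    have := g {1} (by decide) (by decide)
    rwa [show (insert 5 {1} : Finset ℕ) = {1, 5} by decide,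
      show (insert 4 {1} : Finset ℕ) = {1, 4} by decide] at this
  have g2 : ent q Z {3, 5} = ent r Y {3, 4} := by
    have := g {3} (by decide) (by decide)
    rwa [show (insert 5 {3} : Finset ℕ) = {3, 5} by decide,
      show (insert 4 {3} : Finset ℕ) = {3, 4} by decide] at this
  have g3 : ent q Z {1, 3, 5} = ent r Y {1, 3, 4} := by
    have := g {1, 3} (by decide) (by decide)
    rwa [show (insert 5 {1, 3} : Finset ℕ) = {1, 3, 5} by decide,
      show (insert 4 {1, 3} : Finset ℕ) = {1, 3, 4} by decide] at this
  rw [show (insert 5 {0, 1, 2, 3} : Finset ℕ) = {0, 1, 2, 3, 5} by decide,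
    show (insert 4 {1, 3} : Finset ℕ) = {1, 3, 4} by decide] at c
  obtain ⟨s1, s2⟩ := step_aux hq Z (by rw [f17, f16, f14, f11]; exact h2)
    (by rw [c, f16, g3, f5]) (by rw [g0, f15]) (by rw [g1, f13]) (by rw [g2, f18])
    (by rw [g3, f19])
  have r0 : ent q (fun i => Z (if i = 4 then 5 else i)) {0, 2} = ent q Z {0, 2} := by
    rw [rl]; congr 1
  have r1 : ent q (fun i => Z (if i = 4 then 5 else i)) {1, 2} = ent q Z {1, 2} := by
    rw [rl]; congr 1
  have r2 : ent q (fun i => Z (if i = 4 then 5 else i)) {0, 1, 2} = ent q Z {0, 1, 2} := by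
    rw [rl]; congr 1
  have r3 : ent q (fun i => Z (if i = 4 then 5 else i)) {2} = ent q Z {2} := by
    rw [rl]; congr 1
  have r4 : ent q (fun i => Z (if i = 4 then 5 else i)) {0, 3} = ent q Z {0, 3} := by
    rw [rl]; congr 1
  have r5 : ent q (fun i => Z (if i = 4 then 5 else i)) {1, 3} = ent q Z {1, 3} := by
    rw [rl]; congr 1
  have r6 : ent q (fun i => Z (if i = 4 then 5 else i)) {0, 1, 3} = ent q Z {0, 1, 3} := by
    rw [rl]; congr 1
  have r7 : ent q (fun i => Z (if i = 4 then 5 else i)) {3} = ent q Z {3} := by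
    rw [rl]; congr 1
  have r8 : ent q (fun i => Z (if i = 4 then 5 else i)) {2, 3} = ent q Z {2, 3} := by
    rw [rl]; congr 1
  have r9 : ent q (fun i => Z (if i = 4 then 5 else i)) {0} = ent q Z {0} := by
    rw [rl]; congr 1
  have r10 : ent q (fun i => Z (if i = 4 then 5 else i)) {1} = ent q Z {1} := by
    rw [rl]; congr 1
  have r11 : ent q (fun i => Z (if i = 4 then 5 else i)) {0, 1} = ent q Z {0, 1} := by
    rw [rl]; congr 1
  have r12 : ent q (fun i => Z (if i = 4 then 5 else i)) {0, 4} = ent q Z {0, 5} := by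
    rw [rl]; congr 1
  have r13 : ent q (fun i => Z (if i = 4 then 5 else i)) {1, 4} = ent q Z {1, 5} := by
    rw [rl]; congr 1
  have r14 : ent q (fun i => Z (if i = 4 then 5 else i)) {0, 1, 4} = ent q Z {0, 1, 5} := by
    rw [rl]; congr 1
  have r15 : ent q (fun i => Z (if i = 4 then 5 else i)) {4} = ent q Z {5} := by
    rw [rl]; congr 1
  unfold Q at ih' ⊢
  rw [r0, r1, r2, r3, r4, r5, r6, r7, r8, r9, r10, r11, r12, r13, r14, r15] at ih'
  rw [← f0, ← f1, ← f2, ← f3, ← f4, ← f5, ← f6, ← f7, ← f8, ← f9, ← f10, ← f11, ← f12, ← f13, ← f14, ← f15]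
  have s3 := mul_nonneg (Nat.cast_nonneg (α := ℝ) n) s2
  linarith

theorem Q_nonneg (n : ℕ) : ∀ {α : Type u} [Fintype α] (p : α → ℝ) (X : ℕ → α → ℕ),
    IsProb p → 0 ≤ Q (ent p X) n := by
  induction n using Nat.strong_induction_on with
  | _ n ih =>
    intro α _ p X hp
    match n, ih with
    | 0, _ => simpa using Q_zero hp X
    | 1, _ => simpa using Q_one hp X
    | n + 2, ih =>
      have := step hp X n (fun q Y hq => ih n (by omega) q Y hq)
      push_cast
      exact this

theorem link_ent {Ω α β : Type*} [MeasurableSpace Ω] [Fintype α] [Fintype β]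
    [MeasurableSpace α] [MeasurableSingletonClass α]
    (μ : Measure Ω) [IsProbabilityMeasure μ] (W : Ω → α) (hW : Measurable W) (g : α → β)
    (X : ℕ → α → ℕ) (S : Finset ℕ)
    (hg : ∀ a b, (∀ i ∈ S, X i b = X i a) ↔ g b = g a) :
    entH μ (fun ω => g (W ω)) = ent (fun a => (μ (W ⁻¹' {a})).toReal) X S := by
  classical
  have h1 : ∀ e : β, (μ ((fun ω => g (W ω)) ⁻¹' {e})).toReal =
      ∑ a, if g a = e then (μ (W ⁻¹' {a})).toReal else 0 := by
    intro e
    have : (fun ω => g (W ω)) ⁻¹' {e} =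
        W ⁻¹' ((Finset.univ.filter fun a => g a = e : Finset α) : Set α) := by
      ext ω; simp
    rw [this, ← sum_measure_preimage_singleton _
      (fun a _ => hW (measurableSet_singleton a)),
      ENNReal.toReal_sum (fun a _ => measure_ne_top _ _), Finset.sum_filter]
  have h2 : ∀ a, pr (fun a => (μ (W ⁻¹' {a})).toReal) X S a =
      (μ ((fun ω => g (W ω)) ⁻¹' {g a})).toReal := by
    intro a
    rw [h1]
    unfold pr
    refine Finset.sum_congr rfl fun b _ => ?_
    simp only [hg a b]
  unfold entH ent
  simp only [h2]
  rw [← Finset.sum_fiberwise (s := Finset.univ) (g := g), ← Finset.sum_neg_distrib]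
  refine Finset.sum_congr rfl fun e _ => ?_
  rw [Finset.sum_congr rfl (g := fun a => (μ (W ⁻¹' {a})).toReal *
    Real.log (μ ((fun ω => g (W ω)) ⁻¹' {e})).toReal), ← Finset.sum_mul, Finset.sum_filter,
    ← h1, Real.negMulLog]
  · ring
  · intro a ha
    rw [(Finset.mem_filter.1 ha).2]

theorem link_prob {Ω α : Type*} [MeasurableSpace Ω] [Fintype α]
    [MeasurableSpace α] [MeasurableSingletonClass α]
    (μ : Measure Ω) [IsProbabilityMeasure μ] (W : Ω → α) (hW : Measurable W) :
    IsProb (fun a => (μ (W ⁻¹' {a})).toReal) := by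
  refine ⟨fun a => ENNReal.toReal_nonneg, ?_⟩
  rw [← ENNReal.toReal_sum (fun a _ => measure_ne_top _ _),
    sum_measure_preimage_singleton _ (fun a _ => hW (measurableSet_singleton a))]
  simp

/-- A numerical code for the elements of a finite type. -/
noncomputable def code {E : Type*} [Fintype E] (e : E) : ℕ := (Fintype.equivFin E e : ℕ)

theorem code_inj {E : Type*} [Fintype E] {a b : E} : code a = code b ↔ a = b := by
  simp [code, Fin.val_inj]

/-- The coordinates on the product space; the fifth one repeats the third. -/
noncomputable def coord {E1 E2 E3 E4 : Type*} [Fintype E1] [Fintype E2] [Fintype E3] [Fintype E4]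
    (i : ℕ) (a : E1 × E2 × E3 × E4) : ℕ :=
  match i with
  | 0 => code a.1
  | 1 => code a.2.1
  | 2 => code a.2.2.1
  | 3 => code a.2.2.2
  | _ => code a.2.2.1

end Matus

/-- **Second Matúš inequality family** for four jointly distributed finite random
variables and any natural number `s ≥ 1`. -/
theorem matus_inequality_two {Ω E1 E2 E3 E4 : Type*} [MeasurableSpace Ω]
    [Fintype E1] [Fintype E2] [Fintype E3] [Fintype E4]
    [MeasurableSpace E1] [MeasurableSingletonClass E1]
    [MeasurableSpace E2] [MeasurableSingletonClass E2]
    [MeasurableSpace E3] [MeasurableSingletonClass E3]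
    [MeasurableSpace E4] [MeasurableSingletonClass E4]
    (μ : Measure Ω) [IsProbabilityMeasure μ]
    (X1 : Ω → E1) (X2 : Ω → E2) (X3 : Ω → E3) (X4 : Ω → E4)
    (hX1 : Measurable X1) (hX2 : Measurable X2) (hX3 : Measurable X3) (hX4 : Measurable X4)
    (s : ℕ) (hs : 1 ≤ s) :
    0 ≤ (s : ℝ) * (condMutInf μ X2 X3 X1 + 2 * condMutInf μ X1 X2 X3
          + condMutInf μ X1 X2 X4 + mutInf μ X3 X4 - mutInf μ X1 X2)
      + condMutInf μ X1 X3 X2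
      + ((s : ℝ) * ((s : ℝ) - 1) / 2) * (condMutInf μ X2 X4 X1 + condMutInf μ X1 X2 X4) := by
  classical
  let W : Ω → E1 × E2 × E3 × E4 := fun ω => (X1 ω, X2 ω, X3 ω, X4 ω)
  have hW : Measurable W := hX1.prodMk (hX2.prodMk (hX3.prodMk hX4))
  have main := Matus.Q_nonneg s _ (Matus.coord (E1 := E1) (E2 := E2) (E3 := E3) (E4 := E4))
    (Matus.link_prob μ W hW)
  have l0 : entH μ (fun ω => (X2 ω, X1 ω)) = Matus.ent (fun a => (μ (W ⁻¹' {a})).toReal)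
      Matus.coord {0, 1} :=
    Matus.link_ent μ W hW (fun a => (a.2.1, a.1)) _ _ (by
      intro a b
      simp [Matus.coord, Matus.code_inj, Prod.ext_iff]
      try tauto)
  have l1 : entH μ (fun ω => (X3 ω, X1 ω)) = Matus.ent (fun a => (μ (W ⁻¹' {a})).toReal)
      Matus.coord {0, 2} :=
    Matus.link_ent μ W hW (fun a => (a.2.2.1, a.1)) _ _ (by
      intro a b
      simp [Matus.coord, Matus.code_inj, Prod.ext_iff]
      try tauto)
  have l2 : entH μ (fun ω => (X2 ω, X3 ω, X1 ω)) = Matus.ent (fun a => (μ (W ⁻¹' {a})).toReal)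
      Matus.coord {0, 1, 2} :=
    Matus.link_ent μ W hW (fun a => (a.2.1, a.2.2.1, a.1)) _ _ (by
      intro a b
      simp [Matus.coord, Matus.code_inj, Prod.ext_iff]
      try tauto)
  have l3 : entH μ (X1) = Matus.ent (fun a => (μ (W ⁻¹' {a})).toReal)
      Matus.coord {0} :=
    Matus.link_ent μ W hW (fun a => a.1) _ _ (by
      intro a b
      simp [Matus.coord, Matus.code_inj, Prod.ext_iff]
      try tauto)
  have l4 : entH μ (fun ω => (X1 ω, X3 ω)) = Matus.ent (fun a => (μ (W ⁻¹' {a})).toReal)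
      Matus.coord {0, 2} :=
    Matus.link_ent μ W hW (fun a => (a.1, a.2.2.1)) _ _ (by
      intro a b
      simp [Matus.coord, Matus.code_inj, Prod.ext_iff]
      try tauto)
  have l5 : entH μ (fun ω => (X2 ω, X3 ω)) = Matus.ent (fun a => (μ (W ⁻¹' {a})).toReal)
      Matus.coord {1, 2} :=
    Matus.link_ent μ W hW (fun a => (a.2.1, a.2.2.1)) _ _ (by
      intro a b
      simp [Matus.coord, Matus.code_inj, Prod.ext_iff]
      try tauto)
  have l6 : entH μ (fun ω => (X1 ω, X2 ω, X3 ω)) = Matus.ent (fun a => (μ (W ⁻¹' {a})).toReal)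
      Matus.coord {0, 1, 2} :=
    Matus.link_ent μ W hW (fun a => (a.1, a.2.1, a.2.2.1)) _ _ (by
      intro a b
      simp [Matus.coord, Matus.code_inj, Prod.ext_iff]
      try tauto)
  have l7 : entH μ (X3) = Matus.ent (fun a => (μ (W ⁻¹' {a})).toReal)
      Matus.coord {2} :=
    Matus.link_ent μ W hW (fun a => a.2.2.1) _ _ (by
      intro a b
      simp [Matus.coord, Matus.code_inj, Prod.ext_iff]
      try tauto)
  have l8 : entH μ (fun ω => (X1 ω, X4 ω)) = Matus.ent (fun a => (μ (W ⁻¹' {a})).toReal)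
      Matus.coord {0, 3} :=
    Matus.link_ent μ W hW (fun a => (a.1, a.2.2.2)) _ _ (by
      intro a b
      simp [Matus.coord, Matus.code_inj, Prod.ext_iff]
      try tauto)
  have l9 : entH μ (fun ω => (X2 ω, X4 ω)) = Matus.ent (fun a => (μ (W ⁻¹' {a})).toReal)
      Matus.coord {1, 3} :=
    Matus.link_ent μ W hW (fun a => (a.2.1, a.2.2.2)) _ _ (by
      intro a b
      simp [Matus.coord, Matus.code_inj, Prod.ext_iff]
      try tauto)
  have l10 : entH μ (fun ω => (X1 ω, X2 ω, X4 ω)) = Matus.ent (fun a => (μ (W ⁻¹' {a})).toReal)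
      Matus.coord {0, 1, 3} :=
    Matus.link_ent μ W hW (fun a => (a.1, a.2.1, a.2.2.2)) _ _ (by
      intro a b
      simp [Matus.coord, Matus.code_inj, Prod.ext_iff]
      try tauto)
  have l11 : entH μ (X4) = Matus.ent (fun a => (μ (W ⁻¹' {a})).toReal)
      Matus.coord {3} :=
    Matus.link_ent μ W hW (fun a => a.2.2.2) _ _ (by
      intro a b
      simp [Matus.coord, Matus.code_inj, Prod.ext_iff]
      try tauto)
  have l12 : entH μ (fun ω => (X1 ω, X2 ω)) = Matus.ent (fun a => (μ (W ⁻¹' {a})).toReal)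
      Matus.coord {0, 1} :=
    Matus.link_ent μ W hW (fun a => (a.1, a.2.1)) _ _ (by
      intro a b
      simp [Matus.coord, Matus.code_inj, Prod.ext_iff]
      try tauto)
  have l13 : entH μ (fun ω => (X3 ω, X2 ω)) = Matus.ent (fun a => (μ (W ⁻¹' {a})).toReal)
      Matus.coord {1, 2} :=
    Matus.link_ent μ W hW (fun a => (a.2.2.1, a.2.1)) _ _ (by
      intro a b
      simp [Matus.coord, Matus.code_inj, Prod.ext_iff]
      try tauto)
  have l14 : entH μ (fun ω => (X1 ω, X3 ω, X2 ω)) = Matus.ent (fun a => (μ (W ⁻¹' {a})).toReal)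
      Matus.coord {0, 1, 2} :=
    Matus.link_ent μ W hW (fun a => (a.1, a.2.2.1, a.2.1)) _ _ (by
      intro a b
      simp [Matus.coord, Matus.code_inj, Prod.ext_iff]
      try tauto)
  have l15 : entH μ (X2) = Matus.ent (fun a => (μ (W ⁻¹' {a})).toReal)
      Matus.coord {1} :=
    Matus.link_ent μ W hW (fun a => a.2.1) _ _ (by
      intro a b
      simp [Matus.coord, Matus.code_inj, Prod.ext_iff]
      try tauto)
  have l16 : entH μ (fun ω => (X4 ω, X1 ω)) = Matus.ent (fun a => (μ (W ⁻¹' {a})).toReal)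
      Matus.coord {0, 3} :=
    Matus.link_ent μ W hW (fun a => (a.2.2.2, a.1)) _ _ (by
      intro a b
      simp [Matus.coord, Matus.code_inj, Prod.ext_iff]
      try tauto)
  have l17 : entH μ (fun ω => (X2 ω, X4 ω, X1 ω)) = Matus.ent (fun a => (μ (W ⁻¹' {a})).toReal)
      Matus.coord {0, 1, 3} :=
    Matus.link_ent μ W hW (fun a => (a.2.1, a.2.2.2, a.1)) _ _ (by
      intro a b
      simp [Matus.coord, Matus.code_inj, Prod.ext_iff]
      try tauto)
  have l18 : entH μ (fun ω => (X3 ω, X4 ω)) = Matus.ent (fun a => (μ (W ⁻¹' {a})).toReal)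
      Matus.coord {2, 3} :=
    Matus.link_ent μ W hW (fun a => (a.2.2.1, a.2.2.2)) _ _ (by
      intro a b
      simp [Matus.coord, Matus.code_inj, Prod.ext_iff]
      try tauto)
  have m0 : Matus.ent (fun a => (μ (W ⁻¹' {a})).toReal) Matus.coord {0, 4} =
      Matus.ent (fun a => (μ (W ⁻¹' {a})).toReal) Matus.coord {0, 2} := by
    simp [Matus.ent, Matus.pr, Matus.coord]
  have m1 : Matus.ent (fun a => (μ (W ⁻¹' {a})).toReal) Matus.coord {1, 4} =
      Matus.ent (fun a => (μ (W ⁻¹' {a})).toReal) Matus.coord {1, 2} := by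
    simp [Matus.ent, Matus.pr, Matus.coord]
  have m2 : Matus.ent (fun a => (μ (W ⁻¹' {a})).toReal) Matus.coord {0, 1, 4} =
      Matus.ent (fun a => (μ (W ⁻¹' {a})).toReal) Matus.coord {0, 1, 2} := by
    simp [Matus.ent, Matus.pr, Matus.coord]
  have m3 : Matus.ent (fun a => (μ (W ⁻¹' {a})).toReal) Matus.coord {4} =
      Matus.ent (fun a => (μ (W ⁻¹' {a})).toReal) Matus.coord {2} := by
    simp [Matus.ent, Matus.pr, Matus.coord]
  unfold Matus.Q at main
  rw [m0, m1, m2, m3] at main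
  unfold condMutInf mutInf
  rw [l0, l1, l2, l3, l4, l5, l6, l7, l8, l9, l10, l11, l12, l13, l14, l15, l16, l17, l18]
  linarith
end

section
/- Ingleton's inequality for subspace ranks: for any four subspaces V1, V2, V3, V4 of a finite-dimensional vector space over a field, dim(V1+V2) + dim(V1+V3) + dim(V1+V4) + dim(V2+V3) + dim(V2+V4) ≥ dim(V1) + dim(V2) + dim(V3+V4) + dim(V1+V2+V3) + dim(V1+V2+V4), where V+W denotes the span of the union (the join) of subspaces. -/
/-- **Ingleton's inequality for subspace ranks**: for any four subspaces
`V1, V2, V3, V4` of a finite-dimensional vector space over a field,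
`dim(V1+V2) + dim(V1+V3) + dim(V1+V4) + dim(V2+V3) + dim(V2+V4)
  ≥ dim V1 + dim V2 + dim(V3+V4) + dim(V1+V2+V3) + dim(V1+V2+V4)`. -/
theorem ingleton_subspace_rank {K V : Type*} [Field K] [AddCommGroup V] [Module K V]
    [FiniteDimensional K V] (V1 V2 V3 V4 : Submodule K V) :
    Module.finrank K V1 + Module.finrank K V2 + Module.finrank K ↥(V3 ⊔ V4)
      + Module.finrank K ↥(V1 ⊔ V2 ⊔ V3) + Module.finrank K ↥(V1 ⊔ V2 ⊔ V4)
    ≤ Module.finrank K ↥(V1 ⊔ V2) + Module.finrank K ↥(V1 ⊔ V3)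
      + Module.finrank K ↥(V1 ⊔ V4) + Module.finrank K ↥(V2 ⊔ V3)
      + Module.finrank K ↥(V2 ⊔ V4) := by
  have key : ∀ A B W X Y : Submodule K V, A ⊔ B = X → W ≤ A ⊓ B → Y ≤ X →
      Module.finrank K Y + Module.finrank K W ≤ Module.finrank K A + Module.finrank K B := by
    intro A B W X Y h1 h2 h3
    have e := Submodule.finrank_sup_add_finrank_inf_eq A B
    have e1 := Submodule.finrank_mono h2
    have e2 := Submodule.finrank_mono (h1 ▸ h3 : Y ≤ A ⊔ B)
    omega
  have h0 := Submodule.finrank_sup_add_finrank_inf_eq V1 V2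
  have hj : ∀ U : Submodule K V, V1 ⊔ V2 ⊔ U ≤ (V1 ⊔ U) ⊔ (V2 ⊔ U) := fun U =>
    sup_le (sup_le_sup le_sup_left le_sup_left) (le_sup_right.trans le_sup_left)
  have hm : ∀ U : Submodule K V, (V1 ⊓ V2) ⊔ U ≤ (V1 ⊔ U) ⊓ (V2 ⊔ U) := fun U =>
    le_inf (sup_le_sup_right inf_le_left U) (sup_le_sup_right inf_le_right U)
  have h3 := key (V1 ⊔ V3) (V2 ⊔ V3) _ _ _ rfl (hm V3) (hj V3)
  have h4 := key (V1 ⊔ V4) (V2 ⊔ V4) _ _ _ rfl (hm V4) (hj V4)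
  have h5 := key ((V1 ⊓ V2) ⊔ V3) ((V1 ⊓ V2) ⊔ V4) (V1 ⊓ V2) _ (V3 ⊔ V4) rfl
    (le_inf le_sup_left le_sup_left) (sup_le_sup le_sup_right le_sup_right)
  omega
end

section
/- There exist four jointly distributed finite random variables violating the entropic Ingleton inequality. Concretely, let X3 and X4 be independent uniformly distributed bits, X1 = AND(¬X3, ¬X4) and X2 = AND(X3, X4). Then the Ingleton quantity I_ING(X1,X2;X3,X4) = -I(X1:X2) + I(X1:X2|X3) + I(X1:X2|X4) + I(X3:X4) is strictly negative. -/
open MeasureTheory ProbabilityTheory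

/-- The uniform distribution on two independent bits `(X3, X4)`. -/
noncomputable def unifTwoBits : Measure (Bool × Bool) :=
  (PMF.uniformOfFintype (Bool × Bool)).toMeasure

/-- `X3`, the first uniform bit. -/
def X3and : Bool × Bool → Bool := Prod.fst

/-- `X4`, the second uniform bit. -/
def X4and : Bool × Bool → Bool := Prod.snd

/-- `X1 = AND(¬X3, ¬X4)`, the indicator that `X3 = 0` and `X4 = 0`. -/
def X1and : Bool × Bool → Bool := fun ω => !ω.1 && !ω.2

/-- `X2 = AND(X3, X4)`, the indicator that `X3 = 1` and `X4 = 1`. -/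
def X2and : Bool × Bool → Bool := fun ω => ω.1 && ω.2

open Classical in
theorem unif_toReal (S : Set (Bool × Bool)) :
    (unifTwoBits S).toReal = ∑ ω : Bool × Bool, if ω ∈ S then (1/4 : ℝ) else 0 := by
  unfold unifTwoBits
  rw [PMF.toMeasure_apply_fintype, ENNReal.toReal_sum]
  · refine Finset.sum_congr rfl fun ω _ => ?_
    by_cases h : ω ∈ S <;> simp [Set.indicator, h]
  · intro ω _
    by_cases h : ω ∈ S <;> simp [Set.indicator, h]

/-- There exist four jointly distributed finite random variables violating the
entropic Ingleton inequality: with `X3, X4` independent uniform bits,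
`X1 = AND(¬X3, ¬X4)` and `X2 = AND(X3, X4)`, the Ingleton quantity
`I_ING(X1,X2;X3,X4) = -I(X1:X2) + I(X1:X2|X3) + I(X1:X2|X4) + I(X3:X4)`
is strictly negative. -/
theorem ingleton_violation :
    -mutInf unifTwoBits X1and X2and
      + condMutInf unifTwoBits X1and X2and X3and
      + condMutInf unifTwoBits X1and X2and X4and
      + mutInf unifTwoBits X3and X4and < 0 := by
  have h2 : Real.log 4 = 2 * Real.log 2 := by
    rw [show (4:ℝ) = 2 ^ 2 by norm_num, Real.log_pow]; norm_num
  have h3 : 3 * Real.log 3 < 5 * Real.log 2 := by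
    have := Real.log_lt_log (by norm_num : (0:ℝ) < 3 ^ 3) (by norm_num : (3:ℝ) ^ 3 < 2 ^ 5)
    rw [Real.log_pow, Real.log_pow] at this
    exact_mod_cast this
  have e1 : Real.negMulLog (1/4) = Real.log 2 / 2 := by
    rw [Real.negMulLog, Real.log_div (by norm_num) (by norm_num), h2, Real.log_one]; ring
  have e2 : Real.negMulLog (1/4 + 1/4) = Real.log 2 / 2 := by
    rw [Real.negMulLog, show (1/4 + 1/4 : ℝ) = 1/2 by norm_num,
      Real.log_div (by norm_num) (by norm_num), Real.log_one]; ring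
  have e3 : Real.negMulLog (1/4 + (1/4 + 1/4)) = 3 / 2 * Real.log 2 - 3 / 4 * Real.log 3 := by
    rw [Real.negMulLog, show (1/4 + (1/4 + 1/4) : ℝ) = 3/4 by norm_num,
      Real.log_div (by norm_num) (by norm_num), h2]; ring
  have e3' : Real.negMulLog (1/4 + 1/4 + 1/4) = 3 / 2 * Real.log 2 - 3 / 4 * Real.log 3 := by
    rw [← e3]; congr 1; ring
  simp only [mutInf, condMutInf, entH, unif_toReal, Fintype.sum_prod_type, Fintype.sum_bool,
    Set.mem_preimage, Set.mem_singleton_iff, X1and, X2and, X3and, X4and, Prod.mk.injEq,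
    Bool.not_true, Bool.not_false, Bool.and_true, Bool.and_false, Bool.true_and, Bool.false_and,
    Bool.true_eq_false, Bool.false_eq_true, and_true, and_false, true_and, false_and,
    if_true, if_false, add_zero, zero_add, Real.negMulLog_zero, e1, e2, e3, e3', reduceCtorEq,
    and_self]
  linarith
end

section
/- The elemental Shannon inequalities generate all Shannon inequalities: let f be a real-valued function on subsets of a finite index set Ω with f(∅) = 0. Suppose (i) for every element i of Ω, f(Ω \ {i}) ≤ f(Ω), and (ii) for every pair of distinct elements i, j of Ω and every subset U ⊆ Ω \ {i,j}, f(U ∪ {i}) + f(U ∪ {j}) ≥ f(U ∪ {i,j}) + f(U). Then f satisfies all monotonicity inequalities f(S \ T) ≤ f(S) for all subsets S, T ⊆ Ω, and all submodularity inequalities f(S ∩ T) + f(S ∪ T) ≤ f(S) + f(T) for all subsets S, T ⊆ Ω. -/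
/-- The **elemental Shannon inequalities generate all Shannon inequalities**:
if a set function `f` on subsets of a finite set `Ω` with `f ∅ = 0` satisfies
(i) the elemental monotonicity inequalities `f (Ω \ {i}) ≤ f Ω` for every `i ∈ Ω`, and
(ii) the elemental submodularity inequalities
`f (U ∪ {i}) + f (U ∪ {j}) ≥ f (U ∪ {i,j}) + f U` for all distinct `i, j` and all
`U ⊆ Ω \ {i,j}`, then `f` satisfies all monotonicity inequalities `f (S \ T) ≤ f S`
and all submodularity inequalities `f (S ∩ T) + f (S ∪ T) ≤ f S + f T`. -/
theorem elemental_shannon_inequalities_generate {Ω : Type*} [Fintype Ω] [DecidableEq Ω]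
    (f : Finset Ω → ℝ) (h0 : f ∅ = 0)
    (hmono : ∀ i : Ω, f (Finset.univ.erase i) ≤ f Finset.univ)
    (hsub : ∀ i j : Ω, i ≠ j → ∀ U : Finset Ω, U ⊆ Finset.univ \ {i, j} →
      f (insert i (insert j U)) + f U ≤ f (insert i U) + f (insert j U)) :
    (∀ S T : Finset Ω, f (S \ T) ≤ f S) ∧
      (∀ S T : Finset Ω, f (S ∩ T) + f (S ∪ T) ≤ f S + f T) := by
  have step1 : ∀ (i : Ω) (A D : Finset Ω), i ∉ A → i ∉ D →
      f (insert i (A ∪ D)) + f A ≤ f (insert i A) + f (A ∪ D) := by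
    intro i A D hA
    induction D using Finset.induction_on with
    | empty => intro _; simp
    | insert j D hj ih =>
      intro hD
      rw [Finset.mem_insert, not_or] at hD
      have h1 := ih hD.2
      by_cases hjA : j ∈ A ∪ D
      · rw [Finset.union_insert, Finset.insert_eq_of_mem hjA]
        exact h1
      · have h2 := hsub i j hD.1 (A ∪ D) (by
          intro x hx
          simp only [Finset.mem_sdiff, Finset.mem_univ, true_and, Finset.mem_insert,
            Finset.mem_singleton, not_or]
          constructor
          · rintro rfl
            rcases Finset.mem_union.1 hx with h | h
            · exact hA h
            · exact hD.2 h
          · rintro rfl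
            exact hjA hx)
        rw [Finset.union_insert]
        linarith
  have step2 : ∀ (A D E : Finset Ω), Disjoint E (A ∪ D) →
      f (A ∪ D ∪ E) + f A ≤ f (A ∪ E) + f (A ∪ D) := by
    intro A D E
    induction E using Finset.induction_on with
    | empty => intro _; simp; linarith
    | insert i E hi ih =>
      intro hE
      rw [Finset.disjoint_insert_left] at hE
      have h1 := ih hE.2
      have hiA : i ∉ A := fun h => hE.1 (Finset.mem_union_left _ h)
      have hiD : i ∉ D := fun h => hE.1 (Finset.mem_union_right _ h)
      have h2 := step1 i (A ∪ E) D (by simp [hiA, hi]) hiD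
      rw [Finset.union_right_comm A E D] at h2
      rw [Finset.union_insert, Finset.union_insert]
      linarith
  have mono1 : ∀ (i : Ω) (S : Finset Ω), f S ≤ f (insert i S) := by
    intro i S
    by_cases hi : i ∈ S
    · rw [Finset.insert_eq_of_mem hi]
    · have h := step1 i S (Finset.univ.erase i) hi (by simp)
      have e : S ∪ Finset.univ.erase i = Finset.univ.erase i :=
        Finset.union_eq_right.2 (fun x hx => by
          simp only [Finset.mem_erase, Finset.mem_univ, and_true]
          rintro rfl
          exact hi hx)
      rw [e, Finset.insert_erase (Finset.mem_univ i)] at h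
      have := hmono i
      linarith
  have mono2 : ∀ (A D : Finset Ω), f A ≤ f (A ∪ D) := by
    intro A D
    induction D using Finset.induction_on with
    | empty => simp
    | insert i D hi ih =>
      rw [Finset.union_insert]
      exact ih.trans (mono1 _ _)
  constructor
  · intro S T
    have h := mono2 (S \ T) S
    rwa [Finset.union_eq_right.2 Finset.sdiff_subset] at h
  · intro S T
    have h := step2 (S ∩ T) S (T \ S) (by
      rw [Finset.union_eq_right.2 Finset.inter_subset_left]
      exact Finset.sdiff_disjoint)
    have e : S ∩ T ∪ T \ S = T := by
      ext x
      simp only [Finset.mem_union, Finset.mem_inter, Finset.mem_sdiff]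
      tauto
    rw [Finset.union_eq_right.2 Finset.inter_subset_left, e,
      Finset.union_sdiff_self_eq_union] at h
    linarith
end

section
/- The closure of the set of entropy vectors of n jointly distributed finite random variables is a convex cone: letting Γ*_n ⊆ ℝ^{2^n - 1} be the set of all vectors whose components are the Shannon entropies H((Xi)_{i∈S}) over nonempty subsets S of {1,...,n}, for some finite random variables X1,...,Xn on a common probability space, the topological closure of Γ*_n is convex and closed under multiplication by nonnegative scalars. -/
open MeasureTheory ProbabilityTheory

/-- Joint Shannon entropy `H(X_S)` of the subfamily indexed by the finite set `S`
of a family `X` of finite-valued random variables. -/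
noncomputable def jEnt {Ω : Type*} [MeasurableSpace Ω] {ι : Type*} [DecidableEq ι]
    {E : ι → Type*} [∀ i, Fintype (E i)] (μ : Measure Ω) (X : ∀ i, Ω → E i)
    (S : Finset ι) : ℝ :=
  ∑ e : ((i : S) → E i.1), Real.negMulLog (μ {ω | ∀ i : S, X i.1 ω = e i}).toReal

/-- `Γ*_n`: the set of entropy vectors (indexed by the nonempty subsets of
`{1, ..., n}`, i.e. vectors in `ℝ^{2^n - 1}`) achievable by `n` jointly distributed
finite random variables on a common probability space. -/
def entropyVectorSet (n : ℕ) : Set ({S : Finset (Fin n) // S.Nonempty} → ℝ) :=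
  {v | ∃ (Ω : Type) (mΩ : MeasurableSpace Ω) (μ : Measure Ω)
      (_ : IsProbabilityMeasure μ)
      (E : Fin n → Type) (hE : ∀ i, Fintype (E i)) (mE : ∀ i, MeasurableSpace (E i))
      (_ : ∀ i, @MeasurableSingletonClass (E i) (mE i))
      (X : ∀ i, Ω → E i) (_ : ∀ i, @Measurable Ω (E i) mΩ (mE i) (X i)),
      ∀ S : {S : Finset (Fin n) // S.Nonempty},
        v S = @jEnt Ω mΩ (Fin n) (instDecidableEqFin n) E hE μ X S.1}

theorem jEnt_prod {n : ℕ} {Ω Ω' : Type} [MeasurableSpace Ω] [MeasurableSpace Ω']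
    (μ : Measure Ω) (ν : Measure Ω') [IsProbabilityMeasure μ] [IsProbabilityMeasure ν]
    {E F : Fin n → Type} [∀ i, Fintype (E i)] [∀ i, Fintype (F i)]
    (X : ∀ i, Ω → E i) (Y : ∀ i, Ω' → F i) (S : Finset (Fin n))
    (hX : ∑ e : ((i : S) → E i.1), (μ {ω | ∀ i : S, X i.1 ω = e i}).toReal = 1)
    (hY : ∑ e : ((i : S) → F i.1), (ν {ω | ∀ i : S, Y i.1 ω = e i}).toReal = 1) :
    jEnt (μ.prod ν) (fun i (ω : Ω × Ω') => (X i ω.1, Y i ω.2)) S = jEnt μ X S + jEnt ν Y S := by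
  unfold jEnt
  let φ : (((i : S) → E i.1) × ((i : S) → F i.1)) ≃ ((i : S) → E i.1 × F i.1) :=
    { toFun := fun p i => (p.1 i, p.2 i)
      invFun := fun e => (fun i => (e i).1, fun i => (e i).2)
      left_inv := fun _ => rfl
      right_inv := fun _ => rfl }
  rw [← Equiv.sum_comp φ, Fintype.sum_prod_type]
  have key : ∀ (e : (i : S) → E i.1) (f : (i : S) → F i.1),
      ((μ.prod ν) {ω | ∀ i : S, (X i.1 ω.1, Y i.1 ω.2) = φ (e, f) i}).toReal =
      (μ {ω | ∀ i : S, X i.1 ω = e i}).toReal * (ν {ω | ∀ i : S, Y i.1 ω = f i}).toReal := by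
    intro e f
    rw [← ENNReal.toReal_mul, ← Measure.prod_prod]
    congr 2
    ext ω
    simp [φ, Set.mem_prod, forall_and]
  simp only [key, Real.negMulLog_mul, Finset.sum_add_distrib, ← Finset.mul_sum, ← Finset.sum_mul]
  rw [hX, hY]
  ring

theorem sum_law {n : ℕ} {Ω : Type} [MeasurableSpace Ω]
    (μ : Measure Ω) [IsProbabilityMeasure μ]
    {E : Fin n → Type} [∀ i, Fintype (E i)] [∀ i, MeasurableSpace (E i)]
    [∀ i, MeasurableSingletonClass (E i)]
    (X : ∀ i, Ω → E i) (hX : ∀ i, Measurable (X i)) (S : Finset (Fin n)) :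
    ∑ e : ((i : S) → E i.1), (μ {ω | ∀ i : S, X i.1 ω = e i}).toReal = 1 := by
  have hm : Measurable (fun ω (i : S) => X i.1 ω) := measurable_pi_lambda _ fun i => hX i.1
  have h := sum_measureReal_preimage_singleton (μ := μ) (f := fun ω (i : S) => X i.1 ω)
    Finset.univ (fun y _ => hm (measurableSet_singleton y))
  simp only [Finset.coe_univ, Set.preimage_univ, probReal_univ] at h
  rw [← h]
  refine Finset.sum_congr rfl fun e _ => ?_
  rw [Measure.real]
  congr 2
  ext ω
  simp [funext_iff]

theorem add_mem_entropyVectorSet {n : ℕ} {v w : {S : Finset (Fin n) // S.Nonempty} → ℝ}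
    (hv : v ∈ entropyVectorSet n) (hw : w ∈ entropyVectorSet n) :
    v + w ∈ entropyVectorSet n := by
  obtain ⟨Ω, mΩ, μ, hμ, E, hE, mE, sE, X, hX, hv⟩ := hv
  obtain ⟨Ω', mΩ', ν, hν, F, hF, mF, sF, Y, hY, hw⟩ := hw
  refine ⟨Ω × Ω', inferInstance, μ.prod ν, inferInstance, fun i => E i × F i,
    fun i => inferInstance, fun i => inferInstance, fun i => inferInstance,
    fun i ω => (X i ω.1, Y i ω.2), fun i => by fun_prop, fun S => ?_⟩
  rw [Pi.add_apply, hv, hw, jEnt_prod μ ν X Y S.1 (sum_law μ X hX S.1) (sum_law ν Y hY S.1)]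

theorem nsmul_mem_entropyVectorSet {n : ℕ} {v : {S : Finset (Fin n) // S.Nonempty} → ℝ}
    (hv : v ∈ entropyVectorSet n) (k : ℕ) :
    ((k : ℝ) + 1) • v ∈ entropyVectorSet n := by
  induction k with
  | zero => simpa using hv
  | succ k ih =>
    have := add_mem_entropyVectorSet ih hv
    rwa [show ((k + 1 : ℕ) : ℝ) + 1 = ((k : ℝ) + 1) + 1 by push_cast; ring, add_smul _ (1 : ℝ),
      one_smul]

/-- The law of a biased coin. -/
noncomputable def coin (p : ℝ) : Measure Bool :=
  ENNReal.ofReal p • Measure.dirac true + ENNReal.ofReal (1 - p) • Measure.dirac false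

theorem coin_true (p : ℝ) : coin p {true} = ENNReal.ofReal p := by
  simp [coin]

theorem coin_false (p : ℝ) : coin p {false} = ENNReal.ofReal (1 - p) := by
  simp [coin]

theorem coin_prob {p : ℝ} (h0 : 0 ≤ p) (h1 : p ≤ 1) : IsProbabilityMeasure (coin p) := by
  constructor
  simp only [coin, Measure.add_apply, Measure.smul_apply, measure_univ, smul_eq_mul, mul_one]
  rw [← ENNReal.ofReal_add h0 (by linarith)]
  simp

theorem jEnt_mix {n : ℕ} {Ω : Type} [MeasurableSpace Ω]
    (μ : Measure Ω) [IsProbabilityMeasure μ]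
    {E : Fin n → Type} [∀ i, Fintype (E i)]
    (X : ∀ i, Ω → E i) (S : Finset (Fin n)) (hS : S.Nonempty)
    (hX : ∑ e : ((i : S) → E i.1), (μ {ω | ∀ i : S, X i.1 ω = e i}).toReal = 1)
    {p : ℝ} (h0 : 0 ≤ p) (h1 : p ≤ 1) :
    jEnt (μ.prod (coin p))
      (fun i (ω : Ω × Bool) => if ω.2 = true then some (X i ω.1) else none) S =
      p * jEnt μ X S + (Real.negMulLog p + Real.negMulLog (1 - p)) := by
  have := coin_prob h0 h1
  unfold jEnt
  obtain ⟨a, ha⟩ := hS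
  let φ : Option ((i : S) → E i.1) → ((i : S) → Option (E i.1)) :=
    fun o i => o.map (fun e => e i)
  have hφ : Function.Injective φ := by
    intro o o' h
    have h' : ∀ i, φ o i = φ o' i := fun i => by rw [h]
    cases o with
    | none => cases o' with
      | none => rfl
      | some e' => simpa [φ] using h' ⟨a, ha⟩
    | some e => cases o' with
      | none => simpa [φ] using h' ⟨a, ha⟩
      | some e' =>
        congr 1
        ext i
        simpa [φ] using h' i
  rw [← Fintype.sum_of_injective φ hφ (fun o => Real.negMulLog ((μ.prod (coin p))
    {ω | ∀ i : S, (if ω.2 = true then some (X i.1 ω.1) else none) = φ o i}).toReal) _ ?_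
    (fun _ => rfl), Fintype.sum_option]
  · have hnone : {ω : Ω × Bool | ∀ i : S,
        (if ω.2 = true then some (X i.1 ω.1) else none) = φ none i} = Set.univ ×ˢ {false} := by
      ext ⟨ω, b⟩
      cases b
      · simp [φ]
      · simp only [φ, Set.mem_ofPred_eq]
        simp
        exact ⟨a, ha⟩
    have hsome : ∀ e, {ω : Ω × Bool | ∀ i : S,
        (if ω.2 = true then some (X i.1 ω.1) else none) = φ (some e) i} =
        {ω | ∀ i : S, X i.1 ω = e i} ×ˢ {true} := by
      intro e
      ext ⟨ω, b⟩
      cases b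
      · simp [φ]
        exact ⟨a, ha⟩
      · simp [φ]
    simp only [hnone, hsome, Measure.prod_prod, coin_true, coin_false, ENNReal.toReal_mul,
      measure_univ, ENNReal.toReal_one, one_mul, ENNReal.toReal_ofReal h0,
      ENNReal.toReal_ofReal (sub_nonneg.2 h1), Real.negMulLog_mul, Finset.sum_add_distrib,
      ← Finset.mul_sum, ← Finset.sum_mul]
    rw [hX]
    ring
  · intro e he
    have : {ω : Ω × Bool | ∀ i : S,
        (if ω.2 = true then some (X i.1 ω.1) else none) = e i} = ∅ := by
      rw [Set.eq_empty_iff_forall_notMem]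
      rintro ⟨ω, b⟩ h
      apply he
      cases b
      · exact ⟨none, funext fun i => by simpa [φ] using h i⟩
      · exact ⟨some (fun i => X i.1 ω), funext fun i => by simpa [φ] using h i⟩
    rw [this]
    simp

theorem mix_mem_entropyVectorSet {n : ℕ} {v : {S : Finset (Fin n) // S.Nonempty} → ℝ}
    (hv : v ∈ entropyVectorSet n) {p : ℝ} (h0 : 0 ≤ p) (h1 : p ≤ 1) :
    (fun S => p * v S + (Real.negMulLog p + Real.negMulLog (1 - p))) ∈ entropyVectorSet n := by
  obtain ⟨Ω, mΩ, μ, hμ, E, hE, mE, sE, X, hX, hv⟩ := hv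
  have := coin_prob h0 h1
  refine ⟨Ω × Bool, inferInstance, μ.prod (coin p), inferInstance, fun i => Option (E i),
    fun i => inferInstance, fun i => ⊤, fun i => @MeasurableSingletonClass.mk _ ⊤ (fun _ => trivial),
    fun i ω => if ω.2 = true then some (X i ω.1) else none, fun i => ?_, fun S => ?_⟩
  · letI : MeasurableSpace (Option (E i)) := ⊤
    have hs : Measurable (fun x : E i => some x) := measurable_of_finite _
    exact Measurable.ite (measurable_snd (measurableSet_singleton true))
      (hs.comp ((hX i).comp measurable_fst)) measurable_const
  · beta_reduce
    rw [hv, jEnt_mix μ X S.1 S.2 (sum_law μ X hX S.1) h0 h1]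

theorem smul_mem_closure_entropyVectorSet {n : ℕ} {v : {S : Finset (Fin n) // S.Nonempty} → ℝ}
    (hv : v ∈ entropyVectorSet n) {c : ℝ} (hc : 0 ≤ c) :
    c • v ∈ closure (entropyVectorSet n) := by
  have hp : Filter.Tendsto (fun k : ℕ => c / ((k : ℝ) + 1)) Filter.atTop (nhds 0) :=
    (tendsto_const_nhds (x := c)).div_atTop
      (Filter.tendsto_atTop_add_const_right _ 1 tendsto_natCast_atTop_atTop)
  have h1 : ∀ᶠ k : ℕ in Filter.atTop, c / ((k : ℝ) + 1) ≤ 1 :=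
    (hp.eventually (gt_mem_nhds one_pos)).mono fun _ h => le_of_lt h
  have hcont : Continuous fun p : ℝ => Real.negMulLog p + Real.negMulLog (1 - p) :=
    Real.continuous_negMulLog.add (Real.continuous_negMulLog.comp (continuous_const.sub continuous_id))
  have hl := (hcont.tendsto 0).comp hp
  refine mem_closure_of_tendsto (f := fun (k : ℕ) (S : {S : Finset (Fin n) // S.Nonempty}) =>
    c * v S + (Real.negMulLog (c / ((k : ℝ) + 1)) + Real.negMulLog (1 - c / ((k : ℝ) + 1))))
    (b := Filter.atTop) ?_ ?_
  · rw [tendsto_pi_nhds]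
    intro S
    simpa [Function.comp_def] using hl.const_add (c * v S)
  · filter_upwards [h1] with k hk
    have := mix_mem_entropyVectorSet (nsmul_mem_entropyVectorSet hv k) (by positivity) hk
    convert this using 3 with S
    have : (k : ℝ) + 1 ≠ 0 := by positivity
    simp only [Pi.smul_apply, smul_eq_mul]
    field_simp

/-- The **closure of the set of entropy vectors of `n` jointly distributed finite
random variables is a convex cone**: the topological closure of `Γ*_n` is convex and
closed under multiplication by nonnegative scalars. -/
theorem closure_entropyVectorSet_convex_cone (n : ℕ) :
    Convex ℝ (closure (entropyVectorSet n)) ∧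
      ∀ c : ℝ, 0 ≤ c → ∀ v ∈ closure (entropyVectorSet n),
        c • v ∈ closure (entropyVectorSet n) := by
  have hsmul : ∀ c : ℝ, 0 ≤ c → ∀ v ∈ closure (entropyVectorSet n),
      c • v ∈ closure (entropyVectorSet n) := by
    intro c hc v hv
    have := map_mem_closure (t := closure (entropyVectorSet n)) (continuous_const_smul c) hv
      (fun w hw => smul_mem_closure_entropyVectorSet hw hc)
    rwa [closure_closure] at this
  refine ⟨?_, hsmul⟩
  intro v hv w hw a b ha hb _
  exact map_mem_closure₂ continuous_add (hsmul a ha v hv) (hsmul b hb w hw)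
    (fun _ h _ h' => add_mem_entropyVectorSet h h')
end

section
/- Post-selection lemma (generalisation of Fine's theorem): let X, A, B be jointly distributed random variables with values in Fin n, a finite type 𝒜, and a finite type ℬ respectively, such that X is independent of B and P(X = x) > 0 for every x. Then there exists a joint distribution Q of random variables (A_1, ..., A_n, B'), with each A_x valued in 𝒜 and B' valued in ℬ, such that for every x ∈ {1,...,n} the marginal distribution of (A_x, B') under Q equals the conditional distribution of (A, B) given X = x; such Q may be taken as Q(a_1,...,a_n, b) = [∏_{x=1}^n P(A = a_x | B = b, X = x)] · P(B = b). -/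
open Classical in
/-- Probability of an event `s` on a finite probability space with mass function `p`. -/
noncomputable def prEvent {Ω : Type*} [Fintype Ω] (p : Ω → ℝ) (s : Set Ω) : ℝ :=
  ∑ ω, if ω ∈ s then p ω else 0

theorem prEvent_nonneg_aux {Ω : Type*} [Fintype Ω] (p : Ω → ℝ) (hp0 : ∀ ω, 0 ≤ p ω)
    (s : Set Ω) : 0 ≤ prEvent p s := by
  unfold prEvent
  refine Finset.sum_nonneg fun ω _ => ?_
  split_ifs
  · exact hp0 ω
  · exact le_rfl

theorem prEvent_mono_aux {Ω : Type*} [Fintype Ω] (p : Ω → ℝ) (hp0 : ∀ ω, 0 ≤ p ω)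
    {s t : Set Ω} (h : s ⊆ t) : prEvent p s ≤ prEvent p t := by
  unfold prEvent
  refine Finset.sum_le_sum fun ω _ => ?_
  by_cases h1 : ω ∈ s
  · simp [h1, h h1]
  · simp only [h1, if_false]
    split_ifs
    · exact hp0 ω
    · exact le_rfl

theorem prEvent_sum_aux {Ω 𝒜 : Type*} [Fintype Ω] [Fintype 𝒜] (p : Ω → ℝ)
    (A : Ω → 𝒜) (R : Ω → Prop) :
    ∑ a, prEvent p {ω | A ω = a ∧ R ω} = prEvent p {ω | R ω} := by
  classical
  unfold prEvent
  rw [Finset.sum_comm]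
  refine Finset.sum_congr rfl fun ω _ => ?_
  by_cases h : R ω <;> simp [h]

theorem sum_prod_aux {n : ℕ} {𝒜 : Type*} [Fintype 𝒜] (c : Fin n → 𝒜 → ℝ) :
    ∑ f : Fin n → 𝒜, ∏ y, c y (f y) = ∏ y, ∑ a, c y a := by
  classical
  rw [Finset.prod_univ_sum, Fintype.piFinset_univ]

theorem sum_prod_marginal_aux {n : ℕ} {𝒜 : Type*} [Fintype 𝒜] [DecidableEq 𝒜]
    (c : Fin n → 𝒜 → ℝ) (hc : ∀ y, ∑ a, c y a = 1) (x : Fin n) (a : 𝒜) :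
    (∑ f : Fin n → 𝒜, if f x = a then ∏ y, c y (f y) else 0) = c x a := by
  have h1 : ∀ f : Fin n → 𝒜, (if f x = a then ∏ y, c y (f y) else 0)
      = ∏ y, ((if y = x then (if f y = a then 1 else 0) else 1) * c y (f y)) := by
    intro f
    rw [Finset.prod_mul_distrib, Finset.prod_ite_eq']
    simp
  simp_rw [h1]
  rw [sum_prod_aux (fun y a' => (if y = x then (if a' = a then 1 else 0) else 1) * c y a')]
  have h2 : ∀ y, (∑ a', (if y = x then (if a' = a then (1 : ℝ) else 0) else 1) * c y a')
      = if y = x then c y a else 1 := by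
    intro y
    by_cases h : y = x
    · simp [h]
    · simp [h, hc]
  simp_rw [h2]
  simp

/-- **Post-selection lemma** (generalisation of Fine's theorem): let `X, A, B` be
jointly distributed random variables on a finite probability space, valued in
`Fin n`, a finite type `𝒜` and a finite type `ℬ` respectively, with `X`
independent of `B` and `P(X = x) > 0` for every `x`. Then there is a joint
distribution `Q` of variables `(A_1, ..., A_n, B')` such that for each `x` the
marginal of `(A_x, B')` under `Q` is the conditional distribution of `(A, B)` given
`X = x`; `Q` may be taken as
`Q(a_1,...,a_n,b) = (∏ x, P(A = a_x | B = b, X = x)) * P(B = b)`. -/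
theorem post_selection_lemma {n : ℕ} {Ω 𝒜 ℬ : Type*} [Fintype Ω] [Fintype 𝒜] [Fintype ℬ]
    [DecidableEq 𝒜] [DecidableEq ℬ]
    (p : Ω → ℝ) (hp0 : ∀ ω, 0 ≤ p ω) (hp1 : ∑ ω, p ω = 1)
    (X : Ω → Fin n) (A : Ω → 𝒜) (B : Ω → ℬ)
    (hindep : ∀ (x : Fin n) (b : ℬ),
      prEvent p {ω | X ω = x ∧ B ω = b}
        = prEvent p {ω | X ω = x} * prEvent p {ω | B ω = b})
    (hpos : ∀ x : Fin n, 0 < prEvent p {ω | X ω = x}) :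
    ∃ Q : (Fin n → 𝒜) × ℬ → ℝ,
      (∀ q, 0 ≤ Q q) ∧ (∑ q, Q q = 1) ∧
      (∀ (x : Fin n) (a : 𝒜) (b : ℬ),
        (∑ f : Fin n → 𝒜, if f x = a then Q (f, b) else 0)
          = prEvent p {ω | A ω = a ∧ B ω = b ∧ X ω = x} / prEvent p {ω | X ω = x}) ∧
      (∀ (f : Fin n → 𝒜) (b : ℬ),
        Q (f, b) = (∏ x : Fin n,
            prEvent p {ω | A ω = f x ∧ B ω = b ∧ X ω = x}
              / prEvent p {ω | B ω = b ∧ X ω = x}) * prEvent p {ω | B ω = b}) := by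
  have hswap : ∀ x b, prEvent p {ω | B ω = b ∧ X ω = x}
      = prEvent p {ω | X ω = x} * prEvent p {ω | B ω = b} := by
    intro x b
    rw [← hindep x b]
    congr 1
    ext ω
    exact and_comm
  have hc : ∀ b, prEvent p {ω | B ω = b} ≠ 0 → ∀ y,
      ∑ a, prEvent p {ω | A ω = a ∧ B ω = b ∧ X ω = y}
        / prEvent p {ω | B ω = b ∧ X ω = y} = 1 := by
    intro b hb y
    rw [← Finset.sum_div, prEvent_sum_aux p A (fun ω => B ω = b ∧ X ω = y)]
    apply div_self
    rw [hswap]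
    exact mul_ne_zero (hpos y).ne' hb
  refine ⟨fun q => (∏ x : Fin n,
            prEvent p {ω | A ω = q.1 x ∧ B ω = q.2 ∧ X ω = x}
              / prEvent p {ω | B ω = q.2 ∧ X ω = x}) * prEvent p {ω | B ω = q.2},
    ?_, ?_, ?_, fun _ _ => rfl⟩
  · intro q
    exact mul_nonneg (Finset.prod_nonneg fun x _ => div_nonneg
      (prEvent_nonneg_aux p hp0 _) (prEvent_nonneg_aux p hp0 _)) (prEvent_nonneg_aux p hp0 _)
  · rw [Fintype.sum_prod_type_right]
    have h : ∀ b, ∑ f : Fin n → 𝒜, (∏ x : Fin n,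
            prEvent p {ω | A ω = f x ∧ B ω = b ∧ X ω = x}
              / prEvent p {ω | B ω = b ∧ X ω = x}) * prEvent p {ω | B ω = b}
        = prEvent p {ω | B ω = b} := by
      intro b
      by_cases hb : prEvent p {ω | B ω = b} = 0
      · simp [hb]
      · rw [← Finset.sum_mul, sum_prod_aux (fun x a =>
            prEvent p {ω | A ω = a ∧ B ω = b ∧ X ω = x}
              / prEvent p {ω | B ω = b ∧ X ω = x}), Finset.prod_congr rfl
              (fun y _ => hc b hb y)]
        simp
    refine (Finset.sum_congr rfl fun b _ => h b).trans ?_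
    have h3 := prEvent_sum_aux p B (fun _ => True)
    simp only [and_true] at h3
    rw [h3, ← hp1]
    simp [prEvent]
  · intro x a b
    by_cases hb : prEvent p {ω | B ω = b} = 0
    · have h0 : prEvent p {ω | A ω = a ∧ B ω = b ∧ X ω = x} = 0 := by
        apply le_antisymm _ (prEvent_nonneg_aux p hp0 _)
        rw [← hb]
        exact prEvent_mono_aux p hp0 (fun ω h => h.2.1)
      simp [hb, h0]
    · have h := sum_prod_marginal_aux (fun x a =>
            prEvent p {ω | A ω = a ∧ B ω = b ∧ X ω = x}
              / prEvent p {ω | B ω = b ∧ X ω = x}) (hc b hb) x a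
      have h4 : ∀ (q : Prop) [Decidable q] (u v : ℝ),
          (if q then u * v else 0) = (if q then u else 0) * v := by
        intro q _ u v
        split_ifs <;> simp
      simp only [h4]
      rw [← Finset.sum_mul, h, hswap]
      have := (hpos x).ne'
      field_simp
end

section
/- Entropy inequality for the classical instrumental scenario: let X and A be independent finite random variables, let Z = f(X, A) and Y = g(Z, A) for deterministic functions f and g. Then I(X : (Y,Z)) ≤ H(Z), where I denotes mutual information and H the Shannon entropy. -/
open MeasureTheory ProbabilityTheory

lemma aux_marg {Ω V E : Type*} [MeasurableSpace Ω] [Fintype V] [DecidableEq E]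
    (μ : Measure Ω) [IsProbabilityMeasure μ] (W : Ω → V)
    (hW : ∀ v, MeasurableSet (W ⁻¹' {v})) (φ : V → E) (e : E) :
    (μ ((fun ω => φ (W ω)) ⁻¹' {e})).toReal
      = ∑ v, if φ v = e then (μ (W ⁻¹' {v})).toReal else 0 := by
  classical
  rw [← Finset.sum_filter]
  have h : (fun ω => φ (W ω)) ⁻¹' {e}
      = ⋃ v ∈ Finset.univ.filter (fun v => φ v = e), W ⁻¹' {v} := by
    ext ω; simp
  rw [h]
  refine measureReal_biUnion_finset (μ := μ) ?_ (fun v _ => hW v)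
  intro a _ b _ hab
  refine Set.disjoint_left.2 ?_
  intro ω h1 h2
  simp only [Set.mem_preimage, Set.mem_singleton_iff] at h1 h2
  exact hab (h1.symm.trans h2)

lemma aux_ent {Ω V E : Type*} [MeasurableSpace Ω] [Fintype V] [Fintype E]
    (μ : Measure Ω) [IsProbabilityMeasure μ] (W : Ω → V)
    (hW : ∀ v, MeasurableSet (W ⁻¹' {v})) (φ : V → E) :
    entH μ (fun ω => φ (W ω)) = ∑ v, (μ (W ⁻¹' {v})).toReal *
      (-Real.log (μ ((fun ω => φ (W ω)) ⁻¹' {φ v})).toReal) := by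
  classical
  have h : ∀ e, Real.negMulLog (μ ((fun ω => φ (W ω)) ⁻¹' {e})).toReal
      = ∑ v, if φ v = e then (μ (W ⁻¹' {v})).toReal *
      (-Real.log (μ ((fun ω => φ (W ω)) ⁻¹' {φ v})).toReal) else 0 := by
    intro e
    rw [Real.negMulLog, neg_mul_comm]
    conv_lhs => rw [aux_marg μ W hW φ e, Finset.sum_mul]
    refine Finset.sum_congr rfl fun v _ => ?_
    split_ifs with h
    · rw [← aux_marg μ W hW φ e, h]
    · simp
  unfold entH
  simp_rw [h]
  rw [Finset.sum_comm]
  simp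

lemma aux_sum {Ω E F : Type*} [MeasurableSpace Ω] [Fintype E]
    (μ : Measure Ω) [IsProbabilityMeasure μ] (X : Ω → E)
    (hX : ∀ v, MeasurableSet (X ⁻¹' {v})) (Y : Ω → F) (y : F)
    (hY : MeasurableSet (Y ⁻¹' {y})) :
    ∑ x, (μ ((fun ω => (X ω, Y ω)) ⁻¹' {(x, y)})).toReal = (μ (Y ⁻¹' {y})).toReal := by
  classical
  have h : Y ⁻¹' {y} = ⋃ x ∈ (Finset.univ : Finset E), (fun ω => (X ω, Y ω)) ⁻¹' {(x, y)} := by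
    ext ω; simp
  rw [h]
  refine (measureReal_biUnion_finset (μ := μ) ?_ ?_).symm
  · intro a _ b _ hab
    refine Set.disjoint_left.2 ?_
    intro ω h1 h2
    simp only [Set.mem_preimage, Set.mem_singleton_iff, Prod.mk.injEq] at h1 h2
    exact hab (h1.1.symm.trans h2.1)
  · intro x _
    have : (fun ω => (X ω, Y ω)) ⁻¹' {(x, y)} = X ⁻¹' {x} ∩ Y ⁻¹' {y} := by
      ext ω; simp
    rw [this]
    exact (hX x).inter hY

lemma aux_one {Ω E : Type*} [MeasurableSpace Ω] [Fintype E]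
    (μ : Measure Ω) [IsProbabilityMeasure μ] (X : Ω → E)
    (hX : ∀ v, MeasurableSet (X ⁻¹' {v})) :
    ∑ x, (μ (X ⁻¹' {x})).toReal = 1 := by
  classical
  have := aux_marg μ X hX (fun _ => ()) ()
  simpa using this.symm

lemma aux_meas {Ω V E : Type*} [MeasurableSpace Ω] [Fintype V] (W : Ω → V)
    (hW : ∀ v, MeasurableSet (W ⁻¹' {v})) (φ : V → E) (e : E) :
    MeasurableSet ((fun ω => φ (W ω)) ⁻¹' {e}) := by
  classical
  have h : (fun ω => φ (W ω)) ⁻¹' {e}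
      = ⋃ v ∈ Finset.univ.filter (fun v => φ v = e), W ⁻¹' {v} := by
    ext ω; simp
  rw [h]
  exact Finset.measurableSet_biUnion _ (fun v _ => hW v)

/-- **Entropy inequality for the classical instrumental scenario**: if `X` and `A`
are independent finite random variables, `Z = f (X, A)` and `Y = g (Z, A)`, then
`I(X : (Y, Z)) ≤ H(Z)`. -/
theorem instrumental_entropy_inequality {Ω EX EA EZ EY : Type*} [MeasurableSpace Ω]
    [Fintype EX] [Fintype EA] [Fintype EZ] [Fintype EY]
    [MeasurableSpace EX] [MeasurableSingletonClass EX]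
    [MeasurableSpace EA] [MeasurableSingletonClass EA]
    (μ : Measure Ω) [IsProbabilityMeasure μ]
    (X : Ω → EX) (A : Ω → EA) (hX : Measurable X) (hA : Measurable A)
    (hindep : IndepFun X A μ)
    (f : EX → EA → EZ) (g : EZ → EA → EY)
    (Z : Ω → EZ) (Y : Ω → EY)
    (hZ : ∀ ω, Z ω = f (X ω) (A ω)) (hY : ∀ ω, Y ω = g (Z ω) (A ω)) :
    mutInf μ X (fun ω => (Y ω, Z ω)) ≤ entH μ Z := by
  classical
  obtain rfl : Z = fun ω => f (X ω) (A ω) := funext hZ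
  obtain rfl : Y = fun ω => g (f (X ω) (A ω)) (A ω) := funext hY
  clear hZ hY
  have mX : ∀ v, MeasurableSet (X ⁻¹' {v}) := fun v => hX (measurableSet_singleton v)
  have mA : ∀ v, MeasurableSet (A ⁻¹' {v}) := fun v => hA (measurableSet_singleton v)
  set W : Ω → EX × EA := fun ω => (X ω, A ω) with hWdef
  have hWi : ∀ v, W ⁻¹' {v} = X ⁻¹' {v.1} ∩ A ⁻¹' {v.2} := by
    rintro ⟨x, a⟩; ext ω; simp [hWdef]
  have mW : ∀ v, MeasurableSet (W ⁻¹' {v}) := by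
    intro v; rw [hWi]; exact (mX _).inter (mA _)
  have hp : ∀ v, (μ (W ⁻¹' {v})).toReal
      = (μ (X ⁻¹' {v.1})).toReal * (μ (A ⁻¹' {v.2})).toReal := by
    intro v
    rw [hWi, hindep.measure_inter_preimage_eq_mul _ _ (measurableSet_singleton _)
      (measurableSet_singleton _), ENNReal.toReal_mul]
  let φZ : EX × EA → EZ := fun v => f v.1 v.2
  let φYZ : EX × EA → EY × EZ := fun v => (g (f v.1 v.2) v.2, f v.1 v.2)
  let φXYZ : EX × EA → EX × EY × EZ := fun v => (v.1, φYZ v)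
  have eX := aux_ent μ W mW (fun v => v.1)
  have eZ := aux_ent μ W mW φZ
  have eYZ := aux_ent μ W mW φYZ
  have eXYZ := aux_ent μ W mW φXYZ
  have mZ := aux_meas W mW φZ
  have mYZ := aux_meas W mW φYZ
  let pX : EX → ℝ := fun x => (μ (X ⁻¹' {x})).toReal
  let pA : EA → ℝ := fun x => (μ (A ⁻¹' {x})).toReal
  let pZ : EZ → ℝ := fun z => (μ ((fun ω => φZ (W ω)) ⁻¹' {z})).toReal
  let pYZ : EY × EZ → ℝ := fun z => (μ ((fun ω => φYZ (W ω)) ⁻¹' {z})).toReal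
  let pXYZ : EX × EY × EZ → ℝ := fun z => (μ ((fun ω => φXYZ (W ω)) ⁻¹' {z})).toReal
  have sA : ∑ a, pA a = 1 := aux_one μ A mA
  have sW : ∑ v : EX × EA, pX v.1 * pA v.2 = 1 := by
    rw [← aux_one μ W mW]; exact Finset.sum_congr rfl fun v _ => (hp v).symm
  have sZ : ∑ z, pZ z = 1 := aux_one μ _ mZ
  have sXYZ : ∀ y, ∑ x, pXYZ (x, y) = pYZ y := fun y =>
    aux_sum μ X mX (fun ω => φYZ (W ω)) y (mYZ y)
  have nX : ∀ x, 0 ≤ pX x := fun _ => ENNReal.toReal_nonneg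
  have nA : ∀ x, 0 ≤ pA x := fun _ => ENNReal.toReal_nonneg
  have nZ : ∀ x, 0 ≤ pZ x := fun _ => ENNReal.toReal_nonneg
  have nYZ : ∀ x, 0 ≤ pYZ x := fun _ => ENNReal.toReal_nonneg
  have nXYZ : ∀ x, 0 ≤ pXYZ x := fun _ => ENNReal.toReal_nonneg
  have posZ : ∀ v : EX × EA, 0 < pX v.1 * pA v.2 → 0 < pZ (φZ v) := fun v hv => by
    rw [← hp v] at hv
    refine hv.trans_le (ENNReal.toReal_mono (measure_ne_top _ _) (measure_mono ?_))
    intro ω h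
    simp only [Set.mem_preimage, Set.mem_singleton_iff] at h ⊢
    rw [h]
  have posYZ : ∀ v : EX × EA, 0 < pX v.1 * pA v.2 → 0 < pYZ (φYZ v) := fun v hv => by
    rw [← hp v] at hv
    refine hv.trans_le (ENNReal.toReal_mono (measure_ne_top _ _) (measure_mono ?_))
    intro ω h
    simp only [Set.mem_preimage, Set.mem_singleton_iff] at h ⊢
    rw [h]
  have posXYZ : ∀ v : EX × EA, 0 < pX v.1 * pA v.2 → 0 < pXYZ (φXYZ v) := fun v hv => by
    rw [← hp v] at hv
    refine hv.trans_le (ENNReal.toReal_mono (measure_ne_top _ _) (measure_mono ?_))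
    intro ω h
    simp only [Set.mem_preimage, Set.mem_singleton_iff] at h ⊢
    rw [h]
  -- pointwise bound from `log t ≤ t - 1`
  have key : ∀ v : EX × EA, pX v.1 * pA v.2 *
      (-Real.log (pX v.1) + -Real.log (pYZ (φYZ v)) - -Real.log (pXYZ (φXYZ v))
        - -Real.log (pZ (φZ v)))
      ≤ pXYZ (φXYZ v) / pYZ (φYZ v) * (pZ (φZ v) * pA v.2) - pX v.1 * pA v.2 := by
    intro v
    rcases (mul_nonneg (nX v.1) (nA v.2)).eq_or_lt with h0 | h0
    · rw [← h0]
      have := mul_nonneg (div_nonneg (nXYZ (φXYZ v)) (nYZ (φYZ v)))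
        (mul_nonneg (nZ (φZ v)) (nA v.2))
      linarith
    · have h1 := posZ v h0
      have h2 := posYZ v h0
      have h3 := posXYZ v h0
      have h4 : 0 < pX v.1 := (nX v.1).lt_of_ne' (left_ne_zero_of_mul h0.ne')
      have hl := Real.log_le_sub_one_of_pos
        (show 0 < pXYZ (φXYZ v) * pZ (φZ v) / (pYZ (φYZ v) * pX v.1) by positivity)
      rw [Real.log_div (by positivity) (by positivity), Real.log_mul h3.ne' h1.ne',
        Real.log_mul h2.ne' h4.ne'] at hl
      calc _ ≤ pX v.1 * pA v.2 *
            (pXYZ (φXYZ v) * pZ (φZ v) / (pYZ (φYZ v) * pX v.1) - 1) := by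
            apply mul_le_mul_of_nonneg_left _ h0.le
            linarith
        _ = _ := by field_simp
  have total : ∑ v : EX × EA, pXYZ (φXYZ v) / pYZ (φYZ v) * (pZ (φZ v) * pA v.2) ≤ 1 := by
    have t1 : ∀ v : EX × EA, pXYZ (φXYZ v) / pYZ (φYZ v) * (pZ (φZ v) * pA v.2)
        ≤ ∑ z, pXYZ (v.1, g z v.2, z) / pYZ (g z v.2, z) * (pZ z * pA v.2) := by
      intro v
      exact Finset.single_le_sum
        (f := fun z => pXYZ (v.1, g z v.2, z) / pYZ (g z v.2, z) * (pZ z * pA v.2))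
        (fun z _ => mul_nonneg (div_nonneg (nXYZ _) (nYZ _)) (mul_nonneg (nZ _) (nA _)))
        (Finset.mem_univ (φZ v))
    refine (Finset.sum_le_sum fun v _ => t1 v).trans ?_
    rw [Fintype.sum_prod_type_right]
    calc ∑ a, ∑ x, ∑ z, pXYZ (x, g z a, z) / pYZ (g z a, z) * (pZ z * pA a)
        = ∑ a, ∑ z, pYZ (g z a, z) / pYZ (g z a, z) * (pZ z * pA a) := by
          refine Finset.sum_congr rfl fun a _ => ?_
          rw [Finset.sum_comm]
          refine Finset.sum_congr rfl fun z _ => ?_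
          rw [← Finset.sum_mul, ← Finset.sum_div, sXYZ]
      _ ≤ ∑ a, ∑ z, pZ z * pA a := by
          refine Finset.sum_le_sum fun a _ => Finset.sum_le_sum fun z _ => ?_
          exact mul_le_of_le_one_left (mul_nonneg (nZ _) (nA _)) (div_self_le_one _)
      _ = 1 := by simp_rw [← Finset.sum_mul, sZ, one_mul, sA]
  have fin := Finset.sum_le_sum fun v (_ : v ∈ Finset.univ) => key v
  rw [Finset.sum_sub_distrib, sW] at fin
  simp only [mul_sub, mul_add, Finset.sum_sub_distrib, Finset.sum_add_distrib] at fin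
  simp only [hp] at eX eZ eYZ eXYZ
  have fin' := fin.trans (sub_nonpos.2 total)
  have e : entH μ (fun ω => (W ω).1) + entH μ (fun ω => φYZ (W ω))
      - entH μ (fun ω => φXYZ (W ω)) - entH μ (fun ω => φZ (W ω)) ≤ 0 := by
    rw [eX, eZ, eYZ, eXYZ]; exact fin'
  exact sub_nonpos.1 e
end

section
/- Entropy inequality for the classical triangle scenario: let A, B, C be mutually independent finite random variables and let X = f(B, C), Y = g(A, C), Z = h(A, B) for deterministic functions f, g, h. Then I(X:Y) + I(X:Z) ≤ H(X), where I denotes mutual information and H the Shannon entropy. -/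
open MeasureTheory ProbabilityTheory

open scoped Classical in
/-- Push-forward mass of a weight function on a finite type. -/
noncomputable def pushMass {T E : Type*} [Fintype T] (p : T → ℝ) (φ : T → E) (e : E) : ℝ :=
  ∑ t, if φ t = e then p t else 0

/-- Entropy of the push-forward. -/
noncomputable def entF {T E : Type*} [Fintype T] [Fintype E] (p : T → ℝ) (φ : T → E) : ℝ :=
  ∑ e, Real.negMulLog (pushMass p φ e)

theorem pushMass_nonneg {T E : Type*} [Fintype T] (p : T → ℝ) (hp : ∀ t, 0 ≤ p t)
    (φ : T → E) (e : E) : 0 ≤ pushMass p φ e := by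
  unfold pushMass
  exact Finset.sum_nonneg fun t _ => by split_ifs <;> simp [hp]

theorem sum_pushMass_mul {T E : Type*} [Fintype T] [Fintype E] (p : T → ℝ) (φ : T → E)
    (F : E → ℝ) : ∑ e, pushMass p φ e * F e = ∑ t, p t * F (φ t) := by
  classical
  unfold pushMass
  simp_rw [Finset.sum_mul]
  rw [Finset.sum_comm]
  refine Finset.sum_congr rfl fun t _ => ?_
  simp [ite_mul]

theorem entF_eq {T E : Type*} [Fintype T] [Fintype E] (p : T → ℝ) (φ : T → E) :
    entF p φ = - ∑ t, p t * Real.log (pushMass p φ (φ t)) := by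
  rw [← sum_pushMass_mul p φ (fun e => Real.log (pushMass p φ e))]
  unfold entF Real.negMulLog
  simp

theorem entF_congr {T E F : Type*} [Fintype T] [Fintype E] [Fintype F] (p : T → ℝ)
    (φ : T → E) (ψ : T → F) (hh : ∀ s t, φ s = φ t ↔ ψ s = ψ t) : entF p φ = entF p ψ := by
  rw [entF_eq, entF_eq]
  congr 1
  refine Finset.sum_congr rfl fun t _ => ?_
  have : pushMass p φ (φ t) = pushMass p ψ (ψ t) := by
    unfold pushMass
    refine Finset.sum_congr rfl fun s _ => ?_
    by_cases h1 : φ s = φ t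
    · rw [if_pos h1, if_pos ((hh s t).1 h1)]
    · rw [if_neg h1, if_neg (fun h2 => h1 ((hh s t).2 h2))]
  rw [this]

theorem core_ineq (r a b m : ℝ) (hr : 0 ≤ r) (ha : r ≤ a) (hb : r ≤ b) (hm : r ≤ m) :
    r * Real.log a + r * Real.log b - r * Real.log r - r * Real.log m ≤ a * b / m - r := by
  rcases hr.eq_or_lt with h0 | h0
  · subst h0
    have : 0 ≤ a * b / m := by positivity
    simpa using this
  · have ha' : 0 < a := by linarith
    have hb' : 0 < b := by linarith
    have hm' : 0 < m := by linarith
    have h1 := Real.log_le_sub_one_of_pos (x := a * b / (r * m)) (by positivity)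
    rw [Real.log_div (by positivity) (by positivity), Real.log_mul (by positivity) (by positivity),
      Real.log_mul (by positivity) (by positivity)] at h1
    have h2 := mul_le_mul_of_nonneg_left h1 hr
    have h3 : r * (a * b / (r * m) - 1) = a * b / m - r := by field_simp
    rw [h3] at h2
    linarith

theorem pushMass_comp_le {T E F : Type*} [Fintype T] (p : T → ℝ) (hp : ∀ t, 0 ≤ p t)
    (φ : T → E) (k : E → F) (e : E) : pushMass p φ e ≤ pushMass p (fun t => k (φ t)) (k e) := by
  unfold pushMass
  refine Finset.sum_le_sum fun t _ => ?_
  by_cases h1 : φ t = e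
  · simp [h1]
  · simp only [h1, if_false]
    split_ifs <;> simp [hp]

theorem sum_pushMass_pair {T E F : Type*} [Fintype T] [Fintype E] (p : T → ℝ)
    (φ : T → E) (ψ : T → F) (e : F) :
    ∑ u, pushMass p (fun t => (φ t, ψ t)) (u, e) = pushMass p ψ e := by
  classical
  unfold pushMass
  rw [Finset.sum_comm]
  refine Finset.sum_congr rfl fun t _ => ?_
  by_cases h1 : ψ t = e <;> simp [Prod.ext_iff, h1]

theorem entF_submod {T E F G : Type*} [Fintype T] [Fintype E] [Fintype F] [Fintype G]
    (p : T → ℝ) (hp : ∀ t, 0 ≤ p t) (U : T → E) (V : T → F) (W : T → G) :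
    entF p (fun t => (U t, V t, W t)) + entF p W
      ≤ entF p (fun t => (U t, W t)) + entF p (fun t => (V t, W t)) := by
  have key := Finset.sum_le_sum (s := Finset.univ) fun (x : E × F × G) _ =>
    core_ineq (pushMass p (fun t => (U t, V t, W t)) x)
      (pushMass p (fun t => (U t, W t)) (x.1, x.2.2))
      (pushMass p (fun t => (V t, W t)) (x.2.1, x.2.2))
      (pushMass p W x.2.2) (pushMass_nonneg p hp _ _)
      (pushMass_comp_le p hp (fun t => (U t, V t, W t)) (fun y => (y.1, y.2.2)) x)
      (pushMass_comp_le p hp (fun t => (U t, V t, W t)) (fun y => (y.2.1, y.2.2)) x)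
      (pushMass_comp_le p hp (fun t => (U t, V t, W t)) (fun y => y.2.2) x)
  simp only [Finset.sum_sub_distrib, Finset.sum_add_distrib] at key
  have e1 := sum_pushMass_mul p (fun t => (U t, V t, W t))
    (fun x => Real.log (pushMass p (fun t => (U t, W t)) (x.1, x.2.2)))
  have e2 := sum_pushMass_mul p (fun t => (U t, V t, W t))
    (fun x => Real.log (pushMass p (fun t => (V t, W t)) (x.2.1, x.2.2)))
  have e3 := sum_pushMass_mul p (fun t => (U t, V t, W t))
    (fun x => Real.log (pushMass p (fun t => (U t, V t, W t)) x))
  have e4 := sum_pushMass_mul p (fun t => (U t, V t, W t))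
    (fun x => Real.log (pushMass p W x.2.2))
  have e5 := sum_pushMass_mul p (fun t => (U t, V t, W t)) (fun _ => 1)
  have e6 := sum_pushMass_mul p W (fun _ => 1)
  have e7 : ∑ x : E × F × G, pushMass p (fun t => (U t, W t)) (x.1, x.2.2)
      * pushMass p (fun t => (V t, W t)) (x.2.1, x.2.2) / pushMass p W x.2.2
      = ∑ w, pushMass p W w := by
    simp only [Fintype.sum_prod_type]
    have : ∀ u : E, ∑ v : F, ∑ w : G, pushMass p (fun t => (U t, W t)) (u, w)
        * pushMass p (fun t => (V t, W t)) (v, w) / pushMass p W w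
        = ∑ w : G, pushMass p (fun t => (U t, W t)) (u, w) * pushMass p W w / pushMass p W w := by
      intro u
      rw [Finset.sum_comm]
      refine Finset.sum_congr rfl fun w _ => ?_
      rw [← Finset.sum_div, ← Finset.mul_sum, sum_pushMass_pair]
    simp_rw [this]
    rw [Finset.sum_comm]
    refine Finset.sum_congr rfl fun w _ => ?_
    rw [← Finset.sum_div, ← Finset.sum_mul, sum_pushMass_pair, mul_self_div_self]
  simp only [mul_one] at e5 e6
  rw [entF_eq, entF_eq, entF_eq, entF_eq]
  simp only at e1 e2 e3 e4
  linarith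

theorem entF_const {T : Type*} [Fintype T] (p : T → ℝ) (h1 : ∑ t, p t = 1) :
    entF p (fun _ => ()) = 0 := by
  simp [entF, pushMass, h1]

theorem entF_subadd {T E F : Type*} [Fintype T] [Fintype E] [Fintype F]
    (p : T → ℝ) (hp : ∀ t, 0 ≤ p t) (h1 : ∑ t, p t = 1) (U : T → E) (V : T → F) :
    entF p (fun t => (U t, V t)) ≤ entF p U + entF p V := by
  have := entF_submod p hp U V (fun _ => ())
  rw [entF_const p h1] at this
  rw [entF_congr p (fun t => (U t, V t, ())) (fun t => (U t, V t)) (by simp),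
    entF_congr p (fun t => (U t, ())) U (by simp),
    entF_congr p (fun t => (V t, ())) V (by simp)] at this
  linarith

theorem entF_submod_of {T E F G K L M : Type*} [Fintype T] [Fintype E] [Fintype F] [Fintype G]
    [Fintype K] [Fintype L] [Fintype M]
    (p : T → ℝ) (hp : ∀ t, 0 ≤ p t) (U : T → E) (V : T → F) (W : T → G)
    (UVW : T → K) (UW : T → L) (VW : T → M)
    (h1 : ∀ s t, (U s, V s, W s) = (U t, V t, W t) ↔ UVW s = UVW t)
    (h2 : ∀ s t, (U s, W s) = (U t, W t) ↔ UW s = UW t)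
    (h3 : ∀ s t, (V s, W s) = (V t, W t) ↔ VW s = VW t) :
    entF p UVW + entF p W ≤ entF p UW + entF p VW := by
  rw [← entF_congr p _ _ h1, ← entF_congr p _ _ h2, ← entF_congr p _ _ h3]
  exact entF_submod p hp U V W

/-- The finite version of the inequality. -/
theorem triangle_finite {T EA EB EC EX EY EZ : Type*} [Fintype T]
    [Fintype EA] [Fintype EB] [Fintype EC] [Fintype EX] [Fintype EY] [Fintype EZ]
    (p : T → ℝ) (hp : ∀ t, 0 ≤ p t) (h1 : ∑ t, p t = 1)
    (A : T → EA) (B : T → EB) (C : T → EC)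
    (hi : entF p (fun t => (A t, B t, C t)) = entF p A + entF p B + entF p C)
    (f : EB → EC → EX) (g : EA → EC → EY) (h : EA → EB → EZ)
    (X : T → EX) (Y : T → EY) (Z : T → EZ)
    (hX : ∀ t, X t = f (B t) (C t)) (hY : ∀ t, Y t = g (A t) (C t))
    (hZ : ∀ t, Z t = h (A t) (B t)) :
    (entF p X + entF p Y - entF p (fun t => (X t, Y t)))
      + (entF p X + entF p Z - entF p (fun t => (X t, Z t))) ≤ entF p X := by
  have a1 := entF_submod_of p hp X (fun t => (A t, C t)) Y (fun t => (X t, A t, C t))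
    (fun t => (X t, Y t)) (fun t => (A t, C t))
    (by intro s t; simp only [Prod.mk.injEq, hY]; grind) (by simp)
    (by intro s t; simp only [Prod.mk.injEq, hY]; grind)
  have a2 := entF_submod_of p hp X (fun t => (A t, B t)) Z (fun t => (X t, A t, B t))
    (fun t => (X t, Z t)) (fun t => (A t, B t))
    (by intro s t; simp only [Prod.mk.injEq, hZ]; grind) (by simp)
    (by intro s t; simp only [Prod.mk.injEq, hZ]; grind)
  have b1 := entF_submod_of p hp A B (fun t => (X t, C t)) (fun t => (A t, B t, C t))
    (fun t => (X t, A t, C t)) (fun t => (B t, C t))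
    (by intro s t; simp only [Prod.mk.injEq, hX]; grind)
    (by intro s t; simp only [Prod.mk.injEq]; grind)
    (by intro s t; simp only [Prod.mk.injEq, hX]; grind)
  have b2 := entF_submod_of p hp A C (fun t => (X t, B t)) (fun t => (A t, B t, C t))
    (fun t => (X t, A t, B t)) (fun t => (B t, C t))
    (by intro s t; simp only [Prod.mk.injEq, hX]; grind)
    (by intro s t; simp only [Prod.mk.injEq]; grind)
    (by intro s t; simp only [Prod.mk.injEq, hX]; grind)
  have c1 := entF_submod_of p hp B C X (fun t => (B t, C t))
    (fun t => (X t, B t)) (fun t => (X t, C t))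
    (by intro s t; simp only [Prod.mk.injEq, hX]; grind)
    (by intro s t; simp only [Prod.mk.injEq]; grind)
    (by intro s t; simp only [Prod.mk.injEq]; grind)
  have d1 := entF_subadd p hp h1 A B
  have d2 := entF_subadd p hp h1 A C
  have d3 := entF_subadd p hp h1 B C
  have d4 := entF_subadd p hp h1 A (fun t => (B t, C t))
  linarith

theorem measure_eq_pushMass {Ω T E : Type*} [MeasurableSpace Ω] [Fintype T] [MeasurableSpace T]
    [MeasurableSingletonClass T] (μ : Measure Ω) [IsProbabilityMeasure μ] (D : Ω → T)
    (hD : Measurable D) (φ : T → E) (e : E) :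
    (μ ((fun ω => φ (D ω)) ⁻¹' {e})).toReal
      = pushMass (fun t => (μ (D ⁻¹' {t})).toReal) φ e := by
  classical
  have h1 : ((fun ω => φ (D ω)) ⁻¹' {e}) = D ⁻¹' ((Finset.univ.filter fun t => φ t = e : Finset T)) := by
    ext; simp
  have h2 := sum_measureReal_preimage_singleton (μ := μ) (f := D)
    (Finset.univ.filter fun t => φ t = e) (fun y _ => hD (measurableSet_singleton y))
  rw [h1]
  unfold pushMass
  rw [← Finset.sum_filter]
  simp only [Measure.real] at h2
  rw [← h2]

theorem entH_eq_entF {Ω T E : Type*} [MeasurableSpace Ω] [Fintype T] [MeasurableSpace T]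
    [MeasurableSingletonClass T] [Fintype E] (μ : Measure Ω) [IsProbabilityMeasure μ] (D : Ω → T)
    (hD : Measurable D) (φ : T → E) :
    entH μ (fun ω => φ (D ω)) = entF (fun t => (μ (D ⁻¹' {t})).toReal) φ := by
  unfold entH entF
  simp_rw [measure_eq_pushMass μ D hD]

theorem sum_prob {Ω T : Type*} [MeasurableSpace Ω] [Fintype T] [MeasurableSpace T]
    [MeasurableSingletonClass T] (μ : Measure Ω) [IsProbabilityMeasure μ] (D : Ω → T)
    (hD : Measurable D) : ∑ t, (μ (D ⁻¹' {t})).toReal = 1 := by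
  have := measure_eq_pushMass μ D hD (fun _ => ()) ()
  simpa [pushMass] using this.symm

theorem sum_negMulLog_prod {E F G : Type*} [Fintype E] [Fintype F] [Fintype G]
    (a : E → ℝ) (b : F → ℝ) (c : G → ℝ) (ha : ∑ x, a x = 1) (hb : ∑ x, b x = 1)
    (hc : ∑ x, c x = 1) :
    ∑ x : E × F × G, Real.negMulLog (a x.1 * b x.2.1 * c x.2.2)
      = ∑ x, Real.negMulLog (a x) + ∑ x, Real.negMulLog (b x) + ∑ x, Real.negMulLog (c x) := by
  simp only [Fintype.sum_prod_type, Real.negMulLog_mul, Finset.sum_add_distrib, mul_add,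
    ← Finset.mul_sum, ← Finset.sum_mul, ha, hb, hc, mul_one, one_mul]

/-- **Entropy inequality for the classical triangle scenario**: if `A, B, C` are
mutually independent finite random variables and `X = f (B, C)`, `Y = g (A, C)`,
`Z = h (A, B)`, then `I(X:Y) + I(X:Z) ≤ H(X)`. -/
theorem triangle_entropy_inequality
    {Ω EA EB EC EX EY EZ : Type*} [MeasurableSpace Ω]
    [Fintype EA] [Fintype EB] [Fintype EC] [Fintype EX] [Fintype EY] [Fintype EZ]
    [MeasurableSpace EA] [MeasurableSingletonClass EA]
    [MeasurableSpace EB] [MeasurableSingletonClass EB]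
    [MeasurableSpace EC] [MeasurableSingletonClass EC]
    (μ : Measure Ω) [IsProbabilityMeasure μ]
    (A : Ω → EA) (B : Ω → EB) (C : Ω → EC)
    (hA : Measurable A) (hB : Measurable B) (hC : Measurable C)
    (hindep : ∀ (a : EA) (b : EB) (c : EC),
      μ (A ⁻¹' {a} ∩ B ⁻¹' {b} ∩ C ⁻¹' {c})
        = μ (A ⁻¹' {a}) * μ (B ⁻¹' {b}) * μ (C ⁻¹' {c}))
    (f : EB → EC → EX) (g : EA → EC → EY) (h : EA → EB → EZ)
    (X : Ω → EX) (Y : Ω → EY) (Z : Ω → EZ)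
    (hX : ∀ ω, X ω = f (B ω) (C ω)) (hY : ∀ ω, Y ω = g (A ω) (C ω))
    (hZ : ∀ ω, Z ω = h (A ω) (B ω)) :
    mutInf μ X Y + mutInf μ X Z ≤ entH μ X := by
  have hD : Measurable (fun ω => (A ω, B ω, C ω)) := hA.prodMk (hB.prodMk hC)
  have hfin := triangle_finite
    (fun t : EA × EB × EC => (μ ((fun ω => (A ω, B ω, C ω)) ⁻¹' {t})).toReal)
    (fun _ => ENNReal.toReal_nonneg) (sum_prob μ _ hD)
    (fun t => t.1) (fun t => t.2.1) (fun t => t.2.2)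
    (by
      simp only [← entH_eq_entF μ _ hD]
      unfold entH
      rw [← sum_negMulLog_prod _ _ _ (sum_prob μ A hA) (sum_prob μ B hB) (sum_prob μ C hC)]
      refine Finset.sum_congr rfl fun x _ => ?_
      obtain ⟨a, b, c⟩ := x
      simp only
      rw [← ENNReal.toReal_mul, ← ENNReal.toReal_mul, ← hindep]
      congr 3
      ext ω
      simp [and_assoc])
    f g h (fun t => f t.2.1 t.2.2) (fun t => g t.1 t.2.2) (fun t => h t.1 t.2.1)
    (fun _ => rfl) (fun _ => rfl) (fun _ => rfl)
  simp only [← entH_eq_entF μ _ hD] at hfin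
  obtain rfl : X = fun ω => f (B ω) (C ω) := funext hX
  obtain rfl : Y = fun ω => g (A ω) (C ω) := funext hY
  obtain rfl : Z = fun ω => h (A ω) (B ω) := funext hZ
  exact hfin
end

section
/- First marginal entropy inequality for the classical triangle scenario: let A, B, C be mutually independent finite random variables and let X = f(B, C), Y = g(A, C), Z = h(A, B) for deterministic functions f, g, h. Then -H(X) - H(Y) - H(Z) + H(X,Y) + H(X,Z) ≥ 0, where H denotes the Shannon entropy and H(X,Y) the entropy of the joint variable. -/
open MeasureTheory ProbabilityTheory

open Classical in
/-- Mass of the fibre of `φ` over `e`. -/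
noncomputable def fibMass {W E : Type*} [Fintype W] (p : W → ℝ) (φ : W → E) (e : E) : ℝ :=
  ∑ w, if φ w = e then p w else 0

/-- Entropy of `φ` under weights `p`, written as a sum over the sample space. -/
noncomputable def ptEnt {W E : Type*} [Fintype W] (p : W → ℝ) (φ : W → E) : ℝ :=
  -∑ w, p w * Real.log (fibMass p φ (φ w))

lemma fibMass_nonneg {W E : Type*} [Fintype W] {p : W → ℝ} (hp : ∀ w, 0 ≤ p w)
    (φ : W → E) (e : E) : 0 ≤ fibMass p φ e := by
  unfold fibMass
  refine Finset.sum_nonneg fun w _ => ?_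
  split_ifs
  · exact hp w
  · exact le_rfl

lemma le_fibMass {W E : Type*} [Fintype W] {p : W → ℝ} (hp : ∀ w, 0 ≤ p w)
    (φ : W → E) (w : W) : p w ≤ fibMass p φ (φ w) := by
  classical
  unfold fibMass
  have := Finset.single_le_sum (f := fun w' => if φ w' = φ w then p w' else 0)
    (fun w' _ => by
      show 0 ≤ if φ w' = φ w then p w' else 0
      split_ifs
      · exact hp w'
      · exact le_rfl) (Finset.mem_univ w)
  simpa using this

/-- Change of variables: group a sum over the sample space by the value of `φ`. -/
lemma sum_fibre {W E : Type*} [Fintype W] [Fintype E] (p : W → ℝ) (φ : W → E) (F : E → ℝ) :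
    ∑ w, p w * F (φ w) = ∑ e, fibMass p φ e * F e := by
  classical
  unfold fibMass
  simp_rw [Finset.sum_mul]
  rw [Finset.sum_comm]
  refine Finset.sum_congr rfl fun w _ => ?_
  simp [ite_mul]

lemma ptEnt_eq {W E : Type*} [Fintype W] [Fintype E] (p : W → ℝ) (φ : W → E) :
    ptEnt p φ = ∑ e, Real.negMulLog (fibMass p φ e) := by
  unfold ptEnt
  rw [sum_fibre p φ (fun e => Real.log (fibMass p φ e)), ← Finset.sum_neg_distrib]
  simp [Real.negMulLog]

lemma ptEnt_congr {W E F : Type*} [Fintype W] (p : W → ℝ) (φ : W → E) (ψ : W → F)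
    (hk : ∀ w w', φ w = φ w' ↔ ψ w = ψ w') : ptEnt p φ = ptEnt p ψ := by
  unfold ptEnt fibMass
  congr 1
  refine Finset.sum_congr rfl fun w _ => ?_
  congr 2
  refine Finset.sum_congr rfl fun w' _ => ?_
  by_cases h1 : φ w' = φ w
  · rw [if_pos h1, if_pos ((hk _ _).1 h1)]
  · rw [if_neg h1, if_neg (fun h2 => h1 ((hk _ _).2 h2))]

lemma fibMass_marg {W E F : Type*} [Fintype W] [Fintype E] (p : W → ℝ) (φ : W → E) (χ : W → F)
    (g : F) : ∑ e, fibMass p (fun w => (φ w, χ w)) (e, g) = fibMass p χ g := by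
  classical
  unfold fibMass
  rw [Finset.sum_comm]
  refine Finset.sum_congr rfl fun w _ => ?_
  simp only [Prod.mk.injEq, ite_and]
  simp

/-- Submodularity of entropy. -/
lemma ptEnt_submod {W E F G : Type*} [Fintype W] [Fintype E] [Fintype F] [Fintype G]
    {p : W → ℝ} (hp : ∀ w, 0 ≤ p w) (φ : W → E) (ψ : W → F) (χ : W → G) :
    ptEnt p (fun w => (φ w, ψ w, χ w)) + ptEnt p χ
      ≤ ptEnt p (fun w => (φ w, χ w)) + ptEnt p (fun w => (ψ w, χ w)) := by
  set a := fibMass p (fun w => (φ w, χ w)) with ha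
  set b := fibMass p (fun w => (ψ w, χ w)) with hb
  set t := fibMass p (fun w => (φ w, ψ w, χ w)) with ht
  set z := fibMass p χ with hz
  have hz0 : ∀ g, 0 ≤ z g := fibMass_nonneg hp _
  have ha0 : ∀ g, 0 ≤ a g := fibMass_nonneg hp _
  have hb0 : ∀ g, 0 ≤ b g := fibMass_nonneg hp _
  have ht0 : ∀ g, 0 ≤ t g := fibMass_nonneg hp _
  let R : E × F × G → ℝ := fun x => a (x.1, x.2.2) * b x.2 / (t x * z x.2.2)
  have key : ∀ w, p w * Real.log (a (φ w, χ w)) + p w * Real.log (b (ψ w, χ w))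
      - p w * Real.log (t (φ w, ψ w, χ w)) - p w * Real.log (z (χ w))
      ≤ p w * R (φ w, ψ w, χ w) - p w := by
    intro w
    rcases (hp w).eq_or_lt with h0 | h0
    · simp [← h0]
    have h1 : 0 < a (φ w, χ w) := h0.trans_le (le_fibMass hp (fun w => (φ w, χ w)) w)
    have h2 : 0 < b (ψ w, χ w) := h0.trans_le (le_fibMass hp (fun w => (ψ w, χ w)) w)
    have h3 : 0 < t (φ w, ψ w, χ w) :=
      h0.trans_le (le_fibMass hp (fun w => (φ w, ψ w, χ w)) w)
    have h4 : 0 < z (χ w) := h0.trans_le (le_fibMass hp χ w)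
    have hR : 0 < R (φ w, ψ w, χ w) := by
      show 0 < a (φ w, χ w) * b (ψ w, χ w) / (t (φ w, ψ w, χ w) * z (χ w))
      positivity
    have hl : Real.log (R (φ w, ψ w, χ w)) = Real.log (a (φ w, χ w)) + Real.log (b (ψ w, χ w))
        - (Real.log (t (φ w, ψ w, χ w)) + Real.log (z (χ w))) := by
      show Real.log (a (φ w, χ w) * b (ψ w, χ w) / (t (φ w, ψ w, χ w) * z (χ w))) = _
      rw [Real.log_div (by positivity) (by positivity), Real.log_mul h1.ne' h2.ne',
        Real.log_mul h3.ne' h4.ne']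
    have := mul_le_mul_of_nonneg_left (Real.log_le_sub_one_of_pos hR) h0.le
    rw [hl] at this
    linarith
  have hsum := Finset.sum_le_sum (s := Finset.univ) fun w _ => key w
  simp only [Finset.sum_sub_distrib, Finset.sum_add_distrib] at hsum
  have htot : ∑ w, p w = ∑ g, z g := by
    have := sum_fibre p χ (fun _ => 1)
    simpa using this
  have hbound : ∑ w, p w * R (φ w, ψ w, χ w) ≤ ∑ w, p w := by
    rw [sum_fibre p (fun w => (φ w, ψ w, χ w)) R, htot]
    calc ∑ x, t x * R x ≤ ∑ x : E × F × G, a (x.1, x.2.2) * b x.2 / z x.2.2 := by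
          refine Finset.sum_le_sum fun x _ => ?_
          rcases (ht0 x).eq_or_lt with h0 | h0
          · rw [← h0, zero_mul]
            exact div_nonneg (mul_nonneg (ha0 _) (hb0 _)) (hz0 _)
          · refine le_of_eq ?_
            show t x * (a (x.1, x.2.2) * b x.2 / (t x * z x.2.2)) = _
            rw [← mul_div_assoc, mul_div_mul_left _ _ h0.ne']
      _ = ∑ g, z g := by
          simp_rw [Fintype.sum_prod_type]
          have : ∀ e, ∑ f, ∑ g, a (e, g) * b (f, g) / z g
              = ∑ g, a (e, g) * z g / z g := by
            intro e
            rw [Finset.sum_comm]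
            refine Finset.sum_congr rfl fun g _ => ?_
            rw [← Finset.sum_div, ← Finset.mul_sum, fibMass_marg p ψ χ g]
          simp_rw [this]
          rw [Finset.sum_comm]
          refine Finset.sum_congr rfl fun g _ => ?_
          rw [← Finset.sum_div, ← Finset.sum_mul, fibMass_marg p φ χ g]
          exact mul_self_div_self _
  unfold ptEnt
  linarith

lemma ptEnt_indep {W E F : Type*} [Fintype W] {p : W → ℝ} (hp : ∀ w, 0 ≤ p w)
    (φ : W → E) (ψ : W → F)
    (hfac : ∀ e f, fibMass p (fun w => (φ w, ψ w)) (e, f) = fibMass p φ e * fibMass p ψ f) :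
    ptEnt p (fun w => (φ w, ψ w)) = ptEnt p φ + ptEnt p ψ := by
  unfold ptEnt
  rw [← neg_add, ← Finset.sum_add_distrib]
  congr 1
  refine Finset.sum_congr rfl fun w _ => ?_
  rcases (hp w).eq_or_lt with h0 | h0
  · simp [← h0]
  rw [hfac, Real.log_mul (h0.trans_le (le_fibMass hp φ w)).ne'
    (h0.trans_le (le_fibMass hp ψ w)).ne', mul_add]

lemma fibMass_fst {U V E : Type*} [Fintype U] [Fintype V] (q : U → ℝ) (r : V → ℝ)
    (hr : ∑ v, r v = 1) (φ : U → E) (e : E) :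
    fibMass (fun w : U × V => q w.1 * r w.2) (fun w => φ w.1) e = fibMass q φ e := by
  classical
  unfold fibMass
  rw [Fintype.sum_prod_type]
  refine Finset.sum_congr rfl fun u _ => ?_
  dsimp only
  split_ifs
  · rw [← Finset.mul_sum, hr, mul_one]
  · simp

lemma fibMass_snd {U V E : Type*} [Fintype U] [Fintype V] (q : U → ℝ) (r : V → ℝ)
    (hq : ∑ v, q v = 1) (φ : V → E) (e : E) :
    fibMass (fun w : U × V => q w.1 * r w.2) (fun w => φ w.2) e = fibMass r φ e := by
  classical
  unfold fibMass
  rw [Fintype.sum_prod_type_right]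
  refine Finset.sum_congr rfl fun u _ => ?_
  dsimp only
  split_ifs
  · rw [← Finset.sum_mul, hq, one_mul]
  · simp

lemma fibMass_prod {U V E F : Type*} [Fintype U] [Fintype V] (q : U → ℝ) (r : V → ℝ)
    (φ : U → E) (ψ : V → F) (e : E) (f : F) :
    fibMass (fun w : U × V => q w.1 * r w.2) (fun w => (φ w.1, ψ w.2)) (e, f)
      = fibMass q φ e * fibMass r ψ f := by
  classical
  unfold fibMass
  rw [Fintype.sum_prod_type, Finset.sum_mul_sum]
  refine Finset.sum_congr rfl fun u _ => Finset.sum_congr rfl fun v _ => ?_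
  by_cases h1 : φ u = e <;> by_cases h2 : ψ v = f <;> simp [h1, h2]

lemma ptEnt_indep_fst {U V T : Type*} [Fintype U] [Fintype V] {q : U → ℝ} {r : V → ℝ}
    (hp : ∀ w : U × V, 0 ≤ q w.1 * r w.2) (hq : ∑ u, q u = 1) (hr : ∑ v, r v = 1) (ψ : V → T) :
    ptEnt (fun w : U × V => q w.1 * r w.2) (fun w => (w.1, ψ w.2))
      = ptEnt (fun w : U × V => q w.1 * r w.2) (fun w => w.1)
        + ptEnt (fun w : U × V => q w.1 * r w.2) (fun w => ψ w.2) := by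
  refine ptEnt_indep hp (fun w => w.1) (fun w => ψ w.2) fun e t => ?_
  have k1 := fibMass_prod q r (fun u => u) ψ e t
  have k2 := fibMass_fst q r hr (fun u => u) e
  have k3 := fibMass_snd q r hq ψ t
  exact k1.trans (by rw [← k2, ← k3])

lemma entH_eq_ptEnt {Ω W E : Type*} [MeasurableSpace Ω] [Fintype W] [Fintype E]
    (μ : Measure Ω) [IsProbabilityMeasure μ] (V : Ω → W)
    (hV : ∀ w, MeasurableSet (V ⁻¹' {w})) (φ : W → E) (X : Ω → E) (hX : ∀ ω, X ω = φ (V ω)) :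
    entH μ X = ptEnt (fun w => (μ (V ⁻¹' {w})).toReal) φ := by
  classical
  rw [ptEnt_eq]
  unfold entH
  refine Finset.sum_congr rfl fun e _ => ?_
  congr 1
  have h1 : X ⁻¹' {e} = V ⁻¹' ((Finset.univ.filter fun w => φ w = e : Finset W) : Set W) := by
    ext ω
    simp [hX]
  rw [h1, ← sum_measure_preimage_singleton _ (fun w _ => hV w),
    ENNReal.toReal_sum (fun w _ => measure_ne_top _ _)]
  unfold fibMass
  rw [Finset.sum_filter]

lemma sum_mass_one {Ω W : Type*} [MeasurableSpace Ω] [Fintype W]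
    (μ : Measure Ω) [IsProbabilityMeasure μ] (V : Ω → W)
    (hV : ∀ w, MeasurableSet (V ⁻¹' {w})) : ∑ w, (μ (V ⁻¹' {w})).toReal = 1 := by
  rw [← ENNReal.toReal_sum (fun w _ => measure_ne_top _ _),
    sum_measure_preimage_singleton _ (fun w _ => hV w)]
  simp

/-- **First marginal entropy inequality for the classical triangle scenario**:
`-H(X) - H(Y) - H(Z) + H(X,Y) + H(X,Z) ≥ 0`. -/
theorem triangle_marginal_inequality_one
    {Ω EA EB EC EX EY EZ : Type*} [MeasurableSpace Ω]
    [Fintype EA] [Fintype EB] [Fintype EC] [Fintype EX] [Fintype EY] [Fintype EZ]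
    [MeasurableSpace EA] [MeasurableSingletonClass EA]
    [MeasurableSpace EB] [MeasurableSingletonClass EB]
    [MeasurableSpace EC] [MeasurableSingletonClass EC]
    (μ : Measure Ω) [IsProbabilityMeasure μ]
    (A : Ω → EA) (B : Ω → EB) (C : Ω → EC)
    (hA : Measurable A) (hB : Measurable B) (hC : Measurable C)
    (hindep : ∀ (a : EA) (b : EB) (c : EC),
      μ (A ⁻¹' {a} ∩ B ⁻¹' {b} ∩ C ⁻¹' {c})
        = μ (A ⁻¹' {a}) * μ (B ⁻¹' {b}) * μ (C ⁻¹' {c}))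
    (f : EB → EC → EX) (g : EA → EC → EY) (h : EA → EB → EZ)
    (X : Ω → EX) (Y : Ω → EY) (Z : Ω → EZ)
    (hX : ∀ ω, X ω = f (B ω) (C ω)) (hY : ∀ ω, Y ω = g (A ω) (C ω))
    (hZ : ∀ ω, Z ω = h (A ω) (B ω)) :
    0 ≤ -entH μ X - entH μ Y - entH μ Z
      + entH μ (fun ω => (X ω, Y ω)) + entH μ (fun ω => (X ω, Z ω)) := by
  let V : Ω → EA × EB × EC := fun ω => (A ω, B ω, C ω)
  have mA : ∀ a, MeasurableSet (A ⁻¹' {a}) := fun a => hA (measurableSet_singleton a)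
  have mB : ∀ a, MeasurableSet (B ⁻¹' {a}) := fun a => hB (measurableSet_singleton a)
  have mC : ∀ a, MeasurableSet (C ⁻¹' {a}) := fun a => hC (measurableSet_singleton a)
  have hVe : ∀ w, V ⁻¹' {w} = A ⁻¹' {w.1} ∩ B ⁻¹' {w.2.1} ∩ C ⁻¹' {w.2.2} := by
    rintro ⟨a, b, c⟩
    ext ω
    simp [V, and_assoc]
  have mV : ∀ w, MeasurableSet (V ⁻¹' {w}) := fun w => by
    rw [hVe]
    exact ((mA _).inter (mB _)).inter (mC _)
  let pA : EA → ℝ := fun a => (μ (A ⁻¹' {a})).toReal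
  let pB : EB → ℝ := fun a => (μ (B ⁻¹' {a})).toReal
  let pC : EC → ℝ := fun a => (μ (C ⁻¹' {a})).toReal
  have sA : ∑ a, pA a = 1 := sum_mass_one μ A mA
  have sB : ∑ a, pB a = 1 := sum_mass_one μ B mB
  have sC : ∑ a, pC a = 1 := sum_mass_one μ C mC
  let r : EB × EC → ℝ := fun v => pB v.1 * pC v.2
  have sr : ∑ v, r v = 1 := by
    simp only [r, Fintype.sum_prod_type]
    rw [← Finset.sum_mul_sum, sB, sC, one_mul]
  let p : EA × EB × EC → ℝ := fun w => pA w.1 * r w.2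
  have hpe : (fun w => (μ (V ⁻¹' {w})).toReal) = p := by
    funext w
    rw [hVe, hindep, ENNReal.toReal_mul, ENNReal.toReal_mul, mul_assoc]
  have hp : ∀ w, 0 ≤ p w := fun w =>
    mul_nonneg ENNReal.toReal_nonneg (mul_nonneg ENNReal.toReal_nonneg ENNReal.toReal_nonneg)
  let a : EA × EB × EC → EA := fun w => w.1
  let b : EA × EB × EC → EB := fun w => w.2.1
  let c : EA × EB × EC → EC := fun w => w.2.2
  let x : EA × EB × EC → EX := fun w => f w.2.1 w.2.2
  let y : EA × EB × EC → EY := fun w => g w.1 w.2.2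
  let z : EA × EB × EC → EZ := fun w => h w.1 w.2.1
  have eX : entH μ X = ptEnt p x := hpe ▸ entH_eq_ptEnt μ V mV x X hX
  have eY : entH μ Y = ptEnt p y := hpe ▸ entH_eq_ptEnt μ V mV y Y hY
  have eZ : entH μ Z = ptEnt p z := hpe ▸ entH_eq_ptEnt μ V mV z Z hZ
  have eXY : entH μ (fun ω => (X ω, Y ω)) = ptEnt p (fun w => (x w, y w)) :=
    hpe ▸ entH_eq_ptEnt μ V mV (fun w => (x w, y w)) _ (fun ω => by simp [hX, hY, x, y, V])
  have eXZ : entH μ (fun ω => (X ω, Z ω)) = ptEnt p (fun w => (x w, z w)) :=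
    hpe ▸ entH_eq_ptEnt μ V mV (fun w => (x w, z w)) _ (fun ω => by simp [hX, hZ, x, z, V])
  -- `A` is independent of any function of `(B, C)`
  have i1 := ptEnt_indep_fst hp sA sr (fun v => v.2)
  have i2 := ptEnt_indep_fst hp sA sr (fun v => v.1)
  have i3 : ptEnt p (fun w => (a w, (f w.2.1 w.2.2, w.2.2))) = ptEnt p a + ptEnt p (fun w => (f w.2.1 w.2.2, w.2.2)) :=
    ptEnt_indep_fst hp sA sr (fun v => (f v.1 v.2, v.2))
  have i4 : ptEnt p (fun w => (a w, (f w.2.1 w.2.2, w.2.1))) = ptEnt p a + ptEnt p (fun w => (f w.2.1 w.2.2, w.2.1)) :=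
    ptEnt_indep_fst hp sA sr (fun v => (f v.1 v.2, v.1))
  have i5 : ptEnt p (fun w => (b w, c w)) = ptEnt p b + ptEnt p c := by
    refine ptEnt_indep hp b c fun e t => ?_
    have k1 := fibMass_snd pA r sA (fun v => (v.1, v.2)) (e, t)
    have k2 := fibMass_snd pA r sA (fun v => v.1) e
    have k3 := fibMass_snd pA r sA (fun v => v.2) t
    have k4 := fibMass_prod pB pC (fun u => u) (fun u => u) e t
    have k5 := fibMass_fst pB pC sC (fun u => u) e
    have k6 := fibMass_snd pB pC sB (fun u => u) t
    exact k1.trans (k4.trans (by rw [← k5, ← k6]; exact congrArg₂ _ k2.symm k3.symm))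
  have s1 := ptEnt_submod hp x (fun w => (a w, c w)) y
  have s2 := ptEnt_submod hp x (fun w => (a w, b w)) z
  have s3 := ptEnt_submod hp b c x
  have c1 : ptEnt p (fun w => (x w, (a w, c w), y w))
      = ptEnt p (fun w => (a w, (f w.2.1 w.2.2, w.2.2))) := by
    apply ptEnt_congr
    rintro ⟨a1, b1, c1⟩ ⟨a2, b2, c2⟩
    simp only [a, c, x, y, Prod.mk.injEq]
    constructor
    · tauto
    · rintro ⟨rfl, h2, rfl⟩
      simp [h2]
  have c2 : ptEnt p (fun w => (x w, (a w, b w), z w))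
      = ptEnt p (fun w => (a w, (f w.2.1 w.2.2, w.2.1))) := by
    apply ptEnt_congr
    rintro ⟨a1, b1, c1⟩ ⟨a2, b2, c2⟩
    simp only [a, b, x, z, Prod.mk.injEq]
    constructor
    · tauto
    · rintro ⟨rfl, h2, rfl⟩
      simp [h2]
  have c3 : ptEnt p (fun w => ((a w, c w), y w)) = ptEnt p (fun w => (a w, w.2.2)) := by
    apply ptEnt_congr
    rintro ⟨a1, b1, c1⟩ ⟨a2, b2, c2⟩
    simp only [a, c, y, Prod.mk.injEq]
    constructor
    · tauto
    · rintro ⟨rfl, rfl⟩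
      simp
  have c4 : ptEnt p (fun w => ((a w, b w), z w)) = ptEnt p (fun w => (a w, w.2.1)) := by
    apply ptEnt_congr
    rintro ⟨a1, b1, c1⟩ ⟨a2, b2, c2⟩
    simp only [a, b, z, Prod.mk.injEq]
    constructor
    · tauto
    · rintro ⟨rfl, rfl⟩
      simp
  have c5 : ptEnt p (fun w => (b w, c w, x w)) = ptEnt p (fun w => (b w, c w)) := by
    apply ptEnt_congr
    rintro ⟨a1, b1, c1⟩ ⟨a2, b2, c2⟩
    simp only [b, c, x, Prod.mk.injEq]
    constructor
    · tauto
    · rintro ⟨rfl, rfl⟩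
      simp
  have c6 : ptEnt p (fun w => (b w, x w)) = ptEnt p (fun w => (f w.2.1 w.2.2, w.2.1)) := by
    apply ptEnt_congr
    intro w w'
    simp only [b, x, Prod.mk.injEq]
    tauto
  have c7 : ptEnt p (fun w => (c w, x w)) = ptEnt p (fun w => (f w.2.1 w.2.2, w.2.2)) := by
    apply ptEnt_congr
    intro w w'
    simp only [c, x, Prod.mk.injEq]
    tauto
  rw [eX, eY, eZ, eXY, eXZ]
  rw [c1, c3] at s1
  rw [c2, c4] at s2
  rw [c5, c6, c7] at s3
  have i1' : ptEnt p (fun w => (a w, w.2.2)) = ptEnt p a + ptEnt p c := i1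
  have i2' : ptEnt p (fun w => (a w, w.2.1)) = ptEnt p a + ptEnt p b := i2
  linarith
end
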